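/- arXiv:1708.08599 — 5 statements merged into one kernel-verified Lean document; each statement's English description precedes it below -/
import Mathlib

section
/- Let f : ℝ_{>0} → ℝ_{>2} be a function increasing monotonically to ∞ satisfying f(x) = O((log x)^{−7/3} x^{1/3}), and let ϑ : ℝ_{>0} → ℝ_{>1} be monotonically increasing to ∞ with ϑ(x) = O(x^{1/4}) and ϑ(2^{j+1})/ϑ(2^j) → 1 as j → ∞. For each j ∈ ℕ set B_j := 2^j / ( f(2^j) · √(ϑ(2^j)) ) and b_j := (2/3)·B_j, and let M := ∪_{j≥1} { n ∈ ℕ : b_j ≤ n ≤ B_j }. Then for all sufficiently large X, the number of distinct rationals in (0,1) whose denominator (in lowest terms) lies in M and whose height is at most X is strictly greater than (X/(5π))². -/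
open Filter MeasureTheory

/-- `B_j := 2^j / (f(2^j) √(ϑ(2^j)))`. -/
noncomputable def Bbig (f ϑ : ℝ → ℝ) (j : ℕ) : ℝ :=
  (2 : ℝ) ^ j / (f ((2 : ℝ) ^ j) * Real.sqrt (ϑ ((2 : ℝ) ^ j)))

/-- `b_j := (2/3) B_j`. -/
noncomputable def bsmall (f ϑ : ℝ → ℝ) (j : ℕ) : ℝ := (2 / 3) * Bbig f ϑ j

/-- `M := ∪_{j ≥ 1} {n ∈ ℕ : b_j ≤ n ≤ B_j}`. -/
def Mset (f ϑ : ℝ → ℝ) : Set ℕ :=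
  {n : ℕ | ∃ j : ℕ, 1 ≤ j ∧ bsmall f ϑ j ≤ (n : ℝ) ∧ (n : ℝ) ≤ Bbig f ϑ j}

/-- Naive height of a rational number (in lowest terms). -/
def height (q : ℚ) : ℕ := max q.num.natAbs q.den

/-!
A reduced fraction in `(0, 1)` has height equal to its denominator, so the rationals in question
are counted by `∑ φ(n)` over `n ∈ M` with `1 < n ≤ X`. Since `B_j → ∞` and `B_{j+1} ≤ 2 B_j`,
every large `X` lies in some `[B_j, 2 B_j)`, and the single block `(2 B_j / 3, B_j] ∩ ℕ ⊆ M`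
already contributes `(3 / π²) (1 - 4 / 9) B_j² (1 + o(1)) ≥ (5 / 12) (X / π)² (1 + o(1))`, which
beats `(X / (5π))²`. The asymptotics `∑_{n ≤ x} φ(n) ~ (3 / π²) x²` come from `φ = μ * id` and
`∑ μ(d) / d² = 1 / ζ(2)`.
-/

open Asymptotics
open scoped Topology ArithmeticFunction.Moebius

section TotientSummatory

lemma tsum_moebius_div_sq : ∑' n : ℕ, (μ n : ℝ) / (n : ℝ) ^ 2 = 6 / Real.pi ^ 2 := by
  have hinv : riemannZeta 2 * LSeries (fun n ↦ (μ n : ℂ)) 2 = 1 := by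
    rw [← LSeries_one_eq_riemannZeta (by simp)]
    exact LSeries_one_mul_Lseries_moebius (by simp)
  have hterm (n : ℕ) :
      LSeries.term (fun n ↦ (μ n : ℂ)) 2 n = ((μ n / (n : ℝ) ^ 2 : ℝ) : ℂ) := by
    rw [LSeries.term_of_ne_zero' two_ne_zero]
    norm_cast
  rw [LSeries, tsum_congr hterm, ← Complex.ofReal_tsum, riemannZeta_two] at hinv
  have hreal : Real.pi ^ 2 / 6 * ∑' n : ℕ, (μ n : ℝ) / (n : ℝ) ^ 2 = 1 := by
    rw [← Complex.ofReal_inj]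
    simpa using hinv
  rw [eq_div_iff (by positivity)]
  linarith

lemma totient_eq_moebius_mul_id (n : ℕ) :
    (n.totient : ℝ) =
      ((μ : ArithmeticFunction ℝ) * (ArithmeticFunction.id : ArithmeticFunction ℝ)) n := by
  rcases n.eq_zero_or_pos with rfl | hn
  · simp
  · have hsum : ∀ m : ℕ, 0 < m → ∑ d ∈ m.divisors, (d.totient : ℝ) = m := fun m _ ↦ by
      exact_mod_cast m.sum_totient
    rw [ArithmeticFunction.mul_apply]
    exact (ArithmeticFunction.sum_eq_iff_sum_mul_moebius_eq.mp hsum n hn).symm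

lemma sum_Ioc_natCast (N : ℕ) : ∑ m ∈ Finset.Ioc 0 N, (m : ℝ) = N * (N + 1) / 2 := by
  induction N with
  | zero => simp
  | succ N ih =>
    rw [Finset.sum_Ioc_succ_top N.zero_le, ih]
    push_cast
    ring

lemma sum_totient_floor_eq_tsum (x : ℝ) :
    ∑ n ∈ Finset.Ioc 0 ⌊x⌋₊, (n.totient : ℝ) =
      ∑' d : ℕ, (μ d : ℝ) * (⌊x / d⌋₊ * (⌊x / d⌋₊ + 1) / 2) := by
  rw [tsum_eq_sum (s := Finset.Ioc 0 ⌊x⌋₊)]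
  · simp only [totient_eq_moebius_mul_id, ArithmeticFunction.sum_Ioc_mul_eq_sum_sum,
      ArithmeticFunction.intCoe_apply, ArithmeticFunction.natCoe_apply,
      ArithmeticFunction.id_apply, sum_Ioc_natCast, Nat.floor_div_natCast]
  · intro d hd
    rcases d.eq_zero_or_pos with rfl | hd₀
    · simp
    · have hlt : ⌊x⌋₊ < d := by simpa [hd₀] using hd
      simp [Nat.floor_div_natCast, Nat.div_eq_of_lt hlt]

lemma tendsto_floor_mul_floor_add_one_div_sq {d : ℝ} (hd : 0 ≤ d) :
    Tendsto (fun x : ℝ ↦ (⌊x / d⌋₊ * (⌊x / d⌋₊ + 1) / 2 : ℝ) / x ^ 2) atTop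
      (𝓝 (1 / d ^ 2 / 2)) := by
  have hfloor : Tendsto (fun x : ℝ ↦ (⌊x / d⌋₊ : ℝ) / x) atTop (𝓝 d⁻¹) := by
    simpa only [inv_mul_eq_div] using tendsto_nat_floor_mul_div_atTop (inv_nonneg.mpr hd)
  have hlim := (hfloor.mul (hfloor.add tendsto_inv_atTop_zero)).div_const 2
  refine (hlim.congr' ?_).trans_eq (congrArg 𝓝 (by ring))
  filter_upwards [eventually_ne_atTop 0] with x hx
  field_simp

lemma floor_mul_floor_add_one_div_two_le_sq {y : ℝ} (hy : 0 ≤ y) :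
    (⌊y⌋₊ * (⌊y⌋₊ + 1) / 2 : ℝ) ≤ y ^ 2 := by
  have hself : (⌊y⌋₊ : ℝ) ≤ (⌊y⌋₊ : ℝ) ^ 2 := by
    exact_mod_cast Nat.le_self_pow two_ne_zero ⌊y⌋₊
  calc (⌊y⌋₊ * (⌊y⌋₊ + 1) / 2 : ℝ) ≤ (⌊y⌋₊ : ℝ) ^ 2 := by linarith
    _ ≤ y ^ 2 := by gcongr; exact Nat.floor_le hy

theorem tendsto_sum_totient_div_sq :
    Tendsto (fun x : ℝ ↦ (∑ n ∈ Finset.Ioc 0 ⌊x⌋₊, (n.totient : ℝ)) / x ^ 2) atTop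
      (𝓝 (3 / Real.pi ^ 2)) := by
  have hlim : Tendsto
      (fun x : ℝ ↦ ∑' d : ℕ, (μ d : ℝ) * ((⌊x / d⌋₊ * (⌊x / d⌋₊ + 1) / 2) / x ^ 2))
      atTop (𝓝 (∑' d : ℕ, (μ d : ℝ) * (1 / (d : ℝ) ^ 2 / 2))) := by
    refine tendsto_tsum_of_dominated_convergence (Real.summable_one_div_nat_pow.mpr one_lt_two)
      (fun d ↦ (tendsto_floor_mul_floor_add_one_div_sq d.cast_nonneg).const_mul _) ?_
    filter_upwards [eventually_gt_atTop 0] with x hx d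
    have hμ : |(μ d : ℝ)| ≤ 1 := by exact_mod_cast ArithmeticFunction.abs_moebius_le_one
    rw [norm_mul, Real.norm_eq_abs, Real.norm_of_nonneg (by positivity)]
    calc |(μ d : ℝ)| * ((⌊x / d⌋₊ * (⌊x / d⌋₊ + 1) / 2) / x ^ 2)
        ≤ 1 * ((x / d) ^ 2 / x ^ 2) := by
          gcongr
          exact floor_mul_floor_add_one_div_two_le_sq (by positivity)
      _ = 1 / (d : ℝ) ^ 2 := by field_simp
  have hval : ∑' d : ℕ, (μ d : ℝ) * (1 / (d : ℝ) ^ 2 / 2) = 3 / Real.pi ^ 2 := by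
    simp only [← mul_div_assoc, mul_one, tsum_div_const, tsum_moebius_div_sq]
    ring
  rw [← hval]
  simpa only [sum_totient_floor_eq_tsum, ← tsum_div_const, ← mul_div_assoc] using hlim

theorem tendsto_sum_totient_Ioc_div_sq {a : ℝ} (ha₀ : 0 < a) (ha₁ : a ≤ 1) :
    Tendsto (fun x : ℝ ↦ (∑ n ∈ Finset.Ioc ⌊a * x⌋₊ ⌊x⌋₊, (n.totient : ℝ)) / x ^ 2) atTop
      (𝓝 (3 / Real.pi ^ 2 * (1 - a ^ 2))) := by
  have hscaled := (tendsto_sum_totient_div_sq.comp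
    (tendsto_id.const_mul_atTop ha₀)).mul_const (a ^ 2)
  rw [mul_one_sub]
  refine (tendsto_sum_totient_div_sq.sub hscaled).congr' ?_
  filter_upwards [eventually_gt_atTop 0] with x hx
  have hfloor : ⌊a * x⌋₊ ≤ ⌊x⌋₊ := Nat.floor_le_floor (mul_le_of_le_one_left hx.le ha₁)
  rw [← Finset.sum_Ioc_consecutive _ (Nat.zero_le _) hfloor]
  simp only [Function.comp_apply, id]
  field_simp
  ring

end TotientSummatory

section RationalCount

lemma setOf_den_eq_image {n : ℕ} (hn : n ≠ 1) :
    {q : ℚ | 0 < q ∧ q < 1 ∧ q.den = n} =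
      (fun a : ℕ ↦ (a / n : ℚ)) '' ((Finset.range n).filter n.Coprime : Finset ℕ) := by
  ext q
  simp only [Finset.coe_filter, Finset.mem_range, Set.mem_image, Set.mem_ofPred_eq]
  constructor
  · rintro ⟨hq₀, hq₁, rfl⟩
    lift q.num to ℕ using (Rat.num_pos.mpr hq₀).le with a ha
    have hlt := Rat.num_lt_denom_iff.mpr hq₁
    have hco := q.reduced.symm
    rw [← ha] at hlt hco
    refine ⟨a, ⟨mod_cast hlt, hco⟩, ?_⟩
    conv_rhs => rw [← q.num_div_den, ← ha, Int.cast_natCast]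
  · rintro ⟨a, ⟨hlt, hco⟩, rfl⟩
    have ha : 0 < a := Nat.pos_of_ne_zero fun h ↦ hn (by simpa [h] using hco)
    have hn₀ : (0 : ℚ) < n := by exact_mod_cast ha.trans hlt
    have hden : (((a : ℤ) / (n : ℤ) : ℚ).den : ℤ) = n :=
      Rat.den_div_eq_of_coprime (mod_cast ha.trans hlt) hco.symm
    refine ⟨by positivity, (div_lt_one hn₀).mpr (mod_cast hlt), ?_⟩
    simpa only [Int.cast_natCast, Nat.cast_inj] using hden

lemma finite_setOf_den_eq {n : ℕ} (hn : n ≠ 1) :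
    {q : ℚ | 0 < q ∧ q < 1 ∧ q.den = n}.Finite :=
  setOf_den_eq_image hn ▸ (Finset.finite_toSet _).image _

lemma ncard_setOf_den_eq_totient {n : ℕ} (hn : n ≠ 1) :
    {q : ℚ | 0 < q ∧ q < 1 ∧ q.den = n}.ncard = n.totient := by
  rcases n.eq_zero_or_pos with rfl | hn₀
  · simp
  have hinj : Function.Injective fun a : ℕ ↦ (a / n : ℚ) := fun a b h ↦
    Nat.cast_injective ((div_left_inj' (by positivity)).mp h)
  rw [setOf_den_eq_image hn, Set.ncard_image_of_injective _ hinj, Set.ncard_coe_finset,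
    Nat.totient_eq_card_coprime]

lemma height_eq_den {q : ℚ} (hq₀ : 0 ≤ q) (hq₁ : q ≤ 1) : height q = q.den := by
  have hnum := Rat.num_nonneg.mpr hq₀
  have hle := Rat.num_le_denom_iff.mpr hq₁
  exact max_eq_right (by omega)

lemma den_mem_and_height_le_iff {M : Set ℕ} {X : ℝ} {q : ℚ} (hq₀ : 0 < q) (hq₁ : q < 1) :
    q.den ∈ M ∧ (height q : ℝ) ≤ X ↔ q.den ∈ Set.Ioc 1 ⌊X⌋₊ ∩ M := by
  have hnum := Rat.num_pos.mpr hq₀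
  have hlt := Rat.num_lt_denom_iff.mpr hq₁
  have hden : 1 < q.den := by omega
  rw [height_eq_den hq₀.le hq₁.le, ← Nat.le_floor_iff' q.den_ne_zero]
  simp only [Set.mem_inter_iff, Set.mem_Ioc, hden, true_and, and_comm]

theorem ncard_den_mem_height_le (M : Set ℕ) (X : ℝ) :
    {q : ℚ | 0 < q ∧ q < 1 ∧ q.den ∈ M ∧ (height q : ℝ) ≤ X}.ncard =
      ∑ᶠ n ∈ Set.Ioc 1 ⌊X⌋₊ ∩ M, n.totient := by
  have hfibres : {q : ℚ | 0 < q ∧ q < 1 ∧ q.den ∈ M ∧ (height q : ℝ) ≤ X} =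
      ⋃ n ∈ Set.Ioc 1 ⌊X⌋₊ ∩ M, {q : ℚ | 0 < q ∧ q < 1 ∧ q.den = n} := by
    ext q
    simp only [Set.mem_ofPred_eq, Set.mem_iUnion, exists_prop]
    constructor
    · rintro ⟨hq₀, hq₁, hq⟩
      exact ⟨q.den, (den_mem_and_height_le_iff hq₀ hq₁).mp hq, hq₀, hq₁, rfl⟩
    · rintro ⟨_, hq, hq₀, hq₁, rfl⟩
      exact ⟨hq₀, hq₁, (den_mem_and_height_le_iff hq₀ hq₁).mpr hq⟩
  have hne : ∀ n ∈ Set.Ioc 1 ⌊X⌋₊ ∩ M, n ≠ 1 := fun n hn ↦ hn.1.1.ne'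
  have hdisj : (Set.Ioc 1 ⌊X⌋₊ ∩ M).PairwiseDisjoint
      fun n ↦ {q : ℚ | 0 < q ∧ q < 1 ∧ q.den = n} := fun m _ n _ hmn ↦
    Set.disjoint_left.mpr fun q hm hn ↦ hmn (hm.2.2.symm.trans hn.2.2)
  rw [hfibres, ((Set.finite_Ioc _ _).inter_of_left M).ncard_biUnion
    (fun n hn ↦ finite_setOf_den_eq (hne n hn)) hdisj]
  exact finsum_mem_congr rfl fun n hn ↦ ncard_setOf_den_eq_totient (hne n hn)

lemma sum_totient_le_ncard {M : Set ℕ} {X : ℝ} {S : Finset ℕ} (hS : ↑S ⊆ Set.Ioc 1 ⌊X⌋₊ ∩ M) :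
    ∑ n ∈ S, n.totient ≤
      {q : ℚ | 0 < q ∧ q < 1 ∧ q.den ∈ M ∧ (height q : ℝ) ≤ X}.ncard := by
  have hfin : (Set.Ioc 1 ⌊X⌋₊ ∩ M).Finite := (Set.finite_Ioc _ _).inter_of_left M
  rw [ncard_den_mem_height_le, finsum_mem_eq_finite_toFinset_sum _ hfin]
  exact Finset.sum_le_sum_of_subset (by simpa [← Finset.coe_subset] using hS)

end RationalCount

section BlockSets

lemma exists_le_lt_succ_of_tendsto_atTop {α : Type*} [LinearOrder α] [NoMaxOrder α] {u : ℕ → α}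
    (hu : Tendsto u atTop atTop) {k : ℕ} {x : α} (hx : u k ≤ x) :
    ∃ j ≥ k, u j ≤ x ∧ x < u (j + 1) := by
  by_contra! h
  have hle : ∀ j ≥ k, u j ≤ x := Nat.le_induction hx h
  obtain ⟨j, hlt, hj⟩ := ((hu.eventually_gt_atTop x).and (eventually_ge_atTop k)).exists
  exact (hle j hj).not_gt hlt

theorem eventually_mul_sq_lt_ncard_of_Icc_subset {M : Set ℕ} {B : ℕ → ℝ} {a K c : ℝ}
    (ha₀ : 0 < a) (ha₁ : a ≤ 1) (hB : Tendsto B atTop atTop)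
    (hK : ∀ᶠ j in atTop, B (j + 1) ≤ K * B j)
    (hM : ∀ᶠ j in atTop, ∀ n : ℕ, a * B j ≤ n → n ≤ B j → n ∈ M)
    (hc₀ : 0 ≤ c) (hc : c * K ^ 2 < 3 / Real.pi ^ 2 * (1 - a ^ 2)) :
    ∀ᶠ X : ℝ in atTop,
      c * X ^ 2 < ({q : ℚ | 0 < q ∧ q < 1 ∧ q.den ∈ M ∧ (height q : ℝ) ≤ X}.ncard : ℝ) := by
  have htotient := hB.eventually ((tendsto_sum_totient_Ioc_div_sq ha₀ ha₁).eventually_const_lt hc)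
  obtain ⟨k, hk⟩ := eventually_atTop.mp (hK.and (hM.and (htotient.and
    ((hB.eventually_ge_atTop a⁻¹).and (hB.eventually_gt_atTop 0)))))
  filter_upwards [eventually_ge_atTop (B k), eventually_ge_atTop 0] with X hkX hX₀
  obtain ⟨j, hj, hjX, hXj⟩ := exists_le_lt_succ_of_tendsto_atTop hB hkX
  obtain ⟨hstep, hblock, hsum, hlarge, hpos⟩ := hk j hj
  have hone : 1 ≤ ⌊a * B j⌋₊ :=
    (Nat.one_le_floor_iff _).mpr ((inv_le_iff_one_le_mul₀' ha₀).mp hlarge)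
  have hS : ↑(Finset.Ioc ⌊a * B j⌋₊ ⌊B j⌋₊) ⊆ Set.Ioc 1 ⌊X⌋₊ ∩ M := fun n hn ↦ by
    obtain ⟨hlo, hhi⟩ := Finset.mem_Ioc.mp hn
    exact ⟨⟨hone.trans_lt hlo, hhi.trans (Nat.floor_le_floor hjX)⟩,
      hblock n (Nat.lt_of_floor_lt hlo).le ((Nat.le_floor_iff hpos.le).mp hhi)⟩
  calc c * X ^ 2 ≤ c * (K * B j) ^ 2 := by gcongr; exact hXj.le.trans hstep
    _ = c * K ^ 2 * B j ^ 2 := by ring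
    _ < ∑ n ∈ Finset.Ioc ⌊a * B j⌋₊ ⌊B j⌋₊, (n.totient : ℝ) :=
      (lt_div_iff₀ (by positivity)).mp hsum
    _ ≤ _ := by exact_mod_cast sum_totient_le_ncard hS

end BlockSets

section Bbig

variable {f ϑ : ℝ → ℝ}

lemma isLittleO_mul_sqrt_id {a b : ℝ} (hf : f =O[atTop] (· ^ a)) (hϑ : ϑ =O[atTop] (· ^ b))
    (hab : a + b / 2 < 1) : (fun x ↦ f x * √(ϑ x)) =o[atTop] id := by
  have hϑ_sqrt : (fun x ↦ √(ϑ x)) =O[atTop] fun x ↦ √(x ^ b) :=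
    hϑ.sqrt ((eventually_ge_atTop 0).mono fun x hx ↦ Real.rpow_nonneg hx b)
  refine (hf.mul hϑ_sqrt).trans_isLittleO (isLittleO_of_tendsto' ?_ ?_)
  · filter_upwards [eventually_ne_atTop 0] with x hx h using absurd h hx
  · refine (tendsto_rpow_neg_atTop (sub_pos.mpr hab)).congr' ?_
    filter_upwards [eventually_gt_atTop 0] with x hx
    rw [Real.sqrt_eq_rpow, ← Real.rpow_mul hx.le, ← Real.rpow_add hx, id,
      ← Real.rpow_sub_one hx.ne']
    congr 1
    ring

lemma isBigO_rpow_of_le_mul_rpow_div_log {a b : ℝ} (hb : 0 ≤ b) (hf : ∀ᶠ x in atTop, 0 ≤ f x)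
    (hO : ∃ C : ℝ, 0 < C ∧ ∀ᶠ x : ℝ in atTop, f x ≤ C * x ^ a / Real.log x ^ b) :
    f =O[atTop] (· ^ a) := by
  obtain ⟨C, hC, hle⟩ := hO
  refine .of_bound C ?_
  filter_upwards [hf, hle, eventually_ge_atTop 0,
    Real.tendsto_log_atTop.eventually_ge_atTop 1] with x hfx hlex hx hlog
  rw [Real.norm_of_nonneg hfx, Real.norm_of_nonneg (Real.rpow_nonneg hx a)]
  exact hlex.trans (div_le_self (by positivity) (Real.one_le_rpow hlog hb))

lemma tendsto_Bbig_atTop (hf_pos : ∀ x, 0 < x → 0 < f x) (hϑ_pos : ∀ x, 0 < x → 0 < ϑ x)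
    (hfϑ : (fun x ↦ f x * √(ϑ x)) =o[atTop] id) : Tendsto (Bbig f ϑ) atTop atTop := by
  suffices h : Tendsto (fun x ↦ x / (f x * √(ϑ x))) atTop atTop from
    h.comp (tendsto_pow_atTop_atTop_of_one_lt (r := (2 : ℝ)) one_lt_two)
  have hpos : ∀ᶠ x in atTop, 0 < f x * √(ϑ x) / x := by
    filter_upwards [eventually_gt_atTop 0] with x hx
    exact div_pos (mul_pos (hf_pos x hx) (Real.sqrt_pos.mpr (hϑ_pos x hx))) hx
  refine (tendsto_nhdsWithin_iff.mpr
    ⟨hfϑ.tendsto_div_nhds_zero, hpos⟩).inv_tendsto_nhdsGT_zero.congr fun x ↦ ?_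
  simp only [Pi.inv_apply, inv_div, id]

lemma Bbig_succ_le (hf_pos : ∀ x, 0 < x → 0 < f x) (hf_mono : MonotoneOn f (Set.Ioi 0))
    (hϑ_pos : ∀ x, 0 < x → 0 < ϑ x) (hϑ_mono : MonotoneOn ϑ (Set.Ioi 0)) (j : ℕ) :
    Bbig f ϑ (j + 1) ≤ 2 * Bbig f ϑ j := by
  have h₀ : (0 : ℝ) < 2 ^ j := by positivity
  have h₁ : (0 : ℝ) < 2 ^ (j + 1) := by positivity
  have hle : (2 : ℝ) ^ j ≤ 2 ^ (j + 1) := pow_le_pow_right₀ one_le_two j.le_succ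
  have hf := hf_mono h₀ h₁ hle
  have hϑ := hϑ_mono h₀ h₁ hle
  have hfj := hf_pos _ h₀
  have hϑj := Real.sqrt_pos.mpr (hϑ_pos _ h₀)
  calc Bbig f ϑ (j + 1) ≤ 2 ^ (j + 1) / (f (2 ^ j) * √(ϑ (2 ^ j))) := by
        unfold Bbig
        gcongr
        exact hfj.le.trans hf
    _ = 2 * Bbig f ϑ j := by
        unfold Bbig
        ring

end Bbig

theorem counting_restricted_rationals_of_bounded_height_general
    (f ϑ : ℝ → ℝ)
    (hf_pos : ∀ x, 0 < x → 0 < f x) (hf_mono : MonotoneOn f (Set.Ioi 0))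
    (hϑ_pos : ∀ x, 0 < x → 0 < ϑ x) (hϑ_mono : MonotoneOn ϑ (Set.Ioi 0))
    (hfϑ : (fun x ↦ f x * √(ϑ x)) =o[atTop] id) {c : ℝ} (hc : 12 / 5 < c ^ 2) :
    ∀ᶠ X : ℝ in atTop, (X / (c * Real.pi)) ^ 2 <
      ({q : ℚ | 0 < q ∧ q < 1 ∧ q.den ∈ Mset f ϑ ∧ (height q : ℝ) ≤ X}.ncard : ℝ) := by
  have hblock : ∀ᶠ j in atTop, ∀ n : ℕ,
      2 / 3 * Bbig f ϑ j ≤ n → n ≤ Bbig f ϑ j → n ∈ Mset f ϑ := by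
    filter_upwards [eventually_ge_atTop 1] with j hj n hlo hhi using ⟨j, hj, hlo, hhi⟩
  have hconst : ((c * Real.pi) ^ 2)⁻¹ * 2 ^ 2 < 3 / Real.pi ^ 2 * (1 - (2 / 3) ^ 2) := by
    have hfour : 4 / c ^ 2 < 5 / 3 := by
      rw [div_lt_iff₀ (by linarith)]
      linarith
    calc ((c * Real.pi) ^ 2)⁻¹ * 2 ^ 2 = 4 / c ^ 2 / Real.pi ^ 2 := by ring
      _ < 5 / 3 / Real.pi ^ 2 := div_lt_div_of_pos_right hfour (by positivity)
      _ = 3 / Real.pi ^ 2 * (1 - (2 / 3) ^ 2) := by ring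
  simpa only [div_pow, inv_mul_eq_div] using
    eventually_mul_sq_lt_ncard_of_Icc_subset (by norm_num) (by norm_num)
      (tendsto_Bbig_atTop hf_pos hϑ_pos hfϑ)
      (.of_forall (Bbig_succ_le hf_pos hf_mono hϑ_pos hϑ_mono)) hblock (by positivity) hconst

theorem counting_restricted_rationals_of_bounded_height
    (f : ℝ → ℝ)
    (hf_gt : ∀ x : ℝ, 0 < x → 2 < f x)
    (hf_mono : MonotoneOn f (Set.Ioi (0 : ℝ)))
    (hf_top : Tendsto f atTop atTop)
    (hf_O : ∃ C : ℝ, 0 < C ∧ ∀ᶠ x : ℝ in atTop,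
      f x ≤ C * x ^ ((1 : ℝ) / 3) / (Real.log x) ^ ((7 : ℝ) / 3))
    (ϑ : ℝ → ℝ)
    (hϑ_gt : ∀ x : ℝ, 0 < x → 1 < ϑ x)
    (hϑ_mono : MonotoneOn ϑ (Set.Ioi (0 : ℝ)))
    (hϑ_top : Tendsto ϑ atTop atTop)
    (hϑ_O : ∃ C : ℝ, 0 < C ∧ ∀ᶠ x : ℝ in atTop, ϑ x ≤ C * x ^ ((1 : ℝ) / 4))
    (hϑ_rat : Tendsto (fun j : ℕ => ϑ ((2 : ℝ) ^ (j + 1)) / ϑ ((2 : ℝ) ^ j)) atTop (nhds 1)) :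
    ∀ᶠ X : ℝ in atTop,
      (X / (5 * Real.pi)) ^ 2 <
        (({q : ℚ | 0 < q ∧ q < 1 ∧ q.den ∈ Mset f ϑ ∧ (height q : ℝ) ≤ X}.ncard : ℝ)) := by
  have hf_pos (x : ℝ) (hx : 0 < x) : 0 < f x := two_pos.trans (hf_gt x hx)
  have hϑ_pos (x : ℝ) (hx : 0 < x) : 0 < ϑ x := one_pos.trans (hϑ_gt x hx)
  have hf_isBigO : f =O[atTop] (· ^ (1 / 3 : ℝ)) := isBigO_rpow_of_le_mul_rpow_div_log
    (by norm_num) ((eventually_gt_atTop 0).mono fun x hx ↦ (hf_pos x hx).le) hf_O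
  have hϑ_isBigO : ϑ =O[atTop] (· ^ (1 / 4 : ℝ)) := isBigO_rpow_of_le_mul_rpow_div_log
    le_rfl ((eventually_gt_atTop 0).mono fun x hx ↦ (hϑ_pos x hx).le) (by simpa using hϑ_O)
  exact counting_restricted_rationals_of_bounded_height_general f ϑ hf_pos hf_mono hϑ_pos hϑ_mono
    (isLittleO_mul_sqrt_id hf_isBigO hϑ_isBigO (by norm_num)) (by norm_num)
end

section
/- Let f : ℝ_{>0} → ℝ_{>2} be a function increasing monotonically to ∞ satisfying f(x) = O((log x)^{−7/3} x^{1/3}), and let ϑ : ℝ_{>0} → ℝ_{>1} be monotonically increasing to ∞ with ϑ(x) = O(x^{1/4}) and ϑ(2^{j+1})/ϑ(2^j) → 1 as j → ∞, such that the series Σ_{n≥1} 1/(n f(n) ϑ(n)) diverges. For each j ∈ ℕ set B_j := 2^j / ( f(2^j) · √(ϑ(2^j)) ) and b_j := (2/3)·B_j. Then there exists a constant C > 0 such that the set of α ∈ (0,1) for which there are infinitely many j admitting an integer n with b_j ≤ n ≤ B_j and ‖nα‖ ≤ C · 2^{−j} · (ϑ(2^j))^{−1/2} has full Lebesgue measure.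 -/
open Filter MeasureTheory

/-- Distance from a real number to the nearest integer. -/
noncomputable def dni (x : ℝ) : ℝ := |x - round x|

/-!
Write `B = B_j` and `ψ = C 2 ^ (-j) ϑ(2 ^ j) ^ (-1/2)`. The numbers `α` with `‖n α‖ ≤ ψ` for some
`n ∈ [2B/3, B]` contain the `ψ / B`-neighbourhood of the fractions with a denominator in
`[2B/3, B]`. Distinct such fractions are `B ^ (-2)`-separated, and a ball of radius `σ` contains
`≍ σ B ^ 2` of them once `B` is large: by Dirichlet's theorem at level `B / 2`, every point of the
ball outside a neighbourhood of the fractions with denominator at most `B / 16` is within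
`32 B ^ (-2)` of a fraction whose denominator can be multiplied up into `[2B/3, B]`, and that
neighbourhood covers at most half of the ball by a harmonic sum estimate. So the
`ψ / B`-neighbourhoods occupy a proportion `≍ B ψ` of each ball, and separation makes those for
`j ≤ k` independent up to a constant and an error of size `B_j ψ_k ≤ 2 ^ (-(k - j)) B_j ψ_j`. By
condensation `∑ B_j ψ_j = ∑ C / (f(2 ^ j) ϑ(2 ^ j))` diverges, so a second moment argument shows
that each tail union occupies a fixed proportion of every ball, and the Lebesgue density theorem
upgrades this to full measure.
-/

open Metric Set
open scoped Finset InnerProductSpace Topology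

section SecondMoment

/-- The **Chung–Erdős inequality**. -/
lemma sq_sum_measureReal_le_mul_sum_inter {Ω ι : Type*} [MeasurableSpace Ω] {μ : Measure Ω}
    (T : Finset ι) {A : ι → Set Ω} (hA : ∀ j, MeasurableSet (A j)) (hfin : ∀ j, μ (A j) ≠ ⊤) :
    (∑ j ∈ T, μ.real (A j)) ^ 2 ≤
      μ.real (⋃ j ∈ T, A j) * ∑ j ∈ T, ∑ k ∈ T, μ.real (A j ∩ A k) := by
  have hU : MeasurableSet (⋃ j ∈ T, A j) := T.measurableSet_biUnion fun j _ => hA j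
  have hUfin : μ (⋃ j ∈ T, A j) ≠ ⊤ :=
    (measure_biUnion_lt_top T.finite_toSet fun j _ => (hfin j).lt_top).ne
  let X : ι → Lp ℝ 2 μ := fun j => indicatorConstLp 2 (hA j) (hfin j) 1
  let U : Lp ℝ 2 μ := indicatorConstLp 2 hU hUfin 1
  have hUX : ⟪U, ∑ j ∈ T, X j⟫_ℝ = ∑ j ∈ T, μ.real (A j) := by
    rw [inner_sum]
    refine Finset.sum_congr rfl fun j hj => ?_
    rw [L2.real_inner_indicatorConstLp_one_indicatorConstLp_one hU (hA j) hUfin (hfin j),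
      inter_eq_self_of_subset_right (Finset.subset_set_biUnion_of_mem hj)]
  have hXX : ⟪∑ j ∈ T, X j, ∑ k ∈ T, X k⟫_ℝ = ∑ j ∈ T, ∑ k ∈ T, μ.real (A j ∩ A k) := by
    simp only [sum_inner, inner_sum, X]
    exact Finset.sum_congr rfl fun j _ => Finset.sum_congr rfl fun k _ =>
      L2.real_inner_indicatorConstLp_one_indicatorConstLp_one (hA k) (hA j) (hfin k) (hfin j)
        |>.trans (by rw [inter_comm])
  have hUU : ⟪U, U⟫_ℝ = μ.real (⋃ j ∈ T, A j) := by
    rw [L2.real_inner_indicatorConstLp_one_indicatorConstLp_one hU hU hUfin hUfin, inter_self]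
  rw [← hUX, ← hXX, ← hUU, sq]
  exact real_inner_mul_inner_self_le U _

lemma sum_Ico_sum_Ico_le_two_mul {F : ℕ → ℕ → ℝ} (hF : ∀ j k, 0 ≤ F j k)
    (hsymm : ∀ j k, F j k = F k j) (m n : ℕ) :
    ∑ j ∈ Finset.Ico m n, ∑ k ∈ Finset.Ico m n, F j k ≤
      2 * ∑ j ∈ Finset.Ico m n, ∑ k ∈ Finset.Ico j n, F j k := by
  calc ∑ j ∈ Finset.Ico m n, ∑ k ∈ Finset.Ico m n, F j k
      = ∑ j ∈ Finset.Ico m n, (∑ k ∈ Finset.Ico m j, F k j + ∑ k ∈ Finset.Ico j n, F j k) := by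
        refine Finset.sum_congr rfl fun j hj => ?_
        obtain ⟨hmj, hjn⟩ := Finset.mem_Ico.1 hj
        rw [← Finset.sum_Ico_consecutive _ hmj hjn.le]
        simp only [hsymm j]
    _ ≤ ∑ j ∈ Finset.Ico m n,
          (∑ k ∈ Finset.Ico m (j + 1), F k j + ∑ k ∈ Finset.Ico j n, F j k) := by
        gcongr with j
        · exact fun k _ _ => hF k j
        · exact j.le_succ
    _ = 2 * ∑ j ∈ Finset.Ico m n, ∑ k ∈ Finset.Ico j n, F j k := by
        rw [Finset.sum_add_distrib, ← Finset.sum_Ico_Ico_comm, two_mul]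

lemma sum_Ico_half_pow_sub_le_two (j n : ℕ) :
    ∑ k ∈ Finset.Ico j n, (1 / 2 : ℝ) ^ (k - j) ≤ 2 := by
  simp only [Finset.sum_Ico_eq_sum_range, Nat.add_sub_cancel_left]
  exact sum_geometric_two_le _

lemma exists_one_le_sum_Ico {l : ℕ → ℝ} (hl : ∀ j, 0 ≤ l j) (hdiv : ¬ Summable l) (m : ℕ) :
    ∃ n, 1 ≤ ∑ j ∈ Finset.Ico m n, l j := by
  obtain ⟨n, hn, hmn⟩ :=
    ((((not_summable_iff_tendsto_nat_atTop_of_nonneg hl).1 hdiv).eventually_ge_atTop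
      (∑ j ∈ Finset.range m, l j + 1)).and (eventually_ge_atTop m)).exists
  refine ⟨n, ?_⟩
  rw [Finset.sum_Ico_eq_sub _ hmn]
  linarith

lemma sum_Ico_sum_Ico_le_of_quasi_independent {F : ℕ → ℕ → ℝ} {l : ℕ → ℝ} {b : ℝ} {m n : ℕ}
    (hF : ∀ j k, 0 ≤ F j k) (hsymm : ∀ j k, F j k = F k j) (hb : 0 ≤ b) (hl : ∀ j, 0 ≤ l j)
    (hup : ∀ j k, m ≤ j → j ≤ k → F j k ≤ b * (l j * l k + l j * (1 / 2) ^ (k - j)))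
    (hS : 1 ≤ ∑ j ∈ Finset.Ico m n, l j) :
    ∑ j ∈ Finset.Ico m n, ∑ k ∈ Finset.Ico m n, F j k ≤
      6 * b * (∑ j ∈ Finset.Ico m n, l j) ^ 2 := by
  set S := ∑ j ∈ Finset.Ico m n, l j
  have hrow : ∀ j ∈ Finset.Ico m n, ∑ k ∈ Finset.Ico j n, F j k ≤ b * (l j * S + l j * 2) := by
    intro j hj
    obtain ⟨hmj, -⟩ := Finset.mem_Ico.1 hj
    calc ∑ k ∈ Finset.Ico j n, F j k
        ≤ ∑ k ∈ Finset.Ico j n, b * (l j * l k + l j * (1 / 2) ^ (k - j)) :=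
          Finset.sum_le_sum fun k hk => hup j k hmj (Finset.mem_Ico.1 hk).1
      _ = b * (l j * ∑ k ∈ Finset.Ico j n, l k +
            l j * ∑ k ∈ Finset.Ico j n, (1 / 2) ^ (k - j)) := by
          rw [← Finset.mul_sum, Finset.sum_add_distrib, ← Finset.mul_sum, ← Finset.mul_sum]
      _ ≤ b * (l j * S + l j * 2) := by
          have := hl j
          gcongr
          · exact Finset.sum_le_sum_of_subset_of_nonneg (Finset.Ico_subset_Ico_left hmj)
              fun k _ _ => hl k
          · exact sum_Ico_half_pow_sub_le_two j n
  calc _ ≤ 2 * ∑ j ∈ Finset.Ico m n, ∑ k ∈ Finset.Ico j n, F j k :=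
        sum_Ico_sum_Ico_le_two_mul hF hsymm m n
    _ ≤ 2 * ∑ j ∈ Finset.Ico m n, b * (l j * S + l j * 2) := by
        gcongr with j hj
        exact hrow j hj
    _ = 2 * b * (S ^ 2 + 2 * S) := by
        rw [← Finset.mul_sum, Finset.sum_add_distrib, ← Finset.sum_mul, ← Finset.sum_mul]
        ring
    _ ≤ 2 * b * (S ^ 2 + 2 * S ^ 2) := by
        gcongr
        exact le_self_pow₀ hS two_ne_zero
    _ = 6 * b * S ^ 2 := by ring

/-- A quantitative form of the divergence **Borel–Cantelli lemma**. -/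
lemma le_measure_iUnion_Ici_of_quasi_independent {Ω : Type*} [MeasurableSpace Ω] {μ : Measure Ω}
    {A : ℕ → Set Ω} {l : ℕ → ℝ} {a b : ℝ} {m : ℕ} (hA : ∀ j, MeasurableSet (A j))
    (hfin : ∀ j, μ (A j) ≠ ⊤) (ha : 0 ≤ a) (hb : 0 < b) (hl : ∀ j, 0 ≤ l j) (hdiv : ¬ Summable l)
    (hlow : ∀ j, m ≤ j → a * l j ≤ μ.real (A j))
    (hup : ∀ j k, m ≤ j → j ≤ k →
      μ.real (A j ∩ A k) ≤ b * (l j * l k + l j * (1 / 2) ^ (k - j))) :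
    ENNReal.ofReal (a ^ 2 / (6 * b)) ≤ μ (⋃ j ∈ Ici m, A j) := by
  obtain ⟨n, hn⟩ := exists_one_le_sum_Ico hl hdiv m
  set S := ∑ j ∈ Finset.Ico m n, l j with hS
  have hfirst : a * S ≤ ∑ j ∈ Finset.Ico m n, μ.real (A j) := by
    rw [hS, Finset.mul_sum]
    exact Finset.sum_le_sum fun j hj => hlow j (Finset.mem_Ico.1 hj).1
  have hsecond : ∑ j ∈ Finset.Ico m n, ∑ k ∈ Finset.Ico m n, μ.real (A j ∩ A k) ≤ 6 * b * S ^ 2 :=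
    sum_Ico_sum_Ico_le_of_quasi_independent (fun _ _ => measureReal_nonneg)
      (fun j k => by rw [inter_comm]) hb.le hl hup hn
  have hU : a ^ 2 / (6 * b) ≤ μ.real (⋃ j ∈ Finset.Ico m n, A j) := by
    rw [div_le_iff₀ (by positivity)]
    refine le_of_mul_le_mul_right ?_ (by positivity : 0 < S ^ 2)
    calc a ^ 2 * S ^ 2 = (a * S) ^ 2 := by ring
      _ ≤ (∑ j ∈ Finset.Ico m n, μ.real (A j)) ^ 2 := by gcongr
      _ ≤ _ := sq_sum_measureReal_le_mul_sum_inter _ hA hfin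
      _ ≤ μ.real (⋃ j ∈ Finset.Ico m n, A j) * (6 * b * S ^ 2) := by gcongr
      _ = _ := by ring
  calc ENNReal.ofReal (a ^ 2 / (6 * b)) ≤ μ (⋃ j ∈ Finset.Ico m n, A j) :=
        ENNReal.ofReal_le_of_le_toReal hU
    _ ≤ μ (⋃ j ∈ Ici m, A j) :=
        measure_mono (biUnion_mono (fun j hj => (Finset.mem_Ico.1 hj).1) fun _ _ => Subset.rfl)

end SecondMoment

section Density

variable {X : Type*} [MetricSpace X] [ProperSpace X] [MeasurableSpace X] [BorelSpace X]
  [HasBesicovitchCovering X] {μ : Measure X} [IsFiniteMeasureOnCompacts μ] [μ.IsOpenPosMeasure]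

lemma ae_mem_of_forall_mul_measure_closedBall_le {V : Set X} (hV : MeasurableSet V) {κ : ENNReal}
    (hκ : κ ≠ 0)
    (h : ∀ x, ∀ᶠ r in 𝓝[>] 0, κ * μ (closedBall x r) ≤ μ (V ∩ closedBall x r)) :
    ∀ᵐ x ∂μ, x ∈ V := by
  filter_upwards [Besicovitch.ae_tendsto_measure_inter_div_of_measurableSet μ hV] with x hx
  by_contra hxV
  rw [indicator_of_notMem hxV] at hx
  refine hκ (nonpos_iff_eq_zero.1 (ge_of_tendsto hx ?_))
  filter_upwards [h x, self_mem_nhdsWithin] with r hr hr0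
  rwa [ENNReal.le_div_iff_mul_le (Or.inl (measure_closedBall_pos μ x hr0).ne')
    (Or.inl measure_closedBall_lt_top.ne)]

lemma ae_frequently_mem_of_forall_mul_measure_closedBall_le {E : ℕ → Set X}
    (hE : ∀ j, MeasurableSet (E j)) {κ : ENNReal} (hκ : κ ≠ 0)
    (h : ∀ m x, ∀ᶠ r in 𝓝[>] 0,
      κ * μ (closedBall x r) ≤ μ ((⋃ j ∈ Ici m, E j) ∩ closedBall x r)) :
    ∀ᵐ x ∂μ, ∃ᶠ j in atTop, x ∈ E j := by
  have htail : ∀ m, ∀ᵐ x ∂μ, x ∈ ⋃ j ∈ Ici m, E j := fun m =>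
    ae_mem_of_forall_mul_measure_closedBall_le
      (.biUnion (to_countable _) fun j _ => hE j) hκ (h m)
  filter_upwards [ae_all_iff.2 htail] with x hx
  refine frequently_atTop.2 fun m => ?_
  simpa only [mem_iUnion, mem_Ici, exists_prop] using hx m

end Density

section SeparatedSets

variable {P Q : Finset ℝ} {δ r s : ℝ}

lemma measurableSet_cthickening {X : Type*} [PseudoEMetricSpace X] [MeasurableSpace X]
    [OpensMeasurableSpace X] (r : ℝ) (S : Set X) : MeasurableSet (cthickening r S) :=
  isClosed_cthickening.measurableSet

lemma volume_cthickening_ne_top (P : Finset ℝ) (r : ℝ) :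
    volume (cthickening r (P : Set ℝ)) ≠ ⊤ :=
  P.finite_toSet.isBounded.cthickening.measure_lt_top.ne

lemma cthickening_eq_biUnion_closedBall_of_finset (P : Finset ℝ) (hr : 0 ≤ r) :
    cthickening r (P : Set ℝ) = ⋃ x ∈ P, closedBall x r :=
  P.finite_toSet.isCompact.cthickening_eq_biUnion_closedBall hr

lemma volume_cthickening_le (P : Finset ℝ) (hr : 0 ≤ r) :
    volume.real (cthickening r (P : Set ℝ)) ≤ #P * (2 * r) := by
  rw [cthickening_eq_biUnion_closedBall_of_finset P hr]
  refine (measureReal_biUnion_finset_le _ _).trans_eq ?_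
  simp only [Real.volume_real_closedBall hr, Finset.sum_const, nsmul_eq_mul]

lemma volume_cthickening_of_separated (hP : (P : Set ℝ).Pairwise (δ ≤ dist · ·)) (hr : 0 ≤ r)
    (hrδ : 2 * r < δ) : volume.real (cthickening r (P : Set ℝ)) = #P * (2 * r) := by
  rw [cthickening_eq_biUnion_closedBall_of_finset P hr,
    measureReal_biUnion_finset (fun x hx y hy hxy => ?_) (fun _ _ => measurableSet_closedBall)
      fun _ _ => measure_closedBall_lt_top.ne]
  · simp only [Real.volume_real_closedBall hr, Finset.sum_const, nsmul_eq_mul]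
  · exact closedBall_disjoint_closedBall (by linarith [hP hx hy hxy])

lemma card_le_of_separated {c : ℝ} (hP : (P : Set ℝ).Pairwise (δ ≤ dist · ·)) (hδ : 0 < δ)
    (hs : 0 ≤ s) (hPs : (P : Set ℝ) ⊆ closedBall c s) : #P ≤ 2 * s / δ + 1 := by
  have hpack : #P * δ ≤ 2 * s + δ := by
    calc #P * δ = ∑ x ∈ P, volume.real (ball x (δ / 2)) := by
          simp only [Real.volume_real_ball (by positivity : 0 ≤ δ / 2),
            mul_div_cancel₀ δ two_ne_zero, Finset.sum_const, nsmul_eq_mul]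
      _ = volume.real (⋃ x ∈ P, ball x (δ / 2)) :=
          (measureReal_biUnion_finset (fun x hx y hy hxy => ball_disjoint_ball
            (by linarith [hP hx hy hxy])) fun _ _ => measurableSet_ball).symm
      _ ≤ volume.real (closedBall c (s + δ / 2)) :=
          measureReal_mono (iUnion₂_subset fun x hx => ball_subset_closedBall.trans
            (closedBall_subset_closedBall' (by linarith [mem_closedBall.1 (hPs hx)])))
            measure_closedBall_lt_top.ne
      _ = 2 * s + δ := by
          rw [Real.volume_real_closedBall (by positivity)]
          ring
  rwa [div_add_one hδ.ne', le_div_iff₀ hδ]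

lemma volume_closedBall_inter_closedBall_le (x y : ℝ) (hr : 0 ≤ r) (hs : 0 ≤ s) :
    volume.real (closedBall x r ∩ closedBall y s) ≤ 2 * min r s := by
  rw [mul_min_of_nonneg _ _ zero_le_two, ← Real.volume_real_closedBall (a := x) hr,
    ← Real.volume_real_closedBall (a := y) hs]
  exact le_min (measureReal_mono inter_subset_left measure_closedBall_lt_top.ne)
    (measureReal_mono inter_subset_right measure_closedBall_lt_top.ne)

lemma volume_closedBall_inter_cthickening_le (x : ℝ) (hQ : (Q : Set ℝ).Pairwise (δ ≤ dist · ·))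
    (hδ : 0 < δ) (hr : 0 ≤ r) (hs : 0 ≤ s) :
    volume.real (closedBall x r ∩ cthickening s (Q : Set ℝ)) ≤ 8 * r * s / δ + 2 * min r s := by
  let D := {y ∈ Q | dist y x ≤ r + s}
  have hcover : closedBall x r ∩ cthickening s (Q : Set ℝ) ⊆
      ⋃ y ∈ D, closedBall x r ∩ closedBall y s := by
    rw [cthickening_eq_biUnion_closedBall_of_finset Q hs]
    rintro α ⟨hαx, hα⟩
    obtain ⟨y, hy, hαy⟩ := mem_iUnion₂.1 hα
    have hyx : dist y x ≤ r + s := by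
      linarith [dist_triangle_left y x α, mem_closedBall.1 hαx, mem_closedBall.1 hαy]
    exact mem_iUnion₂.2 ⟨y, Finset.mem_filter.2 ⟨hy, hyx⟩, hαx, hαy⟩
  have hcard : #D ≤ 2 * (r + s) / δ + 1 :=
    card_le_of_separated (hQ.mono (Finset.coe_subset.2 (Finset.filter_subset _ _))) hδ
      (add_nonneg hr hs) fun y hy => (Finset.mem_filter.1 hy).2
  have hmin : (r + s) * min r s ≤ 2 * (r * s) := by
    rw [← min_add_max r s, ← min_mul_max r s]
    nlinarith [min_le_max (a := r) (b := s), le_min hr hs]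
  calc volume.real (closedBall x r ∩ cthickening s (Q : Set ℝ))
      ≤ ∑ y ∈ D, volume.real (closedBall x r ∩ closedBall y s) :=
        (measureReal_mono hcover ((measure_biUnion_lt_top D.finite_toSet fun y _ =>
          measure_inter_lt_top_of_left_ne_top measure_closedBall_lt_top.ne).ne)).trans
          (measureReal_biUnion_finset_le _ _)
    _ ≤ #D * (2 * min r s) := by
        rw [← nsmul_eq_mul]
        exact Finset.sum_le_card_nsmul _ _ _ fun y _ =>
          volume_closedBall_inter_closedBall_le x y hr hs
    _ ≤ (2 * (r + s) / δ + 1) * (2 * min r s) := by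
        have := le_min hr hs
        gcongr
    _ = 4 * ((r + s) * min r s) / δ + 2 * min r s := by ring
    _ ≤ 4 * (2 * (r * s)) / δ + 2 * min r s := by gcongr
    _ = 8 * r * s / δ + 2 * min r s := by ring

lemma volume_cthickening_inter_cthickening_le (P : Finset ℝ)
    (hQ : (Q : Set ℝ).Pairwise (δ ≤ dist · ·)) (hδ : 0 < δ) (hr : 0 ≤ r) (hs : 0 ≤ s) :
    volume.real (cthickening r (P : Set ℝ) ∩ cthickening s (Q : Set ℝ)) ≤
      #P * (8 * r * s / δ + 2 * min r s) := by
  rw [cthickening_eq_biUnion_closedBall_of_finset P hr, iUnion₂_inter, ← nsmul_eq_mul]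
  exact (measureReal_biUnion_finset_le _ _).trans <| Finset.sum_le_card_nsmul _ _ _ fun x _ =>
    volume_closedBall_inter_cthickening_le x hQ hδ hr hs

end SeparatedSets

section Fractions

variable {B c ρ σ ε x : ℝ} {n N : ℕ}

lemma dist_div_natCast_eq (hn : 0 < n) (α y : ℝ) : dist α (y / n) = |n * α - y| / n := by
  have hn' : (0 : ℝ) < n := Nat.cast_pos.2 hn
  rw [Real.dist_eq, sub_div' hn'.ne', abs_div, abs_of_pos hn', mul_comm]

lemma one_div_mul_le_dist_of_ne {m : ℕ} {p q : ℤ} (hn : 0 < n) (hm : 0 < m)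
    (hne : (p : ℝ) / n ≠ q / m) : 1 / ((n : ℝ) * m) ≤ dist ((p : ℝ) / n) (q / m) := by
  have hn' : (n : ℝ) ≠ 0 := Nat.cast_ne_zero.2 hn.ne'
  have hm' : (m : ℝ) ≠ 0 := Nat.cast_ne_zero.2 hm.ne'
  have hnum : p * m - n * q ≠ 0 := by
    contrapose hne
    rw [div_eq_div_iff hn' hm', mul_comm (q : ℝ)]
    exact_mod_cast sub_eq_zero.1 hne
  rw [Real.dist_eq, div_sub_div _ _ hn' hm', abs_div,
    abs_of_nonneg (by positivity : (0 : ℝ) ≤ n * m)]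
  gcongr
  exact_mod_cast Int.one_le_abs hnum

/-- The fractions with denominator `n`, not necessarily in lowest terms, within distance `ρ` of
`c`. -/
noncomputable def fracsWithDenom (n : ℕ) (c ρ : ℝ) : Finset ℝ :=
  (Finset.Icc ⌈n * (c - ρ)⌉ ⌊n * (c + ρ)⌋).image fun p : ℤ => (p : ℝ) / n

lemma mem_fracsWithDenom (hn : 0 < n) :
    x ∈ fracsWithDenom n c ρ ↔ (∃ p : ℤ, x = p / n) ∧ x ∈ closedBall c ρ := by
  have hn' : (0 : ℝ) < n := Nat.cast_pos.2 hn
  simp only [fracsWithDenom, Finset.mem_image, Finset.mem_Icc, Int.ceil_le, Int.le_floor,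
    Real.closedBall_eq_Icc, mem_Icc]
  constructor
  · rintro ⟨p, ⟨hl, hu⟩, rfl⟩
    exact ⟨⟨p, rfl⟩, (le_div_iff₀' hn').2 hl, (div_le_iff₀' hn').2 hu⟩
  · rintro ⟨⟨p, rfl⟩, hl, hu⟩
    exact ⟨p, ⟨(le_div_iff₀' hn').1 hl, (div_le_iff₀' hn').1 hu⟩, rfl⟩

lemma card_fracsWithDenom_le (hn : 0 < n) (c : ℝ) (hρ : 0 ≤ ρ) :
    (#(fracsWithDenom n c ρ) : ℝ) ≤ 2 * n * ρ + 1 := by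
  have hn' : (0 : ℝ) < n := Nat.cast_pos.2 hn
  have hsep : (fracsWithDenom n c ρ : Set ℝ).Pairwise (1 / n ≤ dist · ·) := by
    intro x hx y hy hxy
    obtain ⟨⟨p, rfl⟩, -⟩ := (mem_fracsWithDenom hn).1 hx
    obtain ⟨⟨q, rfl⟩, -⟩ := (mem_fracsWithDenom hn).1 hy
    have hpq : 1 ≤ |(p : ℝ) - q| := by
      exact_mod_cast Int.one_le_abs (sub_ne_zero.2 fun h => hxy (by rw [h]))
    rw [Real.dist_eq, ← sub_div, abs_div, abs_of_pos hn']
    gcongr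
  refine (card_le_of_separated hsep (by positivity) hρ
    fun x hx => ((mem_fracsWithDenom hn).1 hx).2).trans_eq ?_
  field

/-- The fractions with some denominator in `[2B/3, B]`, not necessarily in lowest terms, within
distance `ρ` of `c`. -/
noncomputable def fracsNear (B c ρ : ℝ) : Finset ℝ :=
  (Finset.Icc ⌈2 / 3 * B⌉₊ ⌊B⌋₊).biUnion fun n => fracsWithDenom n c ρ

lemma mem_fracsNear (hB : 0 < B) :
    x ∈ fracsNear B c ρ ↔
      (∃ (n : ℕ) (p : ℤ), 0 < n ∧ 2 / 3 * B ≤ n ∧ n ≤ B ∧ x = p / n) ∧ x ∈ closedBall c ρ := by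
  have hpos {n : ℕ} (hn : 2 / 3 * B ≤ n) : 0 < n :=
    Nat.cast_pos.1 ((by positivity : 0 < 2 / 3 * B).trans_le hn)
  simp only [fracsNear, Finset.mem_biUnion, Finset.mem_Icc, Nat.ceil_le, Nat.le_floor_iff hB.le]
  constructor
  · rintro ⟨n, ⟨hl, hu⟩, hx⟩
    obtain ⟨⟨p, hp⟩, hxc⟩ := (mem_fracsWithDenom (hpos hl)).1 hx
    exact ⟨⟨n, p, hpos hl, hl, hu, hp⟩, hxc⟩
  · rintro ⟨⟨n, p, hn, hl, hu, hp⟩, hxc⟩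
    exact ⟨n, ⟨hl, hu⟩, (mem_fracsWithDenom hn).2 ⟨⟨p, hp⟩, hxc⟩⟩

lemma fracsNear_separated (hB : 0 < B) :
    (fracsNear B c ρ : Set ℝ).Pairwise (1 / B ^ 2 ≤ dist · ·) := by
  intro x hx y hy hxy
  obtain ⟨⟨n, p, hn, -, hnB, rfl⟩, -⟩ := (mem_fracsNear hB).1 hx
  obtain ⟨⟨m, q, hm, -, hmB, rfl⟩, -⟩ := (mem_fracsNear hB).1 hy
  refine le_trans ?_ (one_div_mul_le_dist_of_ne hn hm hxy)
  rw [sq]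
  gcongr

lemma card_fracsNear_le (hB : 0 < B) (c : ℝ) (hρ : 0 ≤ ρ) :
    (#(fracsNear B c ρ) : ℝ) ≤ 2 * ρ * B ^ 2 + 1 := by
  refine (card_le_of_separated (fracsNear_separated hB) (by positivity) hρ
    fun x hx => ((mem_fracsNear hB).1 hx).2).trans_eq ?_
  field

lemma exists_mul_mem_Icc_two_thirds (hn : 0 < n) (hnB : n ≤ B / 2) :
    ∃ k : ℕ, 0 < k ∧ (k : ℝ) * n ∈ Icc (2 / 3 * B) B := by
  have hn' : (0 : ℝ) < n := Nat.cast_pos.2 hn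
  rcases le_or_gt (n : ℝ) (B / 3) with h | h
  · have hle := Nat.floor_le (a := B / n) (div_nonneg (by linarith) hn'.le)
    have hlt := Nat.lt_floor_add_one (B / n)
    rw [le_div_iff₀ hn'] at hle
    rw [div_lt_iff₀ hn'] at hlt
    exact ⟨⌊B / n⌋₊, Nat.floor_pos.2 ((one_le_div hn').2 (by linarith)), by linarith, hle⟩
  · exact ⟨2, two_pos, by push_cast; linarith, by push_cast; linarith⟩

lemma volume_dni_natCast_mul_le_inter_closedBall_le (hn : 0 < n) (c : ℝ) (hσ : 0 ≤ σ) (hε : 0 ≤ ε)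
    (hε1 : ε ≤ 1) :
    volume.real ({α | dni (n * α) ≤ ε} ∩ closedBall c σ) ≤ (2 * n * σ + 3) * (2 * (ε / n)) := by
  have hn' : (0 : ℝ) < n := Nat.cast_pos.2 hn
  have hcover : {α | dni (n * α) ≤ ε} ∩ closedBall c σ ⊆
      cthickening (ε / n) (fracsWithDenom n c (σ + ε / n) : Set ℝ) := by
    rintro α ⟨hα, hαc⟩
    have hclose : dist α (round (n * α) / n) ≤ ε / n := by
      rw [dist_div_natCast_eq hn]
      exact div_le_div_of_nonneg_right hα hn'.le
    refine mem_cthickening_of_dist_le α _ _ _ ((mem_fracsWithDenom hn).2 ⟨⟨_, rfl⟩, ?_⟩) hclose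
    exact mem_closedBall.2
      (by linarith [dist_triangle_left (round (n * α) / n : ℝ) c α, mem_closedBall.1 hαc])
  calc _ ≤ volume.real (cthickening (ε / n) (fracsWithDenom n c (σ + ε / n) : Set ℝ)) :=
        measureReal_mono hcover (volume_cthickening_ne_top _ _)
    _ ≤ #(fracsWithDenom n c (σ + ε / n)) * (2 * (ε / n)) := volume_cthickening_le _ (by positivity)
    _ ≤ (2 * n * σ + 3) * (2 * (ε / n)) := by
        gcongr
        refine (card_fracsWithDenom_le hn c (by positivity)).trans ?_
        rw [mul_add, mul_assoc 2 (n : ℝ) (ε / n), mul_div_cancel₀ ε hn'.ne']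
        linarith

/-- The reals for which Dirichlet's theorem at level `N` can be realised by a denominator at most
`N / 8`. -/
def smallDenomSet (N : ℕ) : Set ℝ :=
  {α | ∃ n : ℕ, 0 < n ∧ 8 * n ≤ N ∧ dni (n * α) ≤ 1 / (N + 1)}

lemma volume_smallDenomSet_inter_closedBall_le (hN : 0 < N) (c : ℝ) (hσ : 0 ≤ σ) :
    volume.real (smallDenomSet N ∩ closedBall c σ) ≤ σ / 2 + 6 * (harmonic N / N) := by
  set ε : ℝ := 1 / (N + 1) with hε
  have hN' : (0 : ℝ) < N := Nat.cast_pos.2 hN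
  have hεN : ε ≤ 1 / N := by rw [hε]; gcongr; linarith
  have hcover : smallDenomSet N ∩ closedBall c σ ⊆
      ⋃ n ∈ Finset.Icc 1 (N / 8), {α | dni (n * α) ≤ ε} ∩ closedBall c σ := by
    rintro α ⟨⟨n, hn, hnN, h⟩, hαc⟩
    exact mem_iUnion₂.2 ⟨n, Finset.mem_Icc.2 ⟨hn, by lia⟩, h, hαc⟩
  calc _ ≤ ∑ n ∈ Finset.Icc 1 (N / 8), volume.real ({α | dni (n * α) ≤ ε} ∩ closedBall c σ) :=
        (measureReal_mono hcover (measure_biUnion_lt_top (Finset.finite_toSet _) fun n _ =>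
          measure_inter_lt_top_of_right_ne_top measure_closedBall_lt_top.ne).ne).trans
          (measureReal_biUnion_finset_le _ _)
    _ ≤ ∑ n ∈ Finset.Icc 1 (N / 8), (4 * σ / N + 6 / N * (n : ℝ)⁻¹) := by
        refine Finset.sum_le_sum fun n hn => ?_
        have hn0 : 0 < n := (Finset.mem_Icc.1 hn).1
        calc _ ≤ (2 * n * σ + 3) * (2 * (ε / n)) :=
              volume_dni_natCast_mul_le_inter_closedBall_le hn0 c hσ (by positivity)
                ((div_le_one (by positivity)).2 (by linarith))
          _ ≤ (2 * n * σ + 3) * (2 * (1 / N / n)) := by gcongr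
          _ = 4 * σ / N + 6 / N * (n : ℝ)⁻¹ := by field
    _ = ((N / 8 : ℕ) : ℝ) * (4 * σ / N) + 6 / N * ∑ n ∈ Finset.Icc 1 (N / 8), (n : ℝ)⁻¹ := by
        rw [Finset.sum_add_distrib, Finset.sum_const, Nat.card_Icc, Nat.add_sub_cancel,
          nsmul_eq_mul, Finset.mul_sum]
    _ ≤ N / 8 * (4 * σ / N) + 6 / N * ∑ n ∈ Finset.Icc 1 N, (n : ℝ)⁻¹ := by
        gcongr
        · exact Nat.cast_div_le
        · exact N.div_le_self 8
    _ = σ / 2 + 6 * (harmonic N / N) := by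
        rw [harmonic_eq_sum_Icc]
        push_cast
        field

lemma tendsto_harmonic_div_natCast : Tendsto (fun N : ℕ => (harmonic N : ℝ) / N) atTop (𝓝 0) := by
  convert (tendsto_one_div_add_atTop_nhds_zero_nat (𝕜 := ℝ)).cesaro using 2 with N
  rw [harmonic, div_eq_inv_mul]
  push_cast
  simp only [one_div]

lemma closedBall_subset_smallDenomSet_union (c : ℝ) (hB : 2 ≤ B) (hBσ : 32 / B ^ 2 ≤ σ) :
    closedBall c σ ⊆ smallDenomSet ⌊B / 2⌋₊ ∪
      cthickening (32 / B ^ 2) (fracsNear B c (2 * σ) : Set ℝ) := by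
  intro α hα
  set N := ⌊B / 2⌋₊
  have hNle : (N : ℝ) ≤ B / 2 := Nat.floor_le (by linarith)
  have hNlt : B / 2 < N + 1 := Nat.lt_floor_add_one _
  obtain ⟨n, hn, hnN, hDirichlet⟩ :=
    Real.exists_nat_abs_mul_sub_round_le α (Nat.floor_pos.2 (by linarith) : 0 < N)
  refine or_iff_not_imp_left.2 fun hlarge => ?_
  have hnB : B / 16 ≤ n := by
    have : N + 1 ≤ 8 * n := not_le.1 fun h => hlarge ⟨n, hn, h, hDirichlet⟩
    have : (N : ℝ) + 1 ≤ 8 * n := by exact_mod_cast this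
    linarith
  set x : ℝ := round (n * α) / n with hx
  have hclose : dist α x ≤ 32 / B ^ 2 := by
    rw [hx, dist_div_natCast_eq hn]
    calc |n * α - round (n * α)| / n ≤ 1 / (N + 1) / n := by gcongr
      _ ≤ 1 / (B / 2) / (B / 16) := by gcongr
      _ = 32 / B ^ 2 := by field
  obtain ⟨k, hk, hkl, hku⟩ :=
    exists_mul_mem_Icc_two_thirds hn ((Nat.cast_le.2 hnN).trans hNle)
  refine mem_cthickening_of_dist_le α x _ _ ((mem_fracsNear (by linarith)).2
    ⟨⟨k * n, k * round (n * α), mul_pos hk hn, ?_, ?_, ?_⟩, ?_⟩) hclose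
  · exact_mod_cast hkl
  · exact_mod_cast hku
  · push_cast
    rw [mul_div_mul_left _ _ (Nat.cast_ne_zero.2 hk.ne')]
  · exact mem_closedBall.2 (by linarith [dist_triangle_left x c α, mem_closedBall.1 hα])

lemma eventually_le_card_fracsNear (c : ℝ) (hσ : 0 < σ) :
    ∀ᶠ B : ℝ in atTop, σ * B ^ 2 / 64 ≤ #(fracsNear B c (2 * σ)) := by
  have hfloor : Tendsto (fun B : ℝ => ⌊B / 2⌋₊) atTop atTop :=
    tendsto_nat_floor_atTop.comp (tendsto_id.atTop_div_const two_pos)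
  have hharm : ∀ᶠ N : ℕ in atTop, (harmonic N : ℝ) / N ≤ σ / 12 :=
    tendsto_harmonic_div_natCast.eventually_le_const (by positivity)
  have hsq : ∀ᶠ B : ℝ in atTop, 32 / σ ≤ B ^ 2 :=
    (tendsto_pow_atTop two_ne_zero).eventually_ge_atTop _
  filter_upwards [hfloor.eventually hharm, hsq, eventually_ge_atTop 2] with B hharmB hsqB hB
  have hB2 : 0 < B ^ 2 := by positivity
  have hcover := closedBall_subset_smallDenomSet_union c hB ((div_le_comm₀ hσ hB2).1 hsqB)
  set bad := smallDenomSet ⌊B / 2⌋₊ ∩ closedBall c σ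
  set good := cthickening (32 / B ^ 2) (fracsNear B c (2 * σ) : Set ℝ)
  have hbad : volume.real bad ≤ σ := by
    have := volume_smallDenomSet_inter_closedBall_le
      (Nat.floor_pos.2 (by linarith) : 0 < ⌊B / 2⌋₊) c hσ.le
    linarith
  have hmain : 2 * σ ≤ σ + 64 * #(fracsNear B c (2 * σ)) / B ^ 2 := by
    calc 2 * σ = volume.real (closedBall c σ) := (Real.volume_real_closedBall hσ.le).symm
      _ ≤ volume.real (bad ∪ good) := by
          refine measureReal_mono (fun α hα => (hcover hα).imp_left fun h => ⟨h, hα⟩)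
            (measure_union_ne_top ?_ (volume_cthickening_ne_top _ _))
          exact (measure_inter_lt_top_of_right_ne_top measure_closedBall_lt_top.ne).ne
      _ ≤ volume.real bad + volume.real good := measureReal_union_le _ _
      _ ≤ σ + #(fracsNear B c (2 * σ)) * (2 * (32 / B ^ 2)) :=
          add_le_add hbad (volume_cthickening_le _ (by positivity))
      _ = σ + 64 * #(fracsNear B c (2 * σ)) / B ^ 2 := by ring
  have : σ ≤ 64 * #(fracsNear B c (2 * σ)) / B ^ 2 := by linarith
  rw [le_div_iff₀ hB2] at this
  linarith

end Fractions

section ApproxSet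

/-- The reals `α` with `‖n α‖ ≤ ψ` for some integer `n ∈ [2B/3, B]`. -/
def approxSet (B ψ : ℝ) : Set ℝ :=
  {α | ∃ n : ℕ, 2 / 3 * B ≤ n ∧ n ≤ B ∧ dni (n * α) ≤ ψ}

lemma measurable_dni : Measurable dni := by
  have hround : Measurable fun x : ℝ => ((round x : ℤ) : ℝ) := by
    simp only [round_eq]
    fun_prop
  exact (measurable_id.sub hround).abs

lemma measurableSet_approxSet (B ψ : ℝ) : MeasurableSet (approxSet B ψ) := by
  simp only [approxSet, ofPred_exists, ofPred_and]
  exact .iUnion fun n => .inter (.const _) (.inter (.const _)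
    (measurableSet_le (measurable_dni.comp (measurable_const_mul _)) measurable_const))

lemma approxSet_mono (B : ℝ) : Monotone (approxSet B) :=
  fun _ _ h _ ⟨n, hl, hu, hn⟩ => ⟨n, hl, hu, hn.trans h⟩

lemma cthickening_fracsNear_subset_approxSet {B ψ : ℝ} (hB : 0 < B) (hψ : 0 ≤ ψ) (c ρ : ℝ) :
    cthickening (ψ / B) (fracsNear B c ρ : Set ℝ) ⊆ approxSet B ψ ∩ closedBall c (ρ + ψ / B) := by
  rw [cthickening_eq_biUnion_closedBall_of_finset _ (by positivity)]
  refine iUnion₂_subset fun x hx α hα => ?_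
  obtain ⟨⟨n, p, hn, hl, hu, rfl⟩, hxc⟩ := (mem_fracsNear hB).1 hx
  refine ⟨⟨n, hl, hu, ?_⟩, mem_closedBall.2
    (by linarith [dist_triangle α (p / n) c, mem_closedBall.1 hα, mem_closedBall.1 hxc])⟩
  rw [mem_closedBall, dist_div_natCast_eq hn, div_le_iff₀ (Nat.cast_pos.2 hn)] at hα
  calc dni (n * α) ≤ |n * α - p| := round_le _ p
    _ ≤ ψ / B * n := hα
    _ ≤ ψ / B * B := by gcongr
    _ = ψ := div_mul_cancel₀ ψ hB.ne'

lemma le_volume_cthickening_fracsNear {B ψ c σ : ℝ} (hB : 0 < B) (hψ : 0 ≤ ψ) (hlt : B * ψ < 1 / 2)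
    (hcard : σ * B ^ 2 / 64 ≤ #(fracsNear B c (2 * σ))) :
    σ / 32 * (B * ψ) ≤ volume.real (cthickening (ψ / B) (fracsNear B c (2 * σ) : Set ℝ)) := by
  have hradius : 2 * (ψ / B) < 1 / B ^ 2 := by
    rw [lt_div_iff₀ (by positivity)]
    calc 2 * (ψ / B) * B ^ 2 = 2 * (B * ψ) := by field
      _ < 1 := by linarith
  rw [volume_cthickening_of_separated (fracsNear_separated hB) (by positivity) hradius]
  calc σ / 32 * (B * ψ) = σ * B ^ 2 / 64 * (2 * (ψ / B)) := by field
    _ ≤ #(fracsNear B c (2 * σ)) * (2 * (ψ / B)) := by gcongr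

lemma volume_cthickening_fracsNear_inter_le_min {B B' ψ ψ' σ : ℝ} (hB : 0 < B) (hB' : 0 < B')
    (hψ : 0 ≤ ψ) (hψ' : 0 ≤ ψ') (c : ℝ) (hσ : 0 < σ) (hBσ : 1 / σ ≤ B ^ 2) :
    volume.real (cthickening (ψ / B) (fracsNear B c (2 * σ) : Set ℝ) ∩
        cthickening (ψ' / B') (fracsNear B' c (2 * σ) : Set ℝ)) ≤
      σ * (40 * (B * ψ * (B' * ψ')) + 10 * (B ^ 2 * min (ψ / B) (ψ' / B'))) := by
  have hcard : #(fracsNear B c (2 * σ)) ≤ 5 * σ * B ^ 2 := by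
    have := card_fracsNear_le hB c (by positivity : 0 ≤ 2 * σ)
    rw [div_le_iff₀' hσ] at hBσ
    linarith
  refine (volume_cthickening_inter_cthickening_le _ (fracsNear_separated hB') (by positivity)
    (by positivity) (by positivity)).trans ?_
  calc _ ≤ 5 * σ * B ^ 2 *
        (8 * (ψ / B) * (ψ' / B') / (1 / B' ^ 2) + 2 * min (ψ / B) (ψ' / B')) := by gcongr
    _ = _ := by field

lemma volume_cthickening_fracsNear_inter_le {B B' ψ ψ' σ : ℝ} (hB : 0 < B) (hB' : 0 < B')
    (hψ : 0 ≤ ψ) (hψ' : 0 ≤ ψ') (c : ℝ) (hσ : 0 < σ) (hBσ : 1 / σ ≤ B ^ 2)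
    (hBσ' : 1 / σ ≤ B' ^ 2) :
    volume.real (cthickening (ψ / B) (fracsNear B c (2 * σ) : Set ℝ) ∩
        cthickening (ψ' / B') (fracsNear B' c (2 * σ) : Set ℝ)) ≤
      σ * (40 * (B * ψ * (B' * ψ')) + 10 * (B * ψ')) := by
  rcases le_total B B' with h | h
  · refine (volume_cthickening_fracsNear_inter_le_min hB hB' hψ hψ' c hσ hBσ).trans ?_
    gcongr σ * (_ + 10 * ?_)
    calc B ^ 2 * min (ψ / B) (ψ' / B') ≤ B ^ 2 * (ψ' / B) := by
          gcongr
          exact (min_le_right _ _).trans (by gcongr)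
      _ = B * ψ' := by field
  · rw [inter_comm]
    refine (volume_cthickening_fracsNear_inter_le_min hB' hB hψ' hψ c hσ hBσ').trans ?_
    rw [mul_comm (B' * ψ')]
    gcongr σ * (_ + 10 * ?_)
    calc B' ^ 2 * min (ψ' / B') (ψ / B) ≤ B' ^ 2 * (ψ' / B') := by
          gcongr
          exact min_le_left _ _
      _ = B' * ψ' := by field
      _ ≤ B * ψ' := by gcongr

lemma le_mul_half_pow_of_halving {ψ : ℕ → ℝ} (hhalf : ∀ j, ψ (j + 1) ≤ ψ j / 2) {j k : ℕ}
    (hjk : j ≤ k) : ψ k ≤ ψ j * (1 / 2) ^ (k - j) := by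
  induction k, hjk using Nat.le_induction with
  | base => simp
  | succ k hjk ih =>
    rw [Nat.succ_sub hjk, pow_succ]
    linarith [hhalf k]

variable {B ψ : ℕ → ℝ}

lemma le_volume_iUnion_approxSet_inter_closedBall (hB : ∀ j, 0 < B j) (hψ : ∀ j, 0 < ψ j)
    (hBtop : Tendsto B atTop atTop) (hhalf : ∀ j, ψ (j + 1) ≤ ψ j / 2)
    (hlt : ∀ j, B j * ψ j < 1 / 2) (hdiv : ¬ Summable fun j => B j * ψ j) (m : ℕ) (c : ℝ) {σ : ℝ}
    (hσ : 0 < σ) :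
    ENNReal.ofReal (σ / 245760) ≤
      volume ((⋃ j ∈ Ici m, approxSet (B j) (ψ j)) ∩ closedBall c (3 * σ)) := by
  obtain ⟨m₀, hm₀⟩ := eventually_atTop.1 (hBtop.eventually
    ((eventually_le_card_fracsNear c hσ).and
      ((tendsto_pow_atTop two_ne_zero).eventually_ge_atTop (1 / σ))))
  let A : ℕ → Set ℝ := fun j => cthickening (ψ j / B j) (fracsNear (B j) c (2 * σ) : Set ℝ)
  have hA : ∀ j, m₀ ≤ j → A j ⊆ approxSet (B j) (ψ j) ∩ closedBall c (3 * σ) := by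
    intro j hj
    refine (cthickening_fracsNear_subset_approxSet (hB j) (hψ j).le c _).trans
      (inter_subset_inter_right _ (closedBall_subset_closedBall ?_))
    have hradius : ψ j / B j ≤ σ := by
      rw [div_le_iff₀ (hB j), ← mul_le_mul_iff_right₀ (hB j)]
      linarith [(div_le_iff₀' hσ).1 (hm₀ j hj).2, hlt j]
    linarith
  have hlower : ∀ j, max m m₀ ≤ j → σ / 32 * (B j * ψ j) ≤ volume.real (A j) := fun j hj =>
    le_volume_cthickening_fracsNear (hB j) (hψ j).le (hlt j) (hm₀ j (le_of_max_le_right hj)).1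
  have hupper : ∀ j k, max m m₀ ≤ j → j ≤ k → volume.real (A j ∩ A k) ≤
      40 * σ * (B j * ψ j * (B k * ψ k) + B j * ψ j * (1 / 2) ^ (k - j)) := by
    intro j k hj hjk
    have hj₀ : m₀ ≤ j := le_of_max_le_right hj
    have hjB := hB j
    have hkψ := hψ k
    calc volume.real (A j ∩ A k)
        ≤ σ * (40 * (B j * ψ j * (B k * ψ k)) + 10 * (B j * ψ k)) :=
          volume_cthickening_fracsNear_inter_le hjB (hB k) (hψ j).le hkψ.le c hσ
            (hm₀ j hj₀).2 (hm₀ k (hj₀.trans hjk)).2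
      _ ≤ σ * (40 * (B j * ψ j * (B k * ψ k)) + 40 * (B j * ψ k)) := by
          gcongr
          norm_num
      _ ≤ σ * (40 * (B j * ψ j * (B k * ψ k)) + 40 * (B j * (ψ j * (1 / 2) ^ (k - j)))) := by
          gcongr
          exact le_mul_half_pow_of_halving hhalf hjk
      _ = _ := by ring
  calc ENNReal.ofReal (σ / 245760) = ENNReal.ofReal ((σ / 32) ^ 2 / (6 * (40 * σ))) := by
        congr 1
        field
    _ ≤ volume (⋃ j ∈ Ici (max m m₀), A j) :=
        le_measure_iUnion_Ici_of_quasi_independent (fun _ => measurableSet_cthickening _ _)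
          (fun _ => volume_cthickening_ne_top _ _) (by positivity) (by positivity)
          (fun j => (mul_pos (hB j) (hψ j)).le) hdiv hlower hupper
    _ ≤ _ := by
        refine measure_mono (iUnion₂_subset fun j hj α hα => ?_)
        obtain ⟨hαj, hαc⟩ := hA j (le_of_max_le_right hj) hα
        exact ⟨mem_biUnion (mem_Ici.2 (le_of_max_le_left hj)) hαj, hαc⟩

lemma ae_frequently_mem_approxSet_of_tendsto (hB : ∀ j, 0 < B j) (hψ : ∀ j, 0 < ψ j)
    (hBtop : Tendsto B atTop atTop) (hhalf : ∀ j, ψ (j + 1) ≤ ψ j / 2)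
    (hlt : ∀ j, B j * ψ j < 1 / 2) (hdiv : ¬ Summable fun j => B j * ψ j) :
    ∀ᵐ α, ∃ᶠ j in atTop, α ∈ approxSet (B j) (ψ j) := by
  refine ae_frequently_mem_of_forall_mul_measure_closedBall_le
    (fun _ => measurableSet_approxSet _ _) (κ := ENNReal.ofReal (1 / (6 * 245760))) (by norm_num)
    fun m c => ?_
  filter_upwards [self_mem_nhdsWithin] with r hr
  convert le_volume_iUnion_approxSet_inter_closedBall hB hψ hBtop hhalf hlt hdiv m c
    (div_pos hr three_pos : 0 < r / 3) using 1
  · rw [Real.volume_closedBall, ← ENNReal.ofReal_mul (by positivity)]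
    congr 1
    ring
  · rw [mul_div_cancel₀ r three_ne_zero]

lemma exists_strictMono_lt_and_not_summable {l w : ℕ → ℝ} (hl : ∀ j, 0 ≤ l j) (hw : Summable w)
    (hdiv : ¬ Summable l) :
    ∃ φ : ℕ → ℕ, StrictMono φ ∧ (∀ i, w (φ i) < l (φ i)) ∧ ¬ Summable (l ∘ φ) := by
  let J := {j | w j < l j}
  have hcompl : Summable fun j : ↥Jᶜ => l j :=
    .of_nonneg_of_le (fun j => hl j) (fun j => not_lt.1 j.2) (hw.subtype Jᶜ)
  have hJ : ¬ Summable fun j : J => l j :=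
    fun h => hdiv (summable_subtype_and_compl.1 ⟨h, hcompl⟩)
  have : Infinite J := not_finite_iff_infinite.1 fun _ => hJ .of_finite
  classical
  let e := Nat.Subtype.orderIsoOfNat J
  exact ⟨fun i => e i, e.strictMono, fun i => (e i).2, fun h => hJ (e.toEquiv.summable_iff.1 h)⟩

/-- Only the indices with `(2 / 3) ^ j < B j * ψ j` matter for the divergence of the series; along
them `B` tends to infinity, because `ψ j` decays like `(1 / 2) ^ j`. -/
lemma ae_frequently_mem_approxSet_of_lt (hB : ∀ j, 0 < B j) (hψ : ∀ j, 0 < ψ j)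
    (hhalf : ∀ j, ψ (j + 1) ≤ ψ j / 2) (hlt : ∀ j, B j * ψ j < 1 / 2)
    (hdiv : ¬ Summable fun j => B j * ψ j) :
    ∀ᵐ α, ∃ᶠ j in atTop, α ∈ approxSet (B j) (ψ j) := by
  obtain ⟨φ, hφ, hlarge, hdivφ⟩ := exists_strictMono_lt_and_not_summable
    (fun j => (mul_pos (hB j) (hψ j)).le)
    (summable_geometric_of_lt_one (by norm_num) (by norm_num : (2 / 3 : ℝ) < 1)) hdiv
  have hψanti : Antitone ψ := antitone_nat_of_succ_le fun j => by linarith [hhalf j, hψ j]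
  have hhalfφ : ∀ i, ψ (φ (i + 1)) ≤ ψ (φ i) / 2 := fun i =>
    (hψanti (hφ i.lt_succ_self)).trans (hhalf (φ i))
  have hBφ : ∀ i, (4 / 3) ^ φ i / ψ 0 ≤ B (φ i) := by
    intro i
    rw [div_le_iff₀ (hψ 0)]
    refine le_of_mul_le_mul_right ?_ (by positivity : (0 : ℝ) < (1 / 2) ^ φ i)
    calc (4 / 3 : ℝ) ^ φ i * (1 / 2) ^ φ i = (2 / 3) ^ φ i := by rw [← mul_pow]; norm_num
      _ ≤ B (φ i) * ψ (φ i) := (hlarge i).le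
      _ ≤ B (φ i) * (ψ 0 * (1 / 2) ^ φ i) :=
          mul_le_mul_of_nonneg_left (le_mul_half_pow_of_halving hhalf (φ i).zero_le) (hB _).le
      _ = B (φ i) * ψ 0 * (1 / 2) ^ φ i := by ring
  have hBtop : Tendsto (B ∘ φ) atTop atTop := tendsto_atTop_mono hBφ <|
    ((tendsto_pow_atTop_atTop_of_one_lt (by norm_num)).comp hφ.tendsto_atTop).atTop_div_const (hψ 0)
  filter_upwards [ae_frequently_mem_approxSet_of_tendsto (fun i => hB (φ i)) (fun i => hψ (φ i))
    hBtop hhalfφ (fun i => hlt (φ i)) hdivφ] with α hα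
  exact hφ.tendsto_atTop.frequently hα

theorem ae_frequently_mem_approxSet {K : ℝ} (hB : ∀ j, 0 < B j) (hψ : ∀ j, 0 < ψ j)
    (hhalf : ∀ j, ψ (j + 1) ≤ ψ j / 2) (hK : ∀ j, B j * ψ j ≤ K)
    (hdiv : ¬ Summable fun j => B j * ψ j) :
    ∀ᵐ α, ∃ᶠ j in atTop, α ∈ approxSet (B j) (ψ j) := by
  have hKpos : 0 < K := (mul_pos (hB 0) (hψ 0)).trans_le (hK 0)
  set t : ℝ := 1 / (2 * K + 2) with ht
  have htpos : 0 < t := by positivity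
  have ht1 : t ≤ 1 := (div_le_one (by positivity)).2 (by linarith)
  have hscaled := ae_frequently_mem_approxSet_of_lt (ψ := fun j => t * ψ j) hB
    (fun j => mul_pos htpos (hψ j))
    (fun j => by rw [mul_div_assoc]; exact mul_le_mul_of_nonneg_left (hhalf j) htpos.le)
    (fun j => by
      rw [ht, mul_left_comm, one_div_mul_eq_div, div_lt_iff₀ (by positivity)]
      linarith [hK j])
    (by simpa only [mul_left_comm _ t, summable_mul_left_iff htpos.ne'] using hdiv)
  filter_upwards [hscaled] with α hα
  exact hα.mono fun j hj => approxSet_mono (B j) (mul_le_of_le_one_left (hψ j).le ht1) hj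

end ApproxSet

section Main

variable {f ϑ : ℝ → ℝ}

lemma not_summable_one_div_mul_two_pow (hf_pos : ∀ x, 0 < x → 0 < f x)
    (hf_mono : MonotoneOn f (Ioi 0)) (hϑ_pos : ∀ x, 0 < x → 0 < ϑ x)
    (hϑ_mono : MonotoneOn ϑ (Ioi 0)) (hdiv : ¬ Summable fun n : ℕ => 1 / ((n : ℝ) * f n * ϑ n)) :
    ¬ Summable fun j : ℕ => 1 / (f (2 ^ j) * ϑ (2 ^ j)) := by
  have hpos : ∀ n : ℕ, 0 < n → 0 < (n : ℝ) * f n * ϑ n := fun n hn => by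
    have hn' : (0 : ℝ) < n := Nat.cast_pos.2 hn
    have := hf_pos n hn'
    have := hϑ_pos n hn'
    positivity
  contrapose hdiv
  refine (summable_condensed_iff_of_nonneg (fun n => ?_) fun m n hm hmn => ?_).1 (hdiv.congr ?_)
  · rcases n.eq_zero_or_pos with rfl | hn
    · simp
    · exact (one_div_pos.2 (hpos n hn)).le
  · have hm' : (0 : ℝ) < m := Nat.cast_pos.2 hm
    have hmn' : (m : ℝ) ≤ n := Nat.cast_le.2 hmn
    have hn' := hm'.trans_le hmn'
    have := hf_pos m hm'
    have := hf_pos n hn'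
    have := hϑ_pos m hm'
    gcongr
    · exact hf_mono hm' hn' hmn'
    · exact hϑ_mono hm' hn' hmn'
  · intro j
    push_cast
    field

lemma Bbig_mul_eq (C : ℝ) (f : ℝ → ℝ) {ϑ : ℝ → ℝ} {j : ℕ} (hϑ : 0 ≤ ϑ (2 ^ j)) :
    Bbig f ϑ j * (C * (2 ^ j)⁻¹ * (√(ϑ (2 ^ j)))⁻¹) = C * (1 / (f (2 ^ j) * ϑ (2 ^ j))) := by
  calc _ = (2 ^ j * (2 ^ j)⁻¹) * (C * (1 / (f (2 ^ j) * (√(ϑ (2 ^ j)) * √(ϑ (2 ^ j)))))) := by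
        rw [Bbig]
        ring
    _ = C * (1 / (f (2 ^ j) * ϑ (2 ^ j))) := by
        rw [mul_inv_cancel₀ (by positivity), one_mul, Real.mul_self_sqrt hϑ]

lemma ae_frequently_mem_approxSet_Bbig (hf_pos : ∀ x, 0 < x → 0 < f x)
    (hf_mono : MonotoneOn f (Ioi 0)) (hϑ_pos : ∀ x, 0 < x → 0 < ϑ x)
    (hϑ_mono : MonotoneOn ϑ (Ioi 0)) (hdiv : ¬ Summable fun n : ℕ => 1 / ((n : ℝ) * f n * ϑ n))
    {C : ℝ} (hC : 0 < C) :
    ∀ᵐ α, ∃ᶠ j : ℕ in atTop,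
      α ∈ approxSet (Bbig f ϑ j) (C * (2 ^ j)⁻¹ * (√(ϑ (2 ^ j)))⁻¹) := by
  have hpow (j : ℕ) : (0 : ℝ) < 2 ^ j := by positivity
  have hf (j : ℕ) : 0 < f (2 ^ j) := hf_pos _ (hpow j)
  have hϑ (j : ℕ) : 0 < ϑ (2 ^ j) := hϑ_pos _ (hpow j)
  have hsqrt (j : ℕ) : 0 < √(ϑ (2 ^ j)) := Real.sqrt_pos.2 (hϑ j)
  have hprod (j : ℕ) := Bbig_mul_eq C f (hϑ j).le
  refine ae_frequently_mem_approxSet (K := C * (1 / (f (2 ^ 0) * ϑ (2 ^ 0))))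
    (fun j => div_pos (hpow j) (mul_pos (hf j) (hsqrt j))) (fun j => ?_) (fun j => ?_)
    (fun j => ?_) ?_
  · have := hsqrt j
    positivity
  · have hle : ϑ (2 ^ j) ≤ ϑ (2 ^ (j + 1)) :=
      hϑ_mono (hpow j) (hpow _) (pow_le_pow_right₀ one_le_two j.le_succ)
    calc C * (2 ^ (j + 1))⁻¹ * (√(ϑ (2 ^ (j + 1))))⁻¹
        ≤ C * (2 ^ (j + 1))⁻¹ * (√(ϑ (2 ^ j)))⁻¹ := by
          have := hsqrt j
          gcongr
      _ = C * (2 ^ j)⁻¹ * (√(ϑ (2 ^ j)))⁻¹ / 2 := by ring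
  · have hle : (2 : ℝ) ^ 0 ≤ 2 ^ j := pow_le_pow_right₀ one_le_two j.zero_le
    rw [hprod]
    have := hf 0
    have := hϑ 0
    have := hf j
    gcongr
    · exact hf_mono (hpow 0) (hpow j) hle
    · exact hϑ_mono (hpow 0) (hpow j) hle
  · simpa only [hprod, summable_mul_left_iff hC.ne'] using
      not_summable_one_div_mul_two_pow hf_pos hf_mono hϑ_pos hϑ_mono hdiv

theorem full_measure_of_well_approximable_set_general (hf_pos : ∀ x, 0 < x → 0 < f x)
    (hf_mono : MonotoneOn f (Ioi 0)) (hϑ_pos : ∀ x, 0 < x → 0 < ϑ x)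
    (hϑ_mono : MonotoneOn ϑ (Ioi 0)) (hdiv : ¬ Summable fun n : ℕ => 1 / ((n : ℝ) * f n * ϑ n))
    {C : ℝ} (hC : 0 < C) :
    volume {α : ℝ | α ∈ Ioo (0 : ℝ) 1 ∧
      ∀ J : ℕ, ∃ j : ℕ, J ≤ j ∧ 1 ≤ j ∧ ∃ n : ℕ,
        bsmall f ϑ j ≤ n ∧ n ≤ Bbig f ϑ j ∧
        dni (n * α) ≤ C * (2 ^ j)⁻¹ * (√(ϑ (2 ^ j)))⁻¹} = 1 := by
  calc _ = volume (Ioo (0 : ℝ) 1) := by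
        refine measure_congr ?_
        filter_upwards [ae_frequently_mem_approxSet_Bbig hf_pos hf_mono hϑ_pos hϑ_mono hdiv hC]
          with α hα
        refine propext (and_iff_left fun J => ?_)
        obtain ⟨j, hj, n, hn⟩ := frequently_atTop.1 hα (max J 1)
        exact ⟨j, le_of_max_le_left hj, le_of_max_le_right hj, n, hn⟩
    _ = 1 := by simp only [Real.volume_Ioo, sub_zero, ENNReal.ofReal_one]

end Main

theorem full_measure_of_well_approximable_set
    (f : ℝ → ℝ)
    (hf_gt : ∀ x : ℝ, 0 < x → 2 < f x)
    (hf_mono : MonotoneOn f (Set.Ioi (0 : ℝ)))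
    (hf_top : Tendsto f atTop atTop)
    (hf_O : ∃ C : ℝ, 0 < C ∧ ∀ᶠ x : ℝ in atTop,
      f x ≤ C * x ^ ((1 : ℝ) / 3) / (Real.log x) ^ ((7 : ℝ) / 3))
    (ϑ : ℝ → ℝ)
    (hϑ_gt : ∀ x : ℝ, 0 < x → 1 < ϑ x)
    (hϑ_mono : MonotoneOn ϑ (Set.Ioi (0 : ℝ)))
    (hϑ_top : Tendsto ϑ atTop atTop)
    (hϑ_O : ∃ C : ℝ, 0 < C ∧ ∀ᶠ x : ℝ in atTop, ϑ x ≤ C * x ^ ((1 : ℝ) / 4))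
    (hϑ_rat : Tendsto (fun j : ℕ => ϑ ((2 : ℝ) ^ (j + 1)) / ϑ ((2 : ℝ) ^ j)) atTop (nhds 1))
    (hdiv : ¬ Summable fun n : ℕ => 1 / ((n : ℝ) * f n * ϑ n)) :
    ∃ C : ℝ, 0 < C ∧
      volume {α : ℝ | α ∈ Set.Ioo (0 : ℝ) 1 ∧
        ∀ J : ℕ, ∃ j : ℕ, J ≤ j ∧ 1 ≤ j ∧ ∃ n : ℕ,
          bsmall f ϑ j ≤ (n : ℝ) ∧ (n : ℝ) ≤ Bbig f ϑ j ∧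
          dni ((n : ℝ) * α) ≤ C * ((2 : ℝ) ^ j)⁻¹ * (Real.sqrt (ϑ ((2 : ℝ) ^ j)))⁻¹} = 1 := by
  exact ⟨1, one_pos, full_measure_of_well_approximable_set_general
    (fun x hx => two_pos.trans (hf_gt x hx)) hf_mono (fun x hx => one_pos.trans (hϑ_gt x hx))
    hϑ_mono hdiv one_pos⟩
end

section
/- Let f : ℝ_{>0} → ℝ_{>2} be a function increasing monotonically to ∞ satisfying f(x) = O((log x)^{−7/3} x^{1/3}), such that Σ_{n≥1} 1/(n f(n)) converges and sup{ f(2x)/f(x) : x ≥ x₀ } < 2 for some x₀ > 0. Set ϑ(x) := 1 + log x, and for each j ∈ ℕ set B_j := 2^j / ( f(2^j) · √(ϑ(2^j)) ) and b_j := (2/3)·B_j. Then there exists a constant C > 0 such that the set of α ∈ (0,1) for which there are infinitely many j admitting an integer n with b_j ≤ n ≤ B_j and ‖nα‖ ≤ C · 2^{−j} · (ϑ(2^j))^{−1/2} has Hausdorff dimension at least 1/(1+λ), where λ := liminf_{x→∞} log f(x)/log x is the lower order of f at infinity. -/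
open Filter MeasureTheory

/-!
Let `X = 2 ^ j` and `B = B_j`. If `|α - q| ≤ C * f X / X ^ 2` for a rational `q` of denominator
`b ≤ B / 3`, then the largest multiple `n` of `b` not exceeding `B` lies in `[b_j, B_j]`, and
`‖n α‖ ≤ n |α - q| ≤ C / (X √(ϑ X))`. It remains to bound from below the dimension of a limsup set
of points within `r j` of a rational of denominator at most `Q j`. Such a set has nonzero Hausdorff
`s`-measure, `0 < s < 1`, in every ball as soon as `r j → 0` and `Q j ^ 2 * r j ^ s → ∞`; for
`Q ≈ X ^ (1 - λ)` and `r ≈ X ^ (λ - 2)` the latter holds whenever `s < 2 (1 - λ) / (2 - λ)`. For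
`0 ≤ λ ≤ 1 / 2` this bound is at least `1 / (1 + λ)`.

Suppose the limsup set had a cover of small total `s`-dimensional size. Call a ball light if the
members of the cover meeting it are too small in total to cover it. In a light ball the points near
rationals of small denominator, the points near a member of the cover (relative to its size) and the
points near which the cover is too crowded together do not have full measure. Dirichlet's theorem at
any other point gives a rational of denominator at most `Q j` around which the ball of radius `r j`
is again light. The nested balls so obtained shrink to a point of the limsup set; a member of the
cover containing it would meet light balls much smaller than itself.
-/

open Set Metric Asymptotics Topology
open scoped ENNReal

section Counting

theorem card_Icc_ceil_floor_le {u v : ℝ} (huv : u ≤ v) :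
    ((Finset.Icc ⌈u⌉ ⌊v⌋).card : ℝ) ≤ v - u + 1 := by
  rw [Int.card_Icc, ← Int.cast_natCast, Int.toNat_eq_max]
  push_cast
  exact max_le (by linarith [Int.floor_le v, Int.le_ceil u]) (by linarith)

variable {x R δ : ℝ}

theorem volume_setOf_abs_sub_intCast_div_le {b : ℝ} (hR : 0 ≤ R) (hδ : 0 ≤ δ) (hb : 1 ≤ b) :
    volume {α ∈ closedBall x R | ∃ a : ℤ, |α - a / b| ≤ δ / b} ≤
      ENNReal.ofReal (2 * δ * (2 * R + 2 * δ + 1)) := by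
  have hb0 : 0 < b := one_pos.trans_le hb
  set I := Finset.Icc ⌈b * x - (b * R + δ)⌉ ⌊b * x + (b * R + δ)⌋
  have hsub : {α ∈ closedBall x R | ∃ a : ℤ, |α - a / b| ≤ δ / b} ⊆
      ⋃ a ∈ I, closedBall ((a : ℝ) / b) (δ / b) := by
    rintro α ⟨hα, a, ha⟩
    have hxa : |x - a / b| ≤ R + δ / b :=
      (abs_sub_le x α _).trans (add_le_add (mem_closedBall'.1 hα) ha)
    have hbxa : |b * x - a| ≤ b * R + δ := by
      calc |b * x - a| = b * |x - a / b| := by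
            rw [← abs_of_pos hb0, ← abs_mul, abs_of_pos hb0]; congr 1; field_simp
        _ ≤ b * (R + δ / b) := by gcongr
        _ = b * R + δ := by field_simp
    rw [abs_le] at hbxa
    simp only [mem_iUnion, I, Finset.mem_Icc, Int.ceil_le, Int.le_floor]
    exact ⟨a, ⟨by linarith, by linarith⟩, ha⟩
  have hcard : (I.card : ℝ) ≤ 2 * (b * R + δ) + 1 :=
    (card_Icc_ceil_floor_le (by linarith [mul_nonneg hb0.le hR])).trans_eq (by ring)
  calc volume {α ∈ closedBall x R | ∃ a : ℤ, |α - a / b| ≤ δ / b}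
      ≤ ∑ a ∈ I, volume (closedBall ((a : ℝ) / b) (δ / b)) :=
        (measure_mono hsub).trans (measure_biUnion_finset_le _ _)
    _ = ENNReal.ofReal (I.card * (2 * (δ / b))) := by
        simp only [Real.volume_closedBall, Finset.sum_const, nsmul_eq_mul]
        rw [← ENNReal.ofReal_natCast, ← ENNReal.ofReal_mul (Nat.cast_nonneg _)]
    _ ≤ ENNReal.ofReal (2 * δ * (2 * R + 2 * δ + 1)) := by
        refine ENNReal.ofReal_le_ofReal ?_
        calc I.card * (2 * (δ / b)) ≤ (b * (2 * R + 2 * δ + 1)) * (2 * (δ / b)) := by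
              gcongr; nlinarith
          _ = 2 * δ * (2 * R + 2 * δ + 1) := by field_simp

theorem volume_setOf_abs_sub_ratCast_le_div_den {N : ℝ} (hR : 0 ≤ R) (hδ : 0 ≤ δ) (hN : 0 ≤ N) :
    volume {α ∈ closedBall x R | ∃ q : ℚ, (q.den : ℝ) ≤ N ∧ |α - q| ≤ δ / q.den} ≤
      ENNReal.ofReal (N * (2 * δ * (2 * R + 2 * δ + 1))) := by
  have hsub : {α ∈ closedBall x R | ∃ q : ℚ, (q.den : ℝ) ≤ N ∧ |α - q| ≤ δ / q.den} ⊆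
      ⋃ b ∈ Finset.Icc 1 ⌊N⌋₊,
        {α ∈ closedBall x R | ∃ a : ℤ, |α - a / (b : ℝ)| ≤ δ / (b : ℝ)} := by
    rintro α ⟨hα, q, hqN, hq⟩
    simp only [mem_iUnion, Finset.mem_Icc, Nat.le_floor_iff hN]
    exact ⟨q.den, ⟨q.pos, hqN⟩, hα, q.num, by rwa [← Rat.cast_def]⟩
  calc volume {α ∈ closedBall x R | ∃ q : ℚ, (q.den : ℝ) ≤ N ∧ |α - q| ≤ δ / q.den}
      ≤ ∑ b ∈ Finset.Icc 1 ⌊N⌋₊,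
          volume {α ∈ closedBall x R | ∃ a : ℤ, |α - a / (b : ℝ)| ≤ δ / (b : ℝ)} :=
        (measure_mono hsub).trans (measure_biUnion_finset_le _ _)
    _ ≤ ∑ b ∈ Finset.Icc 1 ⌊N⌋₊, ENNReal.ofReal (2 * δ * (2 * R + 2 * δ + 1)) :=
        Finset.sum_le_sum fun b hb => volume_setOf_abs_sub_intCast_div_le hR hδ
          (by exact_mod_cast (Finset.mem_Icc.1 hb).1)
    _ = ENNReal.ofReal (⌊N⌋₊ * (2 * δ * (2 * R + 2 * δ + 1))) := by
        rw [Finset.sum_const, Nat.card_Icc, add_tsub_cancel_right, nsmul_eq_mul,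
          ← ENNReal.ofReal_natCast, ← ENNReal.ofReal_mul (Nat.cast_nonneg _)]
    _ ≤ ENNReal.ofReal (N * (2 * δ * (2 * R + 2 * δ + 1))) := by
        gcongr; exact Nat.floor_le hN

theorem exists_rat_abs_sub_le_of_not_near_small_den {α Q N : ℝ} (hQ : 1 ≤ Q) (hN : 0 < N)
    (hα : ¬∃ q : ℚ, (q.den : ℝ) ≤ N ∧ |α - q| ≤ 1 / Q / q.den) :
    ∃ q : ℚ, (q.den : ℝ) ≤ Q ∧ |α - q| ≤ 1 / Q / N := by
  have hQ0 : 0 < Q := one_pos.trans_le hQ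
  obtain ⟨q, hq, hden⟩ := Real.exists_rat_abs_sub_le_and_den_le α (Nat.floor_pos.2 hQ)
  have hq' : |α - q| ≤ 1 / Q / q.den := by
    rw [div_div]
    refine hq.trans (one_div_le_one_div_of_le (by positivity) ?_)
    gcongr
    exact (Nat.lt_floor_add_one Q).le
  have hNq : N < q.den := by
    by_contra! hle
    exact hα ⟨q, hle, hq'⟩
  exact ⟨q, (Nat.le_floor_iff hQ0.le).1 hden, hq'.trans (by gcongr)⟩

end Counting

theorem tsum_le_of_tsum_rpow_le {ι : Type*} {d : ι → ℝ≥0∞} {D : ℝ≥0∞} {s : ℝ} (hs : 0 < s)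
    (hs1 : s ≤ 1) (hD0 : D ≠ 0) (hD : D ≠ ⊤) (h : ∑' i, d i ^ s ≤ D ^ s) : ∑' i, d i ≤ D := by
  have hdi (i : ι) : d i ≤ d i ^ s * D ^ (1 - s) := by
    have hi : d i ≤ D := (ENNReal.rpow_le_rpow_iff hs).1 ((ENNReal.le_tsum i).trans h)
    calc d i = d i ^ (s + (1 - s)) := by rw [add_sub_cancel, ENNReal.rpow_one]
      _ = d i ^ s * d i ^ (1 - s) := ENNReal.rpow_add_of_nonneg _ _ hs.le (sub_nonneg.2 hs1)
      _ ≤ d i ^ s * D ^ (1 - s) := by gcongr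
  calc ∑' i, d i ≤ ∑' i, d i ^ s * D ^ (1 - s) := ENNReal.tsum_le_tsum hdi
    _ = (∑' i, d i ^ s) * D ^ (1 - s) := ENNReal.tsum_mul_right
    _ ≤ D ^ s * D ^ (1 - s) := by gcongr
    _ = D := by rw [← ENNReal.rpow_add _ _ hD0 hD, add_sub_cancel, ENNReal.rpow_one]

theorem mul_measure_le_tsum_mul_measure {ι X : Type*} [Countable ι] [MeasurableSpace X]
    (μ : Measure X) {V : ι → Set X} (hV : ∀ i, MeasurableSet (V i)) (w : ι → ℝ≥0∞) (t : ℝ≥0∞) :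
    t * μ {x | t ≤ ∑' i : {i | x ∈ V i}, w i} ≤ ∑' i, w i * μ (V i) := by
  have hmeas (i : ι) : Measurable ((V i).indicator fun _ => w i) :=
    measurable_const.indicator (hV i)
  have hsum (x : X) : ∑' i : {i | x ∈ V i}, w i = ∑' i, (V i).indicator (fun _ => w i) x :=
    tsum_subtype _ _
  simp only [hsum]
  refine (mul_meas_ge_le_lintegral (Measurable.tsum hmeas) t).trans_eq ?_
  rw [lintegral_tsum fun i => (hmeas i).aemeasurable]
  exact tsum_congr fun i => lintegral_indicator_const (hV i) _

theorem exists_cover_tsum_ediam_rpow_lt {X : Type*} [EMetricSpace X] [MeasurableSpace X]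
    [BorelSpace X] {s : ℝ} {E : Set X} (hE : μH[s] E = 0) {ε : ℝ≥0∞} (hε : 0 < ε) :
    ∃ U : ℕ → Set X, E ⊆ ⋃ i, U i ∧ ∑' i, ⨆ _ : (U i).Nonempty, ediam (U i) ^ s < ε := by
  rw [Measure.hausdorffMeasure_apply] at hE
  have hlt := ((iSup₂_eq_bot.1 hE) 1 one_pos).trans_lt hε
  simp only [iInf_lt_iff] at hlt
  obtain ⟨U, hEU, -, hU⟩ := hlt
  exact ⟨U, hEU, hU⟩

theorem exists_closedBall_cover_of_hausdorffMeasure_eq_zero {X : Type*} [MetricSpace X]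
    [Nonempty X] [MeasurableSpace X] [BorelSpace X] {s : ℝ} (hs : 0 < s) {E : Set X}
    (hE : μH[s] E = 0) {ε : ℝ≥0∞} (hε : 0 < ε) :
    ∃ (y : ℕ → X) (d : ℕ → ℝ), E ⊆ ⋃ i, closedBall (y i) (d i) ∧ (∀ i, 0 < d i) ∧
      ∑' i, ENNReal.ofReal (d i) ^ s ≤ ε := by
  obtain ⟨η, hη, hηε⟩ := exists_between (ENNReal.half_pos hε.ne')
  obtain ⟨U, hEU, hU⟩ := exists_cover_tsum_ediam_rpow_lt hE hη
  obtain ⟨κ, hκ, hκη⟩ := ENNReal.exists_pos_sum_of_countable' hη.ne' ℕ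
  set v : ℕ → ℝ≥0∞ := fun i => (⨆ _ : (U i).Nonempty, ediam (U i) ^ s) + κ i
  have hsum : ∑' i, v i < ε := by
    rw [ENNReal.tsum_add, ← ENNReal.add_halves ε]
    exact ENNReal.add_lt_add (hU.trans hηε) (hκη.trans hηε)
  have hv_top (i : ℕ) : v i ≠ ⊤ := ((ENNReal.le_tsum i).trans_lt (hsum.trans_le le_top)).ne
  have hv_pos (i : ℕ) : 0 < v i := (hκ i).trans_le le_add_self
  have hroot_top (i : ℕ) : v i ^ s⁻¹ ≠ ⊤ :=
    ENNReal.rpow_ne_top_of_nonneg (by positivity) (hv_top i)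
  have hroot (i : ℕ) : ENNReal.ofReal (v i ^ s⁻¹).toReal ^ s = v i := by
    rw [ENNReal.ofReal_toReal (hroot_top i), ENNReal.rpow_inv_rpow hs.ne']
  have hcentre (i : ℕ) : ∃ y, U i ⊆ closedBall y (v i ^ s⁻¹).toReal := by
    rcases (U i).eq_empty_or_nonempty with hempty | ⟨y, hy⟩
    · exact ⟨Classical.arbitrary X, hempty ▸ empty_subset _⟩
    refine ⟨y, fun z hz => ?_⟩
    rw [mem_closedBall, ← ENNReal.ofReal_le_iff_le_toReal (hroot_top i), ← edist_dist,
      ENNReal.le_rpow_inv_iff hs]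
    calc edist z y ^ s ≤ ediam (U i) ^ s := by gcongr; exact edist_le_ediam_of_mem hz hy
      _ ≤ ⨆ _ : (U i).Nonempty, ediam (U i) ^ s :=
        le_iSup (fun _ : (U i).Nonempty => ediam (U i) ^ s) ⟨y, hy⟩
      _ ≤ v i := le_self_add
  choose y hy using hcentre
  refine ⟨y, fun i => (v i ^ s⁻¹).toReal, hEU.trans (iUnion_mono hy), fun i => ?_, ?_⟩
  · exact ENNReal.toReal_pos (ENNReal.rpow_pos (hv_pos i) (hv_top i)).ne' (hroot_top i)
  · simpa only [hroot] using hsum.le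

section LightBall

/-- The indices `i` such that the closed ball of centre `y i` and radius `d i` meets the closed ball
of centre `x` and radius `R`. -/
def meetingIndices {ι X : Type*} [PseudoMetricSpace X] (y : ι → X) (d : ι → ℝ) (x : X) (R : ℝ) :
    Set ι :=
  {i | (closedBall (y i) (d i) ∩ closedBall x R).Nonempty}

/-- The `s`-dimensional size `d i ^ s` of the `i`-th member of the family `closedBall (y i) (d i)`,
counted only if this member meets `closedBall x R`. -/
noncomputable def meetingWeight {ι X : Type*} [PseudoMetricSpace X] (y : ι → X) (d : ι → ℝ) (s : ℝ)
    (x : X) (R : ℝ) : ι → ℝ≥0∞ :=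
  (meetingIndices y d x R).indicator fun i => ENNReal.ofReal (d i) ^ s

/-- The closed ball of centre `x` and radius `R` is light for the family `closedBall (y i) (d i)` in
dimension `s` if the members of the family meeting it are too small, in total `s`-dimensional size,
to cover it. The factor `1 / 8` is the slack spent when passing to a smaller light ball. -/
def IsLightBall {ι X : Type*} [PseudoMetricSpace X] (y : ι → X) (d : ι → ℝ) (s : ℝ) (x : X)
    (R : ℝ) : Prop :=
  ∑' i, meetingWeight y d s x R i ≤ ENNReal.ofReal (R / 8) ^ s

theorem meetingIndices_mono {ι X : Type*} [PseudoMetricSpace X] {y : ι → X} {d : ι → ℝ} {x x' : X}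
    {R R' : ℝ} (h : closedBall x R ⊆ closedBall x' R') :
    meetingIndices y d x R ⊆ meetingIndices y d x' R' :=
  fun _ hi => hi.mono (inter_subset_inter_right _ h)

theorem IsLightBall.radius_le_of_mem {ι X : Type*} [PseudoMetricSpace X] {y : ι → X} {d : ι → ℝ}
    {s : ℝ} {x : X} {R : ℝ} (h : IsLightBall y d s x R) (hs : 0 < s) (hR : 0 ≤ R) {i : ι}
    (hi : i ∈ meetingIndices y d x R) : d i ≤ R / 8 := by
  have hle : ENNReal.ofReal (d i) ^ s ≤ ENNReal.ofReal (R / 8) ^ s :=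
    calc ENNReal.ofReal (d i) ^ s = meetingWeight y d s x R i := by
          rw [meetingWeight, indicator_of_mem hi]
      _ ≤ ∑' i, meetingWeight y d s x R i := ENNReal.le_tsum i
      _ ≤ ENNReal.ofReal (R / 8) ^ s := h
  rwa [ENNReal.rpow_le_rpow_iff hs, ENNReal.ofReal_le_ofReal_iff (by positivity)] at hle

variable {ι : Type*} [Countable ι] {y : ι → ℝ} {d : ι → ℝ} {s x R r ρ : ℝ}

theorem IsLightBall.volume_biUnion_closedBall_le (h : IsLightBall y d s x R) (hs : 0 < s)
    (hs1 : s ≤ 1) (hR : 0 < R) :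
    volume (⋃ i ∈ meetingIndices y d x R, closedBall (y i) (2 * d i)) ≤ ENNReal.ofReal (R / 2) := by
  have hsum : ∑' i : meetingIndices y d x R, ENNReal.ofReal (d i) ≤ ENNReal.ofReal (R / 8) :=
    tsum_le_of_tsum_rpow_le hs hs1 (ENNReal.ofReal_pos.2 (by positivity)).ne'
      ENNReal.ofReal_ne_top ((tsum_subtype _ _).trans_le h)
  calc volume (⋃ i ∈ meetingIndices y d x R, closedBall (y i) (2 * d i))
      ≤ ∑' i : meetingIndices y d x R, volume (closedBall (y i) (2 * d i)) :=
        measure_biUnion_le _ (to_countable _) _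
    _ = ENNReal.ofReal 4 * ∑' i : meetingIndices y d x R, ENNReal.ofReal (d i) := by
        rw [← ENNReal.tsum_mul_left]
        refine tsum_congr fun i => ?_
        rw [Real.volume_closedBall, ← ENNReal.ofReal_mul (by norm_num)]
        ring_nf
    _ ≤ ENNReal.ofReal 4 * ENNReal.ofReal (R / 8) := by gcongr
    _ = ENNReal.ofReal (R / 2) := by
        rw [← ENNReal.ofReal_mul (by norm_num)]
        ring_nf

theorem IsLightBall.volume_setOf_le_tsum_near_le (h : IsLightBall y d s x R) (hR : 0 < R)
    (hr : 0 < r) (hsize : 32 * R ^ s * ρ ≤ R * r ^ s) :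
    volume {α | ENNReal.ofReal (r / 8) ^ s ≤ ∑' i : {i | α ∈ closedBall (y i) (2 * ρ)},
      meetingWeight y d s x R i} ≤ ENNReal.ofReal (R / 8) := by
  set t := ENNReal.ofReal (r / 8) ^ s
  have ht : t = ENNReal.ofReal ((r / 8) ^ s) := ENNReal.ofReal_rpow_of_pos (by positivity)
  have ht0 : t ≠ 0 := ht ▸ (ENNReal.ofReal_pos.2 (by positivity)).ne'
  have ht_top : t ≠ ⊤ := ht ▸ ENNReal.ofReal_ne_top
  have hmul : R ^ s * (4 * ρ) ≤ R / 8 * r ^ s := by linarith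
  rw [← ENNReal.mul_le_mul_iff_right ht0 ht_top]
  refine (mul_measure_le_tsum_mul_measure volume (fun _ => measurableSet_closedBall) _ t).trans ?_
  simp only [Real.volume_closedBall, ENNReal.tsum_mul_right]
  calc (∑' i, meetingWeight y d s x R i) * ENNReal.ofReal (2 * (2 * ρ))
      ≤ ENNReal.ofReal (R / 8) ^ s * ENNReal.ofReal (2 * (2 * ρ)) := by gcongr; exact h
    _ ≤ t * ENNReal.ofReal (R / 8) := by
        rw [ht, ENNReal.ofReal_rpow_of_pos (by positivity), ← ENNReal.ofReal_mul (by positivity),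
          ← ENNReal.ofReal_mul (by positivity)]
        refine ENNReal.ofReal_le_ofReal ?_
        rw [Real.div_rpow hR.le (by norm_num), Real.div_rpow hr.le (by norm_num)]
        calc R ^ s / 8 ^ s * (2 * (2 * ρ)) = R ^ s * (4 * ρ) / 8 ^ s := by ring
          _ ≤ R / 8 * r ^ s / 8 ^ s := by gcongr
          _ = r ^ s / 8 ^ s * (R / 8) := by ring

theorem volume_setOf_near_small_den_le (hR : 0 ≤ R) (hR1 : R ≤ 1) {Q : ℝ} (hQ : 1 ≤ Q) :
    volume {α ∈ closedBall x (R / 2) |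
      ∃ q : ℚ, (q.den : ℝ) ≤ R / 32 * Q ∧ |α - q| ≤ 1 / Q / q.den} ≤ ENNReal.ofReal (R / 4) := by
  have hQ0 : 0 < Q := one_pos.trans_le hQ
  have hQinv : 1 / Q ≤ 1 := (div_le_one hQ0).2 hQ
  refine (volume_setOf_abs_sub_ratCast_le_div_den (by positivity) (by positivity)
    (by positivity)).trans (ENNReal.ofReal_le_ofReal ?_)
  calc R / 32 * Q * (2 * (1 / Q) * (2 * (R / 2) + 2 * (1 / Q) + 1))
      = R / 16 * (R + 2 * (1 / Q) + 1) := by field_simp; ring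
    _ ≤ R / 16 * 4 := by gcongr; linarith
    _ = R / 4 := by ring

-- The three kinds of points to be avoided have measures at most `R / 4`, `R / 2` and `R / 8`, which
-- sum to less than `R`.
theorem IsLightBall.exists_avoiding (h : IsLightBall y d s x R) (hs : 0 < s) (hs1 : s ≤ 1)
    (hR : 0 < R) (hR1 : R ≤ 1) (hr : 0 < r) (hsize : 32 * R ^ s * ρ ≤ R * r ^ s) {Q : ℝ}
    (hQ : 1 ≤ Q) :
    ∃ α ∈ closedBall x (R / 2),
      (¬∃ q : ℚ, (q.den : ℝ) ≤ R / 32 * Q ∧ |α - q| ≤ 1 / Q / q.den) ∧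
      (∀ i ∈ meetingIndices y d x R, α ∉ closedBall (y i) (2 * d i)) ∧
      ∑' i : {i | α ∈ closedBall (y i) (2 * ρ)}, meetingWeight y d s x R i <
        ENNReal.ofReal (r / 8) ^ s := by
  by_contra hcon
  have hcover : closedBall x (R / 2) ⊆
      ({α ∈ closedBall x (R / 2) |
        ∃ q : ℚ, (q.den : ℝ) ≤ R / 32 * Q ∧ |α - q| ≤ 1 / Q / q.den} ∪
      ⋃ i ∈ meetingIndices y d x R, closedBall (y i) (2 * d i)) ∪
      {α | ENNReal.ofReal (r / 8) ^ s ≤ ∑' i : {i | α ∈ closedBall (y i) (2 * ρ)},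
        meetingWeight y d s x R i} := by
    intro α hα
    by_contra hα'
    simp only [mem_union, mem_iUnion, not_or, not_exists] at hα'
    obtain ⟨⟨hα₁, hα₂⟩, hα₃⟩ := hα'
    exact hcon ⟨α, hα, fun hq => hα₁ ⟨hα, hq⟩, hα₂, not_le.1 hα₃⟩
  have hvol := (measure_mono hcover).trans <| (measure_union_le _ _).trans <|
    add_le_add ((measure_union_le _ _).trans (add_le_add
      (volume_setOf_near_small_den_le hR.le hR1 hQ) (h.volume_biUnion_closedBall_le hs hs1 hR)))
      (h.volume_setOf_le_tsum_near_le hR hr hsize)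
  rw [Real.volume_closedBall, ← ENNReal.ofReal_add (by positivity) (by positivity),
    ← ENNReal.ofReal_add (by positivity) (by positivity),
    ENNReal.ofReal_le_ofReal_iff (by positivity)] at hvol
  linarith

theorem IsLightBall.exists_rat_subball (h : IsLightBall y d s x R) (hs : 0 < s) (hs1 : s ≤ 1)
    (hR : 0 < R) (hR1 : R ≤ 1) (hr : 0 < r) {Q : ℝ} (hQ : 1 ≤ Q)
    (hρ : 32 / (R * Q ^ 2) + r ≤ ρ) (hρR : ρ ≤ R / 2) (hsize : 32 * R ^ s * ρ ≤ R * r ^ s) :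
    ∃ q : ℚ, (q.den : ℝ) ≤ Q ∧ closedBall (q : ℝ) r ⊆ closedBall x R ∧
      IsLightBall y d s (q : ℝ) r := by
  obtain ⟨α, hαx, hden, hlarge, hcrowded⟩ := h.exists_avoiding hs hs1 hR hR1 hr hsize hQ
  obtain ⟨q, hqQ, hαq⟩ := exists_rat_abs_sub_le_of_not_near_small_den hQ (by positivity) hden
  replace hαq : dist α q + r ≤ ρ := by
    refine le_trans ?_ hρ
    gcongr
    exact hαq.trans_eq (by field_simp)
  have hsub : closedBall (q : ℝ) r ⊆ closedBall x R := by
    refine closedBall_subset_closedBall' ?_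
    linarith [dist_triangle_left (q : ℝ) x α, mem_closedBall.1 hαx]
  -- A member meeting the new ball has `2 * d i < |α - y i| ≤ ρ + d i`, hence `d i < ρ`.
  have hnear : meetingIndices y d (q : ℝ) r ⊆ {i | α ∈ closedBall (y i) (2 * ρ)} := by
    intro i hi
    have hαy := hlarge i (meetingIndices_mono hsub hi)
    obtain ⟨z, hzy, hzq⟩ := hi
    have hαyq : dist α (y i) ≤ ρ + d i := by
      linarith [dist_triangle4_right α (y i) q z, dist_triangle4 α q z (y i),
        mem_closedBall'.1 hzq, mem_closedBall.1 hzy]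
    simp only [mem_closedBall, not_le] at hαy
    exact mem_closedBall.2 (by linarith)
  refine ⟨q, hqQ, hsub, ?_⟩
  calc ∑' i, meetingWeight y d s (q : ℝ) r i
      = ∑' i : meetingIndices y d (q : ℝ) r, ENNReal.ofReal (d i) ^ s := (tsum_subtype _ _).symm
    _ = ∑' i : meetingIndices y d (q : ℝ) r, meetingWeight y d s x R i := by
        refine tsum_congr fun i => ?_
        rw [meetingWeight, indicator_of_mem (meetingIndices_mono hsub i.2)]
    _ ≤ ∑' i : {i | α ∈ closedBall (y i) (2 * ρ)}, meetingWeight y d s x R i :=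
        ENNReal.tsum_mono_subtype _ hnear
    _ ≤ ENNReal.ofReal (r / 8) ^ s := hcrowded.le

end LightBall

/-- The real numbers which, for infinitely many `j`, lie within `r j` of a rational of denominator
at most `Q j`. -/
def rationalLimsupSet (Q r : ℕ → ℝ) : Set ℝ :=
  {α | ∃ᶠ j in atTop, ∃ q : ℚ, (q.den : ℝ) ≤ Q j ∧ |α - q| ≤ r j}

section RationalLimsupSet

variable {Q r : ℕ → ℝ} {s : ℝ} {y d : ℕ → ℝ} {x R : ℝ}

theorem eventually_subball_conditions (hs : 0 ≤ s) (hs1 : s < 1) (hQ : ∀ᶠ j in atTop, 0 ≤ Q j)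
    (hr : Tendsto r atTop (𝓝[>] 0)) (hQr : Tendsto (fun j => Q j ^ 2 * r j ^ s) atTop atTop)
    (hR : 0 < R) :
    ∀ᶠ j in atTop, 0 < r j ∧ 1 ≤ Q j ∧ r j ≤ 1 ∧ 32 / (R * Q j ^ 2) + r j ≤ R / 2 ∧
      32 * R ^ s * (32 / (R * Q j ^ 2) + r j) ≤ R * r j ^ s := by
  obtain ⟨hr0, hr_pos⟩ := tendsto_nhdsWithin_iff.1 hr
  replace hr_pos : ∀ᶠ j in atTop, 0 < r j := hr_pos
  have hr_le : ∀ᶠ j in atTop, r j ≤ 1 := hr0.eventually_le_const one_pos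
  have hQ2 : Tendsto (fun j => Q j ^ 2) atTop atTop := by
    refine tendsto_atTop_mono' _ ?_ hQr
    filter_upwards [hr_pos, hr_le] with j hj0 hj1
    exact mul_le_of_le_one_right (sq_nonneg _) (Real.rpow_le_one hj0.le hj1 hs)
  have hradius : Tendsto (fun j => 32 / (R * Q j ^ 2) + r j) atTop (𝓝 0) := by
    simpa using ((hQ2.const_mul_atTop hR).const_div_atTop 32).add hr0
  have hratio : Tendsto (fun j => 32 * R ^ s * (32 / (R * (Q j ^ 2 * r j ^ s)) + r j ^ (1 - s)))
      atTop (𝓝 0) := by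
    have hrpow : Tendsto (fun j => r j ^ (1 - s)) atTop (𝓝 0) := by
      simpa [Real.zero_rpow (sub_pos.2 hs1).ne'] using
        hr0.rpow_const (Or.inr (sub_nonneg.2 hs1.le))
    simpa using (((hQr.const_mul_atTop hR).const_div_atTop 32).add hrpow).const_mul (32 * R ^ s)
  filter_upwards [hr_pos, hr_le, hQ, hQ2.eventually_ge_atTop 1,
    hradius.eventually_le_const (half_pos hR), hratio.eventually_le_const hR]
    with j hj0 hj1 hjQ hjQ2 hjR hjs
  have hQ1 : 1 ≤ Q j := (one_le_sq_iff₀ hjQ).1 hjQ2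
  refine ⟨hj0, hQ1, hj1, hjR, ?_⟩
  calc 32 * R ^ s * (32 / (R * Q j ^ 2) + r j)
      = 32 * R ^ s * (32 / (R * (Q j ^ 2 * r j ^ s)) + r j ^ (1 - s)) * r j ^ s := by
        rw [Real.rpow_sub hj0, Real.rpow_one]; field_simp
    _ ≤ R * r j ^ s := by gcongr

theorem IsLightBall.exists_mem_forall_ge (h : IsLightBall y d s x R) (hs : 0 < s)
    (hs1 : s < 1) (hQ : ∀ᶠ j in atTop, 0 ≤ Q j) (hr : Tendsto r atTop (𝓝[>] 0))
    (hQr : Tendsto (fun j => Q j ^ 2 * r j ^ s) atTop atTop) (hR : 0 < R) (hR1 : R ≤ 1) :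
    ∃ α ∈ closedBall x R, ∀ k, ∃ j ≥ k, ∃ q : ℚ, (q.den : ℝ) ≤ Q j ∧
      α ∈ closedBall (q : ℝ) (r j) ∧ 0 < r j ∧ IsLightBall y d s (q : ℝ) (r j) := by
  let P : ℝ × ℝ → Prop := fun b => 0 < b.2 ∧ b.2 ≤ 1 ∧ IsLightBall y d s b.1 b.2
  have hstep (k : ℕ) (b : {b // P b}) : ∃ b' : {b // P b},
      closedBall b'.1.1 b'.1.2 ⊆ closedBall b.1.1 b.1.2 ∧
      ∃ j ≥ k, ∃ q : ℚ, (q.den : ℝ) ≤ Q j ∧ b'.1 = ((q : ℝ), r j) := by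
    obtain ⟨⟨x, R⟩, hR, hR1, hlight⟩ := b
    obtain ⟨j, ⟨hrj, hQj, hrj1, hjR, hjs⟩, hjk⟩ :=
      ((eventually_subball_conditions hs.le hs1 hQ hr hQr hR).and (eventually_ge_atTop k)).exists
    obtain ⟨q, hqQ, hsub, hq⟩ :=
      hlight.exists_rat_subball hs hs1.le hR hR1 hrj hQj le_rfl hjR hjs
    exact ⟨⟨(q, r j), hrj, hrj1, hq⟩, hsub, j, hjk, q, hqQ, rfl⟩
  choose next hnext_sub hnext using hstep
  let ball : ℕ → {b // P b} := Nat.rec ⟨(x, R), hR, hR1, h⟩ next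
  obtain ⟨α, hα⟩ := IsCompact.nonempty_iInter_of_sequence_nonempty_isCompact_isClosed
    (fun k => closedBall (ball k).1.1 (ball k).1.2) (fun k => hnext_sub k (ball k))
    (fun k => nonempty_closedBall.2 (ball k).2.1.le) (isCompact_closedBall _ _)
    (fun k => isClosed_closedBall)
  rw [mem_iInter] at hα
  refine ⟨α, hα 0, fun k => ?_⟩
  obtain ⟨j, hjk, q, hqQ, heq⟩ := hnext k (ball k)
  have hα_mem : α ∈ closedBall (next k (ball k)).1.1 (next k (ball k)).1.2 := hα (k + 1)
  obtain ⟨hpos, -, hlight⟩ := (next k (ball k)).2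
  rw [heq] at hα_mem hpos hlight
  exact ⟨j, hjk, q, hqQ, hα_mem, hpos, hlight⟩

theorem hausdorffMeasure_closedBall_inter_rationalLimsupSet_ne_zero (hs : 0 < s) (hs1 : s < 1)
    (hQ : ∀ᶠ j in atTop, 0 ≤ Q j) (hr : Tendsto r atTop (𝓝[>] 0))
    (hQr : Tendsto (fun j => Q j ^ 2 * r j ^ s) atTop atTop) (hR : 0 < R) :
    μH[s] (closedBall x R ∩ rationalLimsupSet Q r) ≠ 0 := by
  intro hzero
  wlog hR1 : R ≤ 1 generalizing R
  · exact this one_pos (measure_mono_null (inter_subset_inter_left _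
      (closedBall_subset_closedBall (not_le.1 hR1).le)) hzero) le_rfl
  obtain ⟨y, d, hcover, hd, hsum⟩ := exists_closedBall_cover_of_hausdorffMeasure_eq_zero hs hzero
    (ENNReal.rpow_pos (ENNReal.ofReal_pos.2 (show 0 < R / 8 by positivity)) ENNReal.ofReal_ne_top)
  have hlight : IsLightBall y d s x R :=
    (ENNReal.tsum_le_tsum fun i => indicator_le_self _ _ i).trans hsum
  obtain ⟨α, hαx, hα⟩ := hlight.exists_mem_forall_ge hs hs1 hQ hr hQr hR hR1
  have hα_limsup : α ∈ rationalLimsupSet Q r := frequently_atTop.2 fun k => by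
    obtain ⟨j, hjk, q, hqQ, hαq, -⟩ := hα k
    exact ⟨j, hjk, q, hqQ, hαq⟩
  obtain ⟨i, hi⟩ := mem_iUnion.1 (hcover ⟨hαx, hα_limsup⟩)
  obtain ⟨k, hk⟩ := eventually_atTop.1
    ((tendsto_nhdsWithin_iff.1 hr).1.eventually_lt_const (hd i))
  obtain ⟨j, hjk, q, -, hαq, hrj, hq⟩ := hα k
  linarith [hq.radius_le_of_mem hs hrj.le ⟨α, hi, hαq⟩, hk j hjk]

end RationalLimsupSet

section LowerOrder

variable {f : ℝ → ℝ} {c μ : ℝ}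

/-- The lower order of `f` at infinity, the `λ` of the theorem. It is meaningful only if
`log (f x) / log x` is bounded below at infinity and does not tend to infinity. -/
noncomputable def lowerOrder (f : ℝ → ℝ) : ℝ :=
  liminf (fun x => Real.log (f x) / Real.log x) atTop

theorem eventually_le_log_div_log_of_eventually_le (hc : 0 < c) (hf : ∀ᶠ x in atTop, c ≤ f x)
    (hμ : μ < 0) : ∀ᶠ x in atTop, μ ≤ Real.log (f x) / Real.log x := by
  filter_upwards [hf, eventually_gt_atTop 1,
    (Real.tendsto_log_atTop.const_div_atTop (Real.log c)).eventually_const_le hμ] with x hx hx1 hxμ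
  exact hxμ.trans (div_le_div_of_nonneg_right (Real.log_le_log hc hx) (Real.log_pos hx1).le)

theorem isBoundedUnder_ge_log_div_log (hc : 0 < c) (hf : ∀ᶠ x in atTop, c ≤ f x) :
    IsBoundedUnder (· ≥ ·) atTop fun x => Real.log (f x) / Real.log x :=
  isBoundedUnder_of_eventually_ge
    (eventually_le_log_div_log_of_eventually_le hc hf neg_one_lt_zero)

theorem frequently_log_div_log_le (hf : ∀ᶠ x in atTop, 0 < f x) (h : ∃ᶠ x in atTop, f x ≤ x ^ μ) :
    ∃ᶠ x in atTop, Real.log (f x) / Real.log x ≤ μ := by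
  refine (h.and_eventually (hf.and (eventually_gt_atTop 1))).mono fun x ⟨hx, hfx, hx1⟩ => ?_
  rw [div_le_iff₀ (Real.log_pos hx1), ← Real.log_rpow (one_pos.trans hx1)]
  exact Real.log_le_log hfx hx

theorem lowerOrder_le (hc : 0 < c) (hf : ∀ᶠ x in atTop, c ≤ f x)
    (h : ∃ᶠ x in atTop, f x ≤ x ^ μ) : lowerOrder f ≤ μ :=
  liminf_le_of_frequently_le (frequently_log_div_log_le (hf.mono fun _ => hc.trans_le) h)
    (isBoundedUnder_ge_log_div_log hc hf)

theorem lowerOrder_nonneg (hc : 0 < c) (hf : ∀ᶠ x in atTop, c ≤ f x)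
    (h : ∃ᶠ x in atTop, f x ≤ x ^ μ) : 0 ≤ lowerOrder f := by
  have hcobdd := IsCoboundedUnder.of_frequently_le
    (frequently_log_div_log_le (hf.mono fun _ => hc.trans_le) h)
  exact le_of_forall_lt_imp_le_of_dense fun ν hν =>
    le_liminf_of_le hcobdd (eventually_le_log_div_log_of_eventually_le hc hf hν)

theorem frequently_le_rpow_of_lowerOrder_lt {ν : ℝ} (hf : ∀ᶠ x in atTop, 0 < f x)
    (h : ∃ᶠ x in atTop, f x ≤ x ^ ν) (hμ : lowerOrder f < μ) : ∃ᶠ x in atTop, f x ≤ x ^ μ := by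
  have hcobdd := IsCoboundedUnder.of_frequently_le (frequently_log_div_log_le hf h)
  refine ((frequently_lt_of_liminf_lt hcobdd hμ).and_eventually
    (hf.and (eventually_gt_atTop 1))).mono fun x ⟨hx, hfx, hx1⟩ => ?_
  have hx0 : 0 < x := one_pos.trans hx1
  rw [div_lt_iff₀ (Real.log_pos hx1), ← Real.log_rpow hx0] at hx
  exact ((Real.log_lt_log_iff hfx (Real.rpow_pos_of_pos hx0 μ)).1 hx).le

theorem frequently_two_pow_le_of_frequently_le_rpow (hf_mono : MonotoneOn f (Ioi 0)) (hμ : 0 ≤ μ)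
    (h : ∃ᶠ x in atTop, f x ≤ x ^ μ) :
    ∃ᶠ j : ℕ in atTop, f (2 ^ j) ≤ 2 ^ μ * ((2 : ℝ) ^ j) ^ μ := by
  refine frequently_atTop.2 fun k => ?_
  obtain ⟨x, hxk, hx⟩ := frequently_atTop.1 h (2 ^ k)
  have hx1 : 1 ≤ x := (one_le_pow₀ one_le_two).trans hxk
  obtain ⟨j, hjx, hxj⟩ := exists_nat_pow_near hx1 one_lt_two
  have hkj : k ≤ j := Nat.lt_succ_iff.1 ((pow_lt_pow_iff_right₀ one_lt_two).1 (hxk.trans_lt hxj))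
  refine ⟨j, hkj, ?_⟩
  calc f (2 ^ j) ≤ f x := hf_mono (mem_Ioi.2 (by positivity)) (one_pos.trans_le hx1) hjx
    _ ≤ x ^ μ := hx
    _ ≤ (2 * 2 ^ j) ^ μ := by rw [← pow_succ']; gcongr
    _ = 2 ^ μ * ((2 : ℝ) ^ j) ^ μ := Real.mul_rpow zero_le_two (by positivity)

end LowerOrder

section ApproximableSet

theorem exists_nat_mul_den_mem_Icc_dni_le {α B δ : ℝ} {q : ℚ} (hqB : (q.den : ℝ) ≤ B / 3)
    (h : |α - q| ≤ δ / B) : ∃ n : ℕ, 2 / 3 * B ≤ n ∧ (n : ℝ) ≤ B ∧ dni (n * α) ≤ δ := by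
  have hden : (0 : ℝ) < q.den := by exact_mod_cast q.pos
  have hB : 0 < B := by linarith
  set m : ℕ := ⌊B / q.den⌋₊
  have hmB : (m : ℝ) * q.den ≤ B := (le_div_iff₀ hden).1 (Nat.floor_le (by positivity))
  have hBm : B < (m + 1) * q.den := (div_lt_iff₀ hden).1 (Nat.lt_floor_add_one _)
  refine ⟨m * q.den, by push_cast; linarith, by exact_mod_cast hmB, ?_⟩
  have hdist : ((m * q.den : ℕ) : ℝ) * α - (m * q.num : ℤ) = m * q.den * (α - q) := by
    have hnum : (q : ℝ) * q.den = q.num := by exact_mod_cast q.mul_den_eq_num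
    push_cast
    rw [← hnum]
    ring
  calc dni ((m * q.den : ℕ) * α) ≤ |((m * q.den : ℕ) : ℝ) * α - (m * q.num : ℤ)| := round_le _ _
    _ = m * q.den * |α - q| := by rw [hdist, abs_mul, abs_of_nonneg (by positivity)]
    _ ≤ B * (δ / B) := by gcongr
    _ = δ := mul_div_cancel₀ δ hB.ne'

/-- The set of the theorem: the points `α` of the unit interval which, for infinitely many `j`,
satisfy `‖n α‖ ≤ C * 2 ^ (-j) * ϑ (2 ^ j) ^ (-1 / 2)` for some `n` between `b_j` and `B_j`. -/
def approximableSet (f ϑ : ℝ → ℝ) (C : ℝ) : Set ℝ :=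
  {α | α ∈ Ioo 0 1 ∧ ∀ J : ℕ, ∃ j : ℕ, J ≤ j ∧ 1 ≤ j ∧ ∃ n : ℕ,
    bsmall f ϑ j ≤ n ∧ (n : ℝ) ≤ Bbig f ϑ j ∧
    dni (n * α) ≤ C * ((2 : ℝ) ^ j)⁻¹ * (√(ϑ (2 ^ j)))⁻¹}

variable {f ϑ : ℝ → ℝ} {C s μ : ℝ}

theorem Ioo_inter_rationalLimsupSet_subset_approximableSet {φ : ℕ → ℕ}
    (hφ : Tendsto φ atTop atTop) (hf : ∀ x, 0 < x → 0 < f x)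
    (hϑ : ∀ᶠ k in atTop, 0 < ϑ (2 ^ φ k)) :
    Ioo 0 1 ∩ rationalLimsupSet (fun k => Bbig f ϑ (φ k) / 3)
      (fun k => C * f (2 ^ φ k) / (2 ^ φ k) ^ 2) ⊆ approximableSet f ϑ C := by
  rintro α ⟨hα, hlimsup⟩
  refine ⟨hα, fun J => ?_⟩
  obtain ⟨k, ⟨q, hqB, hq⟩, hϑk, hk⟩ := (hlimsup.and_eventually
    (hϑ.and (hφ.eventually_ge_atTop (max J 1)))).exists
  have hfk : 0 < f (2 ^ φ k) := hf _ (by positivity)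
  have hδ : C * f (2 ^ φ k) / (2 ^ φ k) ^ 2 =
      C * ((2 : ℝ) ^ φ k)⁻¹ * (√(ϑ (2 ^ φ k)))⁻¹ / Bbig f ϑ (φ k) := by
    rw [Bbig]
    field_simp [(Real.sqrt_pos.2 hϑk).ne']
  exact ⟨φ k, (le_max_left _ _).trans hk, (le_max_right _ _).trans hk,
    exists_nat_mul_den_mem_Icc_dni_le hqB (hq.trans_eq hδ)⟩

theorem sq_div_mul_rpow_eq {X F θ : ℝ} (hX : 0 < X) (hF : 0 < F) (hθ : 0 < θ) (hC : 0 < C) :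
    (X / (F * √θ) / 3) ^ 2 * (C * F / X ^ 2) ^ s =
      C ^ s / 9 * (X ^ (2 - 2 * s) * F ^ (s - 2) / θ) := by
  rw [Real.div_rpow (by positivity) (by positivity), Real.mul_rpow hC.le hF.le,
    ← Real.rpow_natCast X 2, ← Real.rpow_mul hX.le, Real.rpow_sub hX, Real.rpow_sub hF]
  simp only [div_pow, mul_pow, Real.sq_sqrt hθ.le, Nat.cast_ofNat, Real.rpow_two]
  field_simp
  norm_num

variable {ι : Type*} {l : Filter ι} {X F θ : ι → ℝ} {A : ℝ}

theorem tendsto_sq_div_mul_rpow_atTop (hX : Tendsto X l atTop) (hF : ∀ᶠ k in l, 0 < F k)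
    (hA : 0 < A) (hFX : ∀ᶠ k in l, F k ≤ A * X k ^ μ) (hθ : ∀ᶠ k in l, 0 < θ k)
    (hθX : θ =o[l] fun k => X k ^ (2 * (1 - μ) - s * (2 - μ))) (hC : 0 < C) (hs : s ≤ 2) :
    Tendsto (fun k => (X k / (F k * √(θ k)) / 3) ^ 2 * (C * F k / X k ^ 2) ^ s) l atTop := by
  set κ := 2 * (1 - μ) - s * (2 - μ)
  have hratio : Tendsto (fun k => X k ^ κ / θ k) l atTop := by
    have hinv : Tendsto (fun k => θ k / X k ^ κ) l (𝓝[>] 0) := by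
      refine tendsto_nhdsWithin_iff.2 ⟨hθX.tendsto_div_nhds_zero, ?_⟩
      filter_upwards [hθ, hX.eventually_gt_atTop 0] with k hθk hXk
      exact div_pos hθk (Real.rpow_pos_of_pos hXk κ)
    simpa only [Function.comp_def, Pi.inv_def, inv_div] using hinv.inv_tendsto_nhdsGT_zero
  refine tendsto_atTop_mono' _ ?_ (hratio.const_mul_atTop
    (show 0 < C ^ s / 9 * A ^ (s - 2) by positivity))
  filter_upwards [hF, hFX, hθ, hX.eventually_gt_atTop 0] with k hFk hFXk hθk hXk
  calc C ^ s / 9 * A ^ (s - 2) * (X k ^ κ / θ k)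
      = C ^ s / 9 * (X k ^ (2 - 2 * s) * (A * X k ^ μ) ^ (s - 2) / θ k) := by
        rw [Real.mul_rpow hA.le (by positivity), ← Real.rpow_mul hXk.le,
          show κ = 2 - 2 * s + μ * (s - 2) by ring, Real.rpow_add hXk]
        ring
    _ ≤ C ^ s / 9 * (X k ^ (2 - 2 * s) * F k ^ (s - 2) / θ k) := by
        have hrpow := Real.rpow_le_rpow_of_nonpos hFk hFXk (sub_nonpos.2 hs)
        gcongr
    _ = (X k / (F k * √(θ k)) / 3) ^ 2 * (C * F k / X k ^ 2) ^ s :=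
        (sq_div_mul_rpow_eq hXk hFk hθk hC).symm

theorem tendsto_mul_div_sq_nhdsGT_zero (hX : Tendsto X l atTop) (hF : ∀ᶠ k in l, 0 < F k)
    (hFX : ∀ᶠ k in l, F k ≤ A * X k ^ μ) (hμ : μ < 2) (hC : 0 < C) :
    Tendsto (fun k => C * F k / X k ^ 2) l (𝓝[>] 0) := by
  have hbound : Tendsto (fun k => C * A * X k ^ (μ - 2)) l (𝓝 0) := by
    simpa using ((tendsto_rpow_neg_atTop (sub_pos.2 hμ)).comp hX).const_mul (C * A)
  refine tendsto_nhdsWithin_iff.2 ⟨squeeze_zero' ?_ ?_ hbound, ?_⟩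
  · filter_upwards [hF] with k hFk
    positivity
  · filter_upwards [hFX, hX.eventually_gt_atTop 0] with k hFXk hXk
    rw [Real.rpow_sub hXk, Real.rpow_two]
    calc C * F k / X k ^ 2 ≤ C * (A * X k ^ μ) / X k ^ 2 := by gcongr
      _ = C * A * (X k ^ μ / X k ^ 2) := by ring
  · filter_upwards [hF, hX.eventually_gt_atTop 0] with k hFk hXk
    exact div_pos (mul_pos hC hFk) (pow_pos hXk 2)

theorem hausdorffMeasure_approximableSet_ne_zero (hf : ∀ x, 0 < x → 0 < f x)
    (hf_mono : MonotoneOn f (Ioi 0)) (hμ : 0 ≤ μ) (hμ2 : μ < 2)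
    (hfμ : ∃ᶠ x in atTop, f x ≤ x ^ μ) (hϑ_pos : ∀ᶠ x in atTop, 0 < ϑ x)
    (hϑ : ∀ ε : ℝ, 0 < ε → ϑ =o[atTop] fun x => x ^ ε) (hC : 0 < C) (hs : 0 < s)
    (hsμ : s * (2 - μ) < 2 * (1 - μ)) : μH[s] (approximableSet f ϑ C) ≠ 0 := by
  have hs1 : s < 1 := by nlinarith
  obtain ⟨φ, hφ, hfφ⟩ := extraction_of_frequently_atTop
    (frequently_two_pow_le_of_frequently_le_rpow hf_mono hμ hfμ)
  have hX : Tendsto (fun k => (2 : ℝ) ^ φ k) atTop atTop :=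
    (tendsto_pow_atTop_atTop_of_one_lt one_lt_two).comp hφ.tendsto_atTop
  have hF : ∀ᶠ k in atTop, 0 < f (2 ^ φ k) := .of_forall fun k => hf _ (by positivity)
  have hϑ_pos' : ∀ᶠ k in atTop, 0 < ϑ (2 ^ φ k) := hX.eventually hϑ_pos
  have hQ : ∀ᶠ k in atTop, 0 ≤ Bbig f ϑ (φ k) / 3 := hF.mono fun k hk => by
    rw [Bbig]; positivity
  have hr := tendsto_mul_div_sq_nhdsGT_zero hX hF (.of_forall hfφ) hμ2 hC
  have hϑX : (fun k => ϑ (2 ^ φ k)) =o[atTop]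
      fun k => ((2 : ℝ) ^ φ k) ^ (2 * (1 - μ) - s * (2 - μ)) :=
    (hϑ _ (sub_pos.2 hsμ)).comp_tendsto hX
  have hQr := tendsto_sq_div_mul_rpow_atTop hX hF (by positivity) (.of_forall hfφ) hϑ_pos' hϑX hC
    (by linarith)
  have hball : closedBall (1 / 2 : ℝ) (1 / 4) ⊆ Ioo 0 1 := by
    rw [Real.closedBall_eq_Icc]
    exact Icc_subset_Ioo (by norm_num) (by norm_num)
  exact fun hzero =>
    hausdorffMeasure_closedBall_inter_rationalLimsupSet_ne_zero hs hs1 hQ hr hQr (by norm_num)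
      (measure_mono_null ((inter_subset_inter_left _ hball).trans
        (Ioo_inter_rationalLimsupSet_subset_approximableSet hφ.tendsto_atTop hf hϑ_pos')) hzero)

theorem le_dimH_approximableSet (hf : ∀ x, 0 < x → 0 < f x)
    (hf_mono : MonotoneOn f (Ioi 0)) (hμ : 0 ≤ μ) (hμ2 : μ < 2)
    (hfμ : ∃ᶠ x in atTop, f x ≤ x ^ μ) (hϑ_pos : ∀ᶠ x in atTop, 0 < ϑ x)
    (hϑ : ∀ ε : ℝ, 0 < ε → ϑ =o[atTop] fun x => x ^ ε) (hC : 0 < C) :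
    ENNReal.ofReal (2 * (1 - μ) / (2 - μ)) ≤ dimH (approximableSet f ϑ C) := by
  refine ENNReal.le_of_forall_nnreal_lt fun s hs => ?_
  rcases eq_zero_or_pos s with rfl | hs0
  · exact zero_le
  rw [← ENNReal.ofReal_coe_nnreal, ENNReal.ofReal_lt_ofReal_iff_of_nonneg s.coe_nonneg,
    lt_div_iff₀ (sub_pos.2 hμ2)] at hs
  exact le_dimH_of_hausdorffMeasure_ne_zero
    (hausdorffMeasure_approximableSet_ne_zero hf hf_mono hμ hμ2 hfμ hϑ_pos hϑ hC hs0 hs)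

end ApproximableSet

theorem hausdorff_dimension_of_well_approximable_set_general {f ϑ : ℝ → ℝ} {C : ℝ}
    (hf_pos : ∀ x, 0 < x → 0 < f x) (hf_mono : MonotoneOn f (Ioi 0))
    (hf_le : ∃ᶠ x in atTop, f x ≤ x) (hϑ_pos : ∀ᶠ x in atTop, 0 < ϑ x)
    (hϑ : ∀ ε : ℝ, 0 < ε → ϑ =o[atTop] fun x => x ^ ε) (hC : 0 < C) :
    ENNReal.ofReal (2 * (1 - lowerOrder f) / (2 - lowerOrder f)) ≤
      dimH (approximableSet f ϑ C) := by
  have hf_lower : ∀ᶠ x in atTop, f 1 ≤ f x :=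
    (eventually_ge_atTop 1).mono fun x hx => hf_mono (mem_Ioi.2 one_pos) (one_pos.trans_le hx) hx
  have hf_le' : ∃ᶠ x in atTop, f x ≤ x ^ (1 : ℝ) := by simpa only [Real.rpow_one] using hf_le
  have hlo_nonneg := lowerOrder_nonneg (hf_pos 1 one_pos) hf_lower hf_le'
  have hlo_le := lowerOrder_le (hf_pos 1 one_pos) hf_lower hf_le'
  have hlo_lt : lowerOrder f < 2 := by linarith
  have hcont : ContinuousAt (fun μ => ENNReal.ofReal (2 * (1 - μ) / (2 - μ))) (lowerOrder f) :=
    ENNReal.continuous_ofReal.continuousAt.comp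
      (ContinuousAt.div (by fun_prop) (by fun_prop) (sub_pos.2 hlo_lt).ne')
  refine le_of_tendsto (hcont.mono_left nhdsWithin_le_nhds : Tendsto _ (𝓝[>] lowerOrder f) _) ?_
  filter_upwards [Ioo_mem_nhdsGT hlo_lt] with μ hμ
  exact le_dimH_approximableSet hf_pos hf_mono (hlo_nonneg.trans hμ.1.le) hμ.2
    (frequently_le_rpow_of_lowerOrder_lt
      ((eventually_gt_atTop 0).mono hf_pos) hf_le' hμ.1) hϑ_pos hϑ hC

theorem eventually_le_of_eventually_le_mul_div_log_rpow {f g : ℝ → ℝ} {C a : ℝ} (ha : 0 < a)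
    (hg : ∀ᶠ x in atTop, 0 ≤ g x) (hf : ∀ᶠ x in atTop, f x ≤ C * g x / Real.log x ^ a) :
    ∀ᶠ x in atTop, f x ≤ g x := by
  filter_upwards [hf, hg, eventually_gt_atTop 1,
    ((tendsto_rpow_atTop ha).comp Real.tendsto_log_atTop).eventually_ge_atTop C]
    with x hfx hgx hx1 hlog
  refine hfx.trans ((div_le_iff₀ (Real.rpow_pos_of_pos (Real.log_pos hx1) a)).2 ?_)
  rw [mul_comm (g x)]
  gcongr
  exact hlog

theorem one_add_log_isLittleO_rpow_atTop {ε : ℝ} (hε : 0 < ε) :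
    (fun x => 1 + Real.log x) =o[atTop] fun x => x ^ ε :=
  ((isLittleO_const_left_of_ne one_ne_zero).2
    (tendsto_norm_atTop_atTop.comp (tendsto_rpow_atTop hε))).add (isLittleO_log_rpow_atTop hε)

theorem one_div_one_add_le_two_mul_one_sub_div_two_sub {μ : ℝ} (hμ : 0 ≤ μ) (hμ' : μ ≤ 1 / 2) :
    1 / (1 + μ) ≤ 2 * (1 - μ) / (2 - μ) := by
  rw [div_le_div_iff₀ (by linarith) (by linarith)]
  nlinarith


theorem hausdorff_dimension_of_well_approximable_set
    (f : ℝ → ℝ)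
    (hf_gt : ∀ x : ℝ, 0 < x → 2 < f x)
    (hf_mono : MonotoneOn f (Set.Ioi (0 : ℝ)))
    (hf_top : Tendsto f atTop atTop)
    (hf_O : ∃ C : ℝ, 0 < C ∧ ∀ᶠ x : ℝ in atTop,
      f x ≤ C * x ^ ((1 : ℝ) / 3) / (Real.log x) ^ ((7 : ℝ) / 3))
    (hconv : Summable fun n : ℕ => 1 / ((n : ℝ) * f n))
    (hsup : ∃ x₀ : ℝ, 0 < x₀ ∧ ∃ K : ℝ, K < 2 ∧ ∀ x : ℝ, x₀ ≤ x → f (2 * x) / f x ≤ K)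
    (ϑ : ℝ → ℝ) (hϑ : ϑ = fun x : ℝ => 1 + Real.log x) :
    ∃ C : ℝ, 0 < C ∧
      ENNReal.ofReal
          (1 / (1 + Filter.liminf (fun x : ℝ => Real.log (f x) / Real.log x) atTop)) ≤
        dimH {α : ℝ | α ∈ Set.Ioo (0 : ℝ) 1 ∧
          ∀ J : ℕ, ∃ j : ℕ, J ≤ j ∧ 1 ≤ j ∧ ∃ n : ℕ,
            bsmall f ϑ j ≤ (n : ℝ) ∧ (n : ℝ) ≤ Bbig f ϑ j ∧
            dni ((n : ℝ) * α) ≤ C * ((2 : ℝ) ^ j)⁻¹ * (Real.sqrt (ϑ ((2 : ℝ) ^ j)))⁻¹} := by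
  subst hϑ
  obtain ⟨K, -, hf_O⟩ := hf_O
  have hf_pos (x : ℝ) (hx : 0 < x) : 0 < f x := two_pos.trans (hf_gt x hx)
  have hf_lower : ∀ᶠ x in atTop, 2 ≤ f x := (eventually_gt_atTop 0).mono fun x hx => (hf_gt x hx).le
  have hf_cbrt : ∀ᶠ x in atTop, f x ≤ x ^ (1 / 3 : ℝ) :=
    eventually_le_of_eventually_le_mul_div_log_rpow (by norm_num)
      ((eventually_ge_atTop 0).mono fun x hx => Real.rpow_nonneg hx _) hf_O
  have hf_le : ∀ᶠ x in atTop, f x ≤ x := by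
    filter_upwards [hf_cbrt, eventually_ge_atTop 1] with x hx hx1
    exact hx.trans (Real.rpow_le_self_of_one_le hx1 (by norm_num))
  have hlo_nonneg := lowerOrder_nonneg two_pos hf_lower hf_cbrt.frequently
  have hlo_le := lowerOrder_le two_pos hf_lower hf_cbrt.frequently
  have hϑ_pos : ∀ᶠ x in atTop, 0 < 1 + Real.log x :=
    (eventually_ge_atTop 1).mono fun x hx => by linarith [Real.log_nonneg hx]
  refine ⟨1, one_pos, (ENNReal.ofReal_le_ofReal ?_).trans
    (hausdorff_dimension_of_well_approximable_set_general hf_pos hf_mono hf_le.frequently hϑ_pos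
      (fun ε hε => one_add_log_isLittleO_rpow_atTop hε) one_pos)⟩
  exact one_div_one_add_le_two_mul_one_sub_div_two_sub hlo_nonneg (hlo_le.trans (by norm_num))
end

section
/- (Bourgain) Let (a_n)_{n≥1} be a strictly increasing sequence of positive integers such that E(A_N) = Ω(N³), i.e. there exists c > 0 with E(A_N) > cN³ for infinitely many N. Then the set NPPC((a_n)_n) has positive Lebesgue measure. -/
open Filter MeasureTheory
open scoped Classical

/-- Additive energy of a finite set of naturals:
`#{(a,b,c,d) ∈ I⁴ : a + b = c + d}`. -/
def addEnergy (A : Finset ℕ) : ℕ :=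
  (((A ×ˢ A) ×ˢ (A ×ˢ A)).filter fun q => q.1.1 + q.1.2 = q.2.1 + q.2.2).card

/-- The truncation `A_N = {a_n : 1 ≤ n ≤ N}`. -/
def trunc (a : ℕ → ℕ) (N : ℕ) : Finset ℕ := (Finset.Icc 1 N).image a

/-- Pair correlation function `R([-s,s], α, N)`. -/
noncomputable def pcf (a : ℕ → ℕ) (s α : ℝ) (N : ℕ) : ℝ :=
  (((Finset.Icc 1 N ×ˢ Finset.Icc 1 N).filter fun p =>
      p.1 ≠ p.2 ∧ dni (α * (a p.1 : ℝ) - α * (a p.2 : ℝ)) ≤ s / N).card : ℝ) / N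

/-- `(α a_n)_n` has Poissonian pair correlations. -/
def hasPPC (a : ℕ → ℕ) (α : ℝ) : Prop :=
  ∀ s : ℝ, 0 ≤ s → Tendsto (fun N => pcf a s α N) atTop (nhds (2 * s))

/-- The exceptional set `NPPC((a_n)_n)` of `α ∈ (0,1)` without PPC. -/
def NPPC (a : ℕ → ℕ) : Set ℝ := {α | α ∈ Set.Ioo (0 : ℝ) 1 ∧ ¬ hasPPC a α}

/-!
Suppose that `NPPC a` is null. Fix `s > 0` and write `R_N` for `pcf a s · N`. Then `R_N → 2s` almost
everywhere, while the mean of `R_N` is asymptotically at most `2s`, so `R_N → 2s` in `L¹` by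
Scheffé's lemma. Call a nonzero difference popular if it has at least `4sN` representations in
`A_N`. If `α` brings one popular difference within `s/N` of an integer, then all its
representations count and `R_N(α) ≥ 4s`. Hence the part of `R_N` coming from popular differences
is at most `2|R_N - 2s|` and tends to `0` in mean. But every pair with popular difference
contributes `2s/N²` to that mean, so only `o(N²)` pairs have a popular difference, and therefore
`E(A_N) = o(N³)`.

The upper bound for the mean needs the index pairs with `a i = a j`, which are counted for every
`α`, to be negligible; the case `s = 0` of Poissonian pair correlations for a single `α` shows that
there are only `o(N)` of them.
-/

open Asymptotics
open Finset hiding addEnergy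
open scoped Topology

/-- **Scheffé's lemma**, with a one-sided hypothesis on the integrals. -/
lemma tendsto_integral_abs_sub_of_ae_tendsto {Ω ι : Type*} [MeasurableSpace Ω] {μ : Measure Ω}
    {l : Filter ι} [l.IsCountablyGenerated] {f : ι → Ω → ℝ} {g : Ω → ℝ} {ε : ι → ℝ}
    (hf : ∀ i, Integrable (f i) μ) (hg : Integrable g μ) (hf_nonneg : ∀ i x, 0 ≤ f i x)
    (hfg : ∀ᵐ x ∂μ, Tendsto (f · x) l (𝓝 (g x)))
    (hint : ∀ i, ∫ x, f i x ∂μ ≤ ∫ x, g x ∂μ + ε i) (hε : Tendsto ε l (𝓝 0)) :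
    Tendsto (fun i => ∫ x, |f i x - g x| ∂μ) l (𝓝 0) := by
  have hdiff_int (i) : Integrable (fun x => f i x - g x) μ := (hf i).sub hg
  have hpos_int (i) : Integrable (fun x => max (g x - f i x) 0) μ := (hg.sub (hf i)).pos_part
  have hpos : Tendsto (fun i => ∫ x, max (g x - f i x) 0 ∂μ) l (𝓝 0) := by
    suffices Tendsto (fun i => ∫ x, max (g x - f i x) 0 ∂μ) l (𝓝 (∫ _, 0 ∂μ)) by simpa using this
    refine tendsto_integral_filter_of_dominated_convergence (fun x => |g x|)
      (.of_forall fun i => (hpos_int i).aestronglyMeasurable)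
      (.of_forall fun i => .of_forall fun x => ?_) hg.abs (hfg.mono fun x hx => ?_)
    · rw [Real.norm_of_nonneg (le_max_right _ _)]
      exact max_le (by linarith [hf_nonneg i x, le_abs_self (g x)]) (abs_nonneg _)
    · simpa using (hx.const_sub (g x)).max (tendsto_const_nhds (x := (0 : ℝ)))
  refine squeeze_zero (fun i => integral_nonneg fun x => abs_nonneg _) (fun i => ?_)
    (by simpa using hε.add (hpos.const_mul 2))
  have habs (x : Ω) : |f i x - g x| = (f i x - g x) + 2 * max (g x - f i x) 0 := by
    rcases le_total (f i x) (g x) with h | h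
    · rw [abs_of_nonpos (by linarith), max_eq_left (by linarith)]
      ring
    · rw [abs_of_nonneg (by linarith), max_eq_right (by linarith)]
      ring
  calc ∫ x, |f i x - g x| ∂μ
      = (∫ x, f i x ∂μ - ∫ x, g x ∂μ) + 2 * ∫ x, max (g x - f i x) 0 ∂μ := by
        rw [← integral_sub (hf i) hg, ← integral_const_mul,
          ← integral_add (hdiff_int i) ((hpos_int i).const_mul 2)]
        exact integral_congr_ae (.of_forall habs)
    _ ≤ ε i + 2 * ∫ x, max (g x - f i x) 0 ∂μ := by linarith [hint i]

lemma dni_eq_norm (x : ℝ) : dni x = ‖(x : UnitAddCircle)‖ := UnitAddCircle.norm_eq.symm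

lemma continuous_dni : Continuous dni := by
  simp only [funext dni_eq_norm]
  exact continuous_norm.comp (AddCircle.continuous_mk' 1)

lemma measurableSet_dni_mul_le (x δ : ℝ) : MeasurableSet {α | dni (α * x) ≤ δ} :=
  measurableSet_le (continuous_dni.comp (continuous_mul_const x)).measurable measurable_const

lemma volume_real_dni_mul_int_le {d : ℤ} (hd : d ≠ 0) {δ : ℝ} (hδ : 0 ≤ δ) :
    (volume.restrict (Set.Ioc 0 1)).real {α : ℝ | dni (α * d) ≤ δ} = min 1 (2 * δ) := by
  have hmk : MeasurePreserving ((↑) : ℝ → UnitAddCircle) (volume.restrict (Set.Ioc 0 1)) := by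
    simpa only [zero_add] using UnitAddCircle.measurePreserving_mk 0
  have hmul : MeasurePreserving fun α : UnitAddCircle => d • α :=
    Measure.measurePreserving_zsmul volume hd
  have hpre : {α : ℝ | dni (α * d) ≤ δ}
      = (fun α : ℝ => d • (α : UnitAddCircle)) ⁻¹' Metric.closedBall 0 δ := by
    ext α
    rw [Set.mem_preimage, mem_closedBall_zero_iff, ← AddCircle.coe_zsmul, ← dni_eq_norm,
      zsmul_eq_mul, mul_comm, Set.mem_ofPred_eq]
  have hcomp : MeasurePreserving (fun α : ℝ => d • (α : UnitAddCircle))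
      (volume.restrict (Set.Ioc 0 1)) := hmul.comp hmk
  rw [hpre, hcomp.measureReal_preimage measurableSet_closedBall.nullMeasurableSet,
    measureReal_def, AddCircle.volume_closedBall, ENNReal.toReal_ofReal (by positivity)]

section CloseIndices

variable {ι : Type*}

/-- The indices `i ∈ D` for which `α` times the frequency `f i` is within `δ` of an integer.
Pair correlation functions count such indices, the frequencies being differences of values. -/
noncomputable def closeIndices (f : ι → ℤ) (D : Finset ι) (δ α : ℝ) : Finset ι :=
  {i ∈ D | dni (α * f i) ≤ δ}

lemma mem_closeIndices {f : ι → ℤ} {D : Finset ι} {δ α : ℝ} {i : ι} :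
    i ∈ closeIndices f D δ α ↔ i ∈ D ∧ dni (α * f i) ≤ δ :=
  mem_filter

lemma closeIndices_mono {f : ι → ℤ} {D D' : Finset ι} (h : D ⊆ D') (δ α : ℝ) :
    closeIndices f D δ α ⊆ closeIndices f D' δ α :=
  filter_subset_filter _ h

lemma card_closeIndices_eq_sum (f : ι → ℤ) (D : Finset ι) (δ α : ℝ) :
    (#(closeIndices f D δ α) : ℝ) = ∑ i ∈ D, {β | dni (β * f i) ≤ δ}.indicator 1 α := by
  simp only [closeIndices, card_filter, Nat.cast_sum, Nat.cast_ite, Nat.cast_one, Nat.cast_zero,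
    Set.indicator_apply, Set.mem_ofPred_eq, Pi.one_apply]

lemma integrable_indicator_dni_mul_le {μ : Measure ℝ} [IsFiniteMeasure μ] (x δ : ℝ) :
    Integrable ({α | dni (α * x) ≤ δ}.indicator (1 : ℝ → ℝ)) μ :=
  (integrable_const 1).indicator (measurableSet_dni_mul_le x δ)

lemma integrable_card_closeIndices {μ : Measure ℝ} [IsFiniteMeasure μ] (f : ι → ℤ)
    (D : Finset ι) (δ : ℝ) : Integrable (fun α => (#(closeIndices f D δ α) : ℝ)) μ := by
  simp only [card_closeIndices_eq_sum]
  exact integrable_finsetSum D fun i _ => integrable_indicator_dni_mul_le _ δ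

lemma integral_card_closeIndices {μ : Measure ℝ} [IsFiniteMeasure μ] (f : ι → ℤ)
    (D : Finset ι) (δ : ℝ) :
    ∫ α, (#(closeIndices f D δ α) : ℝ) ∂μ = ∑ i ∈ D, μ.real {α | dni (α * f i) ≤ δ} := by
  simp only [card_closeIndices_eq_sum]
  rw [integral_finsetSum D fun i _ => integrable_indicator_dni_mul_le _ δ]
  exact sum_congr rfl fun i _ => integral_indicator_one (measurableSet_dni_mul_le _ δ)

lemma integral_card_closeIndices_of_ne_zero {f : ι → ℤ} {D : Finset ι} (hD : ∀ i ∈ D, f i ≠ 0)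
    {δ : ℝ} (hδ : 0 ≤ δ) :
    ∫ α in Set.Ioc 0 1, (#(closeIndices f D δ α) : ℝ) = #D * min 1 (2 * δ) := by
  rw [integral_card_closeIndices,
    sum_congr rfl fun i hi => volume_real_dni_mul_int_le (hD i hi) hδ, sum_const, nsmul_eq_mul]

lemma integral_card_closeIndices_le (f : ι → ℤ) (D : Finset ι) {δ : ℝ} (hδ : 0 ≤ δ) :
    ∫ α in Set.Ioc 0 1, (#(closeIndices f D δ α) : ℝ) ≤ #{i ∈ D | f i = 0} + #D * (2 * δ) := by
  have hterm (i : ι) : (volume.restrict (Set.Ioc 0 1)).real {α : ℝ | dni (α * f i) ≤ δ}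
      ≤ (if f i = 0 then 1 else 0) + 2 * δ := by
    split_ifs with hi
    · have hprob : (volume.restrict (Set.Ioc (0 : ℝ) 1)).real Set.univ = 1 := by simp
      linarith [measureReal_mono (μ := volume.restrict (Set.Ioc (0 : ℝ) 1))
        (Set.subset_univ {α | dni (α * f i) ≤ δ})]
    · rw [volume_real_dni_mul_int_le hi hδ, zero_add]
      exact min_le_right _ _
  rw [integral_card_closeIndices]
  calc _ ≤ ∑ i ∈ D, ((if f i = 0 then (1 : ℝ) else 0) + 2 * δ) := sum_le_sum fun i _ => hterm i
    _ = _ := by rw [sum_add_distrib, sum_boole, sum_const, nsmul_eq_mul]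

end CloseIndices

/-- The difference `x - y` of a pair `(x, y)` of natural numbers, taken in `ℤ`. -/
def pairDiff (p : ℕ × ℕ) : ℤ := p.1 - p.2

lemma pairDiff_eq_zero {p : ℕ × ℕ} : pairDiff p = 0 ↔ p.1 = p.2 := by
  rw [pairDiff, sub_eq_zero, Nat.cast_inj]

section Energy

/-- The pairs of elements of `A` with the same difference as `p`; their number is the number of
representations of `pairDiff p` as a difference of elements of `A`. -/
def sameDiff (A : Finset ℕ) (p : ℕ × ℕ) : Finset (ℕ × ℕ) :=
  {q ∈ A ×ˢ A | pairDiff q = pairDiff p}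

/-- The pairs of distinct elements of `A` whose difference is popular, that is, has at least `t`
representations as a difference of elements of `A`. -/
noncomputable def popularPairs (A : Finset ℕ) (t : ℝ) : Finset (ℕ × ℕ) :=
  {p ∈ A.offDiag | t ≤ #(sameDiff A p)}

lemma mem_sameDiff {A : Finset ℕ} {p q : ℕ × ℕ} :
    q ∈ sameDiff A p ↔ q ∈ A ×ˢ A ∧ pairDiff q = pairDiff p :=
  mem_filter

lemma mem_popularPairs {A : Finset ℕ} {t : ℝ} {p : ℕ × ℕ} :
    p ∈ popularPairs A t ↔ p ∈ A.offDiag ∧ t ≤ #(sameDiff A p) :=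
  mem_filter

lemma sameDiff_subset_offDiag (A : Finset ℕ) {p : ℕ × ℕ} (hp : p.1 ≠ p.2) :
    sameDiff A p ⊆ A.offDiag := by
  intro q hq
  obtain ⟨hqA, hqp⟩ := mem_sameDiff.1 hq
  obtain ⟨hq₁, hq₂⟩ := mem_product.1 hqA
  exact mem_offDiag.2 ⟨hq₁, hq₂, fun h => hp (pairDiff_eq_zero.1 (hqp ▸ pairDiff_eq_zero.2 h))⟩

lemma popularPairs_subset_offDiag (A : Finset ℕ) (t : ℝ) : popularPairs A t ⊆ A.offDiag :=
  filter_subset _ _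

lemma pairDiff_ne_zero_of_mem_popularPairs {A : Finset ℕ} {t : ℝ} {p : ℕ × ℕ}
    (hp : p ∈ popularPairs A t) : pairDiff p ≠ 0 :=
  pairDiff_eq_zero.not.2 (mem_offDiag.1 (popularPairs_subset_offDiag A t hp)).2.2

lemma card_sameDiff_le (A : Finset ℕ) (p : ℕ × ℕ) : #(sameDiff A p) ≤ #A := by
  refine card_le_card_of_injOn Prod.fst (fun q hq => ?_) fun q hq r hr hqr => ?_
  · exact (mem_product.1 (mem_sameDiff.1 hq).1).1
  · have hdiff : pairDiff q = pairDiff r := (mem_sameDiff.1 hq).2.trans (mem_sameDiff.1 hr).2.symm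
    unfold pairDiff at hdiff
    exact Prod.ext hqr (by omega)

lemma addEnergy_eq_sum_card_sameDiff (A : Finset ℕ) :
    addEnergy A = ∑ p ∈ A ×ˢ A, #(sameDiff A p) := by
  rw [← card_sigma]
  refine card_nbij' (fun q => ⟨(q.1.1, q.2.1), (q.2.2, q.1.2)⟩)
    (fun x => ((x.1.1, x.2.2), (x.1.2, x.2.1))) ?_ ?_ (fun _ _ => rfl) fun _ _ => rfl
  · rintro ⟨⟨i, j⟩, ⟨k, l⟩⟩ h
    simp only [mem_coe, mem_filter, mem_sigma, mem_sameDiff, mem_product, pairDiff] at h ⊢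
    exact ⟨⟨h.1.1.1, h.1.2.1⟩, ⟨h.1.2.2, h.1.1.2⟩, by omega⟩
  · rintro ⟨⟨i, k⟩, ⟨l, j⟩⟩ h
    simp only [mem_coe, mem_filter, mem_sigma, mem_sameDiff, mem_product, pairDiff] at h ⊢
    exact ⟨⟨⟨h.1.1, h.2.1.2⟩, ⟨h.1.2, h.2.1.1⟩⟩, by omega⟩

lemma addEnergy_le_card_popularPairs (A : Finset ℕ) {t : ℝ} (ht : 0 ≤ t) :
    (addEnergy A : ℝ) ≤ #(popularPairs A t) * #A + t * #A ^ 2 + #A ^ 2 := by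
  have hle (p : ℕ × ℕ) : (#(sameDiff A p) : ℝ) ≤ #A := mod_cast card_sameDiff_le A p
  have hdiag : ∑ p ∈ A.diag, (#(sameDiff A p) : ℝ) ≤ #A ^ 2 := by
    simpa [sq] using sum_le_card_nsmul A.diag _ _ fun p _ => hle p
  have hpopular : ∑ p ∈ popularPairs A t, (#(sameDiff A p) : ℝ) ≤ #(popularPairs A t) * #A := by
    simpa using sum_le_card_nsmul (popularPairs A t) _ _ fun p _ => hle p
  have hunpopular :
      ∑ p ∈ A.offDiag with ¬ t ≤ #(sameDiff A p), (#(sameDiff A p) : ℝ) ≤ t * #A ^ 2 := by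
    have hcard : #{p ∈ A.offDiag | ¬ t ≤ #(sameDiff A p)} ≤ #A ^ 2 := by
      refine (card_filter_le _ _).trans ?_
      rw [offDiag_card, sq]
      exact Nat.sub_le _ _
    calc _ ≤ #{p ∈ A.offDiag | ¬ t ≤ #(sameDiff A p)} • t :=
          sum_le_card_nsmul _ _ _ fun p hp => (not_le.1 (mem_filter.1 hp).2).le
      _ ≤ t * #A ^ 2 := by
          rw [nsmul_eq_mul, mul_comm]
          gcongr
          exact_mod_cast hcard
  calc (addEnergy A : ℝ)
      = ∑ p ∈ A.diag, (#(sameDiff A p) : ℝ) + (∑ p ∈ popularPairs A t, (#(sameDiff A p) : ℝ)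
          + ∑ p ∈ A.offDiag with ¬ t ≤ #(sameDiff A p), (#(sameDiff A p) : ℝ)) := by
        rw [popularPairs, sum_filter_add_sum_filter_not, ← sum_union (disjoint_diag_offDiag A),
          diag_union_offDiag, addEnergy_eq_sum_card_sameDiff, Nat.cast_sum]
    _ ≤ _ := by linarith

lemma le_card_closeIndices_offDiag {A : Finset ℕ} {t δ α : ℝ}
    (h : (closeIndices pairDiff (popularPairs A t) δ α).Nonempty) :
    t ≤ #(closeIndices pairDiff A.offDiag δ α) := by
  obtain ⟨p, hp⟩ := h
  obtain ⟨hpop, hclose⟩ := mem_closeIndices.1 hp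
  obtain ⟨hoff, ht⟩ := mem_popularPairs.1 hpop
  refine ht.trans (mod_cast card_le_card fun q hq => mem_closeIndices.2 ⟨?_, ?_⟩)
  · exact sameDiff_subset_offDiag A (mem_offDiag.1 hoff).2.2 hq
  · rwa [(mem_sameDiff.1 hq).2]

end Energy

section PairCorrelation

variable (a : ℕ → ℕ)

lemma card_trunc_le (N : ℕ) : #(trunc a N) ≤ N := by
  unfold trunc
  simpa using card_image_le (s := Icc 1 N) (f := a)

lemma pcf_eq_card_closeIndices (s α : ℝ) (N : ℕ) :
    pcf a s α N =
      #(closeIndices (pairDiff ∘ Prod.map a a) (Icc 1 N).offDiag (s / N) α) / N := by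
  have hmul (p : ℕ × ℕ) :
      α * a p.1 - α * a p.2 = α * ((pairDiff ∘ Prod.map a a) p : ℤ) := by
    simp [pairDiff, mul_sub]
  unfold pcf
  congr 3
  ext p
  simp only [mem_filter, mem_product, mem_closeIndices, mem_offDiag, hmul, and_assoc]

lemma pcf_nonneg (s α : ℝ) (N : ℕ) : 0 ≤ pcf a s α N := by
  unfold pcf
  positivity

lemma integrable_pcf {μ : Measure ℝ} [IsFiniteMeasure μ] (s : ℝ) (N : ℕ) :
    Integrable (fun α => pcf a s α N) μ := by
  simp only [pcf_eq_card_closeIndices]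
  exact (integrable_card_closeIndices _ _ _).div_const _

/-- The pairs of distinct indices up to `N` at which the sequence takes the same value. Each of
them contributes to `pcf a s α N` for every `α`. -/
def coincidences (N : ℕ) : Finset (ℕ × ℕ) := {p ∈ (Icc 1 N).offDiag | a p.1 = a p.2}

lemma card_coincidences_div_le_pcf {s : ℝ} (hs : 0 ≤ s) (α : ℝ) (N : ℕ) :
    #(coincidences a N) / N ≤ pcf a s α N := by
  rw [pcf_eq_card_closeIndices]
  gcongr
  intro p hp
  obtain ⟨hoff, heq⟩ := mem_filter.1 hp
  refine mem_closeIndices.2 ⟨hoff, ?_⟩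
  have hzero : (pairDiff ∘ Prod.map a a) p = 0 := pairDiff_eq_zero.2 heq
  rw [hzero, Int.cast_zero, mul_zero, dni, round_zero, Int.cast_zero, sub_zero, abs_zero]
  positivity

lemma integral_pcf_le {s : ℝ} (hs : 0 ≤ s) (N : ℕ) :
    ∫ α in Set.Ioc 0 1, pcf a s α N ≤ 2 * s + #(coincidences a N) / N := by
  rcases N.eq_zero_or_pos with rfl | hN
  · simpa [pcf] using hs
  have hcoinc : {p ∈ (Icc 1 N).offDiag | (pairDiff ∘ Prod.map a a) p = 0} = coincidences a N :=
    filter_congr fun p _ => pairDiff_eq_zero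
  have hcard : (#(Icc 1 N).offDiag : ℝ) ≤ N ^ 2 := by
    rw [offDiag_card, Nat.card_Icc, Nat.add_sub_cancel, sq]
    exact_mod_cast Nat.sub_le _ _
  have hmean := integral_card_closeIndices_le (pairDiff ∘ Prod.map a a) (Icc 1 N).offDiag
    (δ := s / N) (by positivity)
  rw [hcoinc] at hmean
  simp only [pcf_eq_card_closeIndices, integral_div]
  calc _ ≤ (#(coincidences a N) + N ^ 2 * (2 * (s / N))) / (N : ℝ) := by
        gcongr
        exact hmean.trans (by gcongr)
    _ = 2 * s + #(coincidences a N) / N := by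
        field_simp
        ring

lemma card_closeIndices_trunc_div_le_pcf (s α : ℝ) (N : ℕ) :
    #(closeIndices pairDiff (trunc a N).offDiag (s / N) α) / N ≤ pcf a s α N := by
  rw [pcf_eq_card_closeIndices]
  refine div_le_div_of_nonneg_right (Nat.cast_le.2 ?_) (Nat.cast_nonneg N)
  refine card_le_card_of_surjOn (Prod.map a a) ?_
  rintro ⟨x, y⟩ hxy
  obtain ⟨hoff, hclose⟩ := mem_closeIndices.1 hxy
  obtain ⟨hx, hy, hne⟩ := mem_offDiag.1 hoff
  obtain ⟨i, hi, rfl⟩ := mem_image.1 hx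
  obtain ⟨j, hj, rfl⟩ := mem_image.1 hy
  exact ⟨(i, j), mem_closeIndices.2 ⟨mem_offDiag.2 ⟨hi, hj, ne_of_apply_ne a hne⟩, hclose⟩, rfl⟩

lemma card_closeIndices_popularPairs_div_le (s α : ℝ) {N : ℕ} (hN : 0 < N) :
    #(closeIndices pairDiff (popularPairs (trunc a N) (4 * s * N)) (s / N) α) / N
      ≤ 2 * |pcf a s α N - 2 * s| := by
  rcases eq_empty_or_nonempty
    (closeIndices pairDiff (popularPairs (trunc a N) (4 * s * N)) (s / N) α) with hempty | hne
  · rw [hempty, card_empty, Nat.cast_zero, zero_div]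
    positivity
  have hpcf : 4 * s ≤ pcf a s α N := by
    refine le_trans ?_ (card_closeIndices_trunc_div_le_pcf a s α N)
    rw [le_div_iff₀ (by exact_mod_cast hN)]
    exact le_card_closeIndices_offDiag hne
  calc _ ≤ #(closeIndices pairDiff (trunc a N).offDiag (s / N) α) / (N : ℝ) := by
        gcongr
        exact closeIndices_mono (popularPairs_subset_offDiag _ _) _ _
    _ ≤ pcf a s α N := card_closeIndices_trunc_div_le_pcf a s α N
    _ ≤ 2 * |pcf a s α N - 2 * s| := by linarith [le_abs_self (pcf a s α N - 2 * s)]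

lemma card_popularPairs_le_integral {s : ℝ} (hs : 0 ≤ s) {N : ℕ} (hN : 0 < N) (hsN : 2 * s ≤ N) :
    s * (#(popularPairs (trunc a N) (4 * s * N)) / N ^ 2)
      ≤ ∫ α in Set.Ioc 0 1, |pcf a s α N - 2 * s| := by
  have hmin : min 1 (2 * (s / N)) = 2 * (s / N) := by
    refine min_eq_right ?_
    rw [← mul_div_assoc]
    exact div_le_one_of_le₀ hsN (Nat.cast_nonneg N)
  have hmean := integral_card_closeIndices_of_ne_zero
    (fun p (hp : p ∈ popularPairs (trunc a N) (4 * s * N)) =>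
      pairDiff_ne_zero_of_mem_popularPairs hp) (show 0 ≤ s / N by positivity)
  have hmono : ∫ α in Set.Ioc 0 1,
        #(closeIndices pairDiff (popularPairs (trunc a N) (4 * s * N)) (s / N) α) / (N : ℝ)
      ≤ ∫ α in Set.Ioc 0 1, 2 * |pcf a s α N - 2 * s| :=
    integral_mono ((integrable_card_closeIndices _ _ _).div_const _)
      (((integrable_pcf a s N).sub (integrable_const _)).abs.const_mul 2)
      fun α => card_closeIndices_popularPairs_div_le a s α hN
  rw [integral_div, integral_const_mul, hmean, hmin] at hmono
  have hdensity : #(popularPairs (trunc a N) (4 * s * N)) * (2 * (s / N)) / (N : ℝ)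
      = 2 * (s * (#(popularPairs (trunc a N) (4 * s * N)) / N ^ 2)) := by
    field_simp
  linarith

end PairCorrelation

section NullExceptionalSet

variable {a : ℕ → ℕ}

lemma ae_hasPPC_of_volume_NPPC_eq_zero (h : volume (NPPC a) = 0) :
    ∀ᵐ α ∂volume.restrict (Set.Ioc 0 1), hasPPC a α := by
  rw [← restrict_Ioo_eq_restrict_Ioc, ae_restrict_iff' measurableSet_Ioo]
  filter_upwards [measure_eq_zero_iff_ae_notMem.1 h] with α hα hmem
  exact not_not.1 fun hn => hα ⟨hmem, hn⟩

lemma tendsto_card_coincidences_div {α : ℝ} (h : hasPPC a α) :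
    Tendsto (fun N => (#(coincidences a N) : ℝ) / N) atTop (𝓝 0) :=
  squeeze_zero (fun N => by positivity) (fun N => card_coincidences_div_le_pcf a le_rfl α N)
    (by simpa using h 0 le_rfl)

lemma tendsto_integral_abs_pcf_sub (h : volume (NPPC a) = 0) {s : ℝ} (hs : 0 ≤ s) :
    Tendsto (fun N => ∫ α in Set.Ioc 0 1, |pcf a s α N - 2 * s|) atTop (𝓝 0) := by
  have hae := ae_hasPPC_of_volume_NPPC_eq_zero h
  have : NeZero (volume.restrict (Set.Ioc (0 : ℝ) 1)) := ⟨by simp [Measure.restrict_eq_zero]⟩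
  obtain ⟨α, hα⟩ := hae.exists
  refine tendsto_integral_abs_sub_of_ae_tendsto (fun N => integrable_pcf a s N)
    (integrable_const _) (fun N α => pcf_nonneg a s α N) (hae.mono fun α hα => hα s hs)
    (fun N => ?_) (tendsto_card_coincidences_div hα)
  simpa using integral_pcf_le a hs N

lemma isLittleO_card_popularPairs (h : volume (NPPC a) = 0) {κ : ℝ} (hκ : 0 < κ) :
    (fun N : ℕ => (#(popularPairs (trunc a N) (κ * N)) : ℝ)) =o[atTop]
      fun N : ℕ => (N : ℝ) ^ 2 := by
  have hs : 0 < κ / 4 := by positivity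
  have hbound : ∀ᶠ N : ℕ in atTop, #(popularPairs (trunc a N) (κ * N)) / (N : ℝ) ^ 2
      ≤ (κ / 4)⁻¹ * ∫ α in Set.Ioc 0 1, |pcf a (κ / 4) α N - 2 * (κ / 4)| := by
    filter_upwards [eventually_gt_atTop 0,
      tendsto_natCast_atTop_atTop.eventually_ge_atTop (2 * (κ / 4))] with N hN hκN
    rw [le_inv_mul_iff₀ hs]
    have := card_popularPairs_le_integral a hs.le hN hκN
    rwa [mul_div_cancel₀ κ four_ne_zero] at this
  refine isLittleO_of_tendsto' ?_ (squeeze_zero' (.of_forall fun N => by positivity) hbound ?_)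
  · filter_upwards [eventually_gt_atTop 0] with N hN hzero
    exact absurd hzero (by positivity)
  · simpa using (tendsto_integral_abs_pcf_sub h hs.le).const_mul (κ / 4)⁻¹

theorem isLittleO_addEnergy_trunc (h : volume (NPPC a) = 0) :
    (fun N => (addEnergy (trunc a N) : ℝ)) =o[atTop] fun N : ℕ => (N : ℝ) ^ 3 := by
  refine isLittleO_iff.2 fun ε hε => ?_
  have hκ : 0 < ε / 3 := by positivity
  filter_upwards [isLittleO_iff.1 (isLittleO_card_popularPairs h hκ) hκ,
    tendsto_natCast_atTop_atTop.eventually_ge_atTop (3 / ε)] with N hpop hN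
  rw [Real.norm_of_nonneg (by positivity), Real.norm_of_nonneg (by positivity)] at hpop ⊢
  have hcard : (#(trunc a N) : ℝ) ≤ N := mod_cast card_trunc_le a N
  have hNε : 1 ≤ ε / 3 * N := by
    rw [div_le_iff₀ hε] at hN
    linarith
  calc (addEnergy (trunc a N) : ℝ)
      ≤ #(popularPairs (trunc a N) (ε / 3 * N)) * #(trunc a N)
          + ε / 3 * N * #(trunc a N) ^ 2 + 1 * #(trunc a N) ^ 2 := by
        rw [one_mul]
        exact addEnergy_le_card_popularPairs _ (by positivity)
    _ ≤ ε / 3 * N ^ 2 * N + ε / 3 * N * N ^ 2 + ε / 3 * N * N ^ 2 := by gcongr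
    _ = ε * N ^ 3 := by ring

end NullExceptionalSet

theorem positive_measure_of_large_energy_general (a : ℕ → ℕ) {c : ℝ} (hc : 0 < c)
    (hE : ∃ᶠ N : ℕ in atTop, c * (N : ℝ) ^ 3 < addEnergy (trunc a N)) :
    0 < volume (NPPC a) := by
  refine pos_iff_ne_zero.2 fun h => hE ?_
  filter_upwards [isLittleO_iff.1 (isLittleO_addEnergy_trunc h) hc] with N hN
  rw [Real.norm_of_nonneg (by positivity), Real.norm_of_nonneg (by positivity)] at hN
  exact hN.not_gt

theorem positive_measure_of_large_energy
    (a : ℕ → ℕ) (ha : ∀ n, 1 ≤ n → a n < a (n + 1)) (hpos : 0 < a 1)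
    (c : ℝ) (hc : 0 < c)
    (hE : ∀ N₀ : ℕ, ∃ N, N₀ ≤ N ∧ c * (N : ℝ) ^ 3 < (addEnergy (trunc a N) : ℝ)) :
    0 < volume (NPPC a) :=
  positive_measure_of_large_energy_general a hc (frequently_atTop.2 hE)
end

section
/- Let c > 0. There exist constants s > 0, c̃ ∈ (0,1), κ > 0 and N₀ ∈ ℕ, depending only on c, with the following property: for every N ≥ N₀ and every set A of N positive integers with E(A) > cN³, the set of α ∈ [0,1] satisfying (1/N)·#{ (a,b) ∈ A × A : a ≠ b, ‖(a−b)α‖ ≤ s/N } ≤ 2·c̃·s has Lebesgue measure at least κ. -/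
open Filter MeasureTheory
open scoped Classical

/-!
Let `N` be the size of `A`, let `r d` be the number of representations of `d` as a difference of two
elements of `A`, and let `R α = ∑ d ≠ 0, r d * 1[‖d * α‖ ≤ s / N]` be the number of close pairs.
Markov's inequality for `R` alone is useless: its mean is about `2 * s * N`, which exceeds the
threshold `t = 2 * ct * s * N`. But to decide whether `R` exceeds `t` one may first truncate each
weight `r d` at `t`. As `∑ d, r d ^ 2` is the additive energy, a set of large energy carries a
positive proportion of the mass `∑ d, r d = N ^ 2` on differences with `r d` comparable to `N`, and
truncation at a small multiple of `N` destroys most of that mass: `∑ d, min t (r d)` is at most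
`(1 - c) * N ^ 2 + t * N`. With this gain Markov's inequality succeeds.
-/

open scoped Combinatorics.Additive Finset Pointwise

section TruncatedMarkov

lemma min_sum_le_sum_min {ι R : Type*} [AddCommMonoid R] [LinearOrder R] [IsOrderedAddMonoid R]
    {s : Finset ι} {w : ι → R} (hw : ∀ i ∈ s, 0 ≤ w i) {t : R} (ht : 0 ≤ t) :
    min t (∑ i ∈ s, w i) ≤ ∑ i ∈ s, min t (w i) := by
  refine Finset.le_sum_of_subadditive_on_pred (min t) (0 ≤ ·) (min_le_right _ _) ?_
    (fun _ _ => add_nonneg) w hw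
  intro x y hx hy
  simp only [← min_add_add_left, ← min_add_add_right, le_min_iff, min_le_iff]
  simp [le_add_of_nonneg_left, le_add_of_nonneg_right, hx, hy, ht]

variable {Ω ι : Type*} [MeasurableSpace Ω] {μ : Measure Ω} [IsFiniteMeasure μ]

lemma mul_measureReal_le_sum_min_mul {s : Finset ι} {T : ι → Set Ω}
    (hT : ∀ i ∈ s, MeasurableSet (T i)) {w : ι → ℝ} (hw : ∀ i ∈ s, 0 ≤ w i) {t : ℝ} (ht : 0 ≤ t) :
    t * μ.real {ω | t ≤ ∑ i ∈ s with ω ∈ T i, w i} ≤ ∑ i ∈ s, min t (w i) * μ.real (T i) := by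
  set f : ι → Ω → ℝ := fun i => (T i).indicator fun _ => min t (w i)
  have hf_nonneg (ω : Ω) : 0 ≤ ∑ i ∈ s, f i ω :=
    Finset.sum_nonneg fun i hi => Set.indicator_nonneg (fun _ _ => le_min ht (hw i hi)) ω
  have hf_int (i : ι) (hi : i ∈ s) : Integrable (f i) μ :=
    (integrable_const _).indicator (hT i hi)
  have htrunc : {ω | t ≤ ∑ i ∈ s with ω ∈ T i, w i} ⊆ {ω | t ≤ ∑ i ∈ s, f i ω} := by
    intro ω (hω : t ≤ _)
    calc t = min t (∑ i ∈ s with ω ∈ T i, w i) := (min_eq_left hω).symm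
      _ ≤ ∑ i ∈ s with ω ∈ T i, min t (w i) :=
        min_sum_le_sum_min (fun i hi => hw i (Finset.mem_filter.mp hi).1) ht
      _ = ∑ i ∈ s, f i ω := by simp only [f, Finset.sum_filter, Set.indicator_apply]
  calc t * μ.real {ω | t ≤ ∑ i ∈ s with ω ∈ T i, w i}
      ≤ t * μ.real {ω | t ≤ ∑ i ∈ s, f i ω} := by gcongr; exact measure_ne_top _ _
    _ ≤ ∫ ω, ∑ i ∈ s, f i ω ∂μ :=
      mul_meas_ge_le_integral_of_nonneg (.of_forall hf_nonneg) (integrable_finsetSum _ hf_int) t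
    _ = ∑ i ∈ s, min t (w i) * μ.real (T i) := by
      rw [integral_finsetSum _ hf_int]
      refine Finset.sum_congr rfl fun i hi => ?_
      rw [integral_indicator_const _ (hT i hi), smul_eq_mul, mul_comm]

end TruncatedMarkov

section AdditiveEnergy

lemma sum_addConvolution {G : Type*} [AddGroup G] [DecidableEq G] (A B : Finset G) :
    ∑ x ∈ A + B, A.addConvolution B x = #A * #B := by
  rw [← Finset.card_product]
  exact (Finset.card_eq_sum_card_fiberwise fun p hp =>
    Finset.add_mem_add (Finset.mem_product.mp hp).1 (Finset.mem_product.mp hp).2).symm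

lemma card_mul_sum_min_addConvolution_le {G : Type*} [AddGroup G] [DecidableEq G]
    (A B : Finset G) (t : ℝ) :
    #A * ∑ x ∈ A + B, min t (A.addConvolution B x) ≤ (#A + t) * (#A * #B) - E[A, B] := by
  have hmin (x : G) : #A * min t (A.addConvolution B x) ≤
      (#A + t) * A.addConvolution B x - (A.addConvolution B x : ℝ) ^ 2 := by
    have hr : (A.addConvolution B x : ℝ) ≤ #A := mod_cast Finset.addConvolution_le_card_left
    rcases le_total t (A.addConvolution B x) with h | h
    · rw [min_eq_left h]
      linarith [mul_nonneg (sub_nonneg.mpr hr) (sub_nonneg.mpr h)]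
    · rw [min_eq_right h]
      linarith [mul_nonneg (Nat.cast_nonneg (α := ℝ) (A.addConvolution B x)) (sub_nonneg.mpr h)]
  have hE : (E[A, B] : ℝ) = ∑ x ∈ A + B, (A.addConvolution B x : ℝ) ^ 2 :=
    mod_cast Finset.addEnergy_eq_sum_sq' A B
  calc #A * ∑ x ∈ A + B, min t (A.addConvolution B x)
      ≤ ∑ x ∈ A + B, ((#A + t) * A.addConvolution B x - (A.addConvolution B x : ℝ) ^ 2) := by
        rw [Finset.mul_sum]
        exact Finset.sum_le_sum fun x _ => hmin x
    _ = (#A + t) * (#A * #B) - E[A, B] := by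
      rw [Finset.sum_sub_distrib, ← Finset.mul_sum, hE]
      congr 2
      exact_mod_cast sum_addConvolution A B

variable {G : Type*} [AddCommGroup G] [DecidableEq G]

lemma addEnergy_neg_right (A B : Finset G) : E[A, -B] = E[A, B] := by
  refine Finset.card_equiv
    (.prodCongr (.refl _) ((Equiv.prodComm G G).trans (.prodCongr (.neg G) (.neg G)))) ?_
  rintro ⟨⟨a, a'⟩, b, b'⟩
  have h : a + b = a' + b' ↔ a + -b' = a' + -b := by
    rw [← sub_eq_add_neg, ← sub_eq_add_neg, sub_eq_sub_iff_add_eq_add]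
  simp [h, and_comm]

lemma addEnergy_map {M N : Type*} [Add M] [Add N] [DecidableEq M] [DecidableEq N] {f : M ↪ N}
    (hf : ∀ a b, f (a + b) = f a + f b) (A B : Finset M) : E[A.map f, B.map f] = E[A, B] := by
  simp only [Finset.addEnergy, ← Finset.prodMap_map_product, Finset.filter_map, Finset.card_map]
  simp [Function.comp_def, ← hf]

lemma filter_offDiag {M : Type*} [DecidableEq M] (A : Finset M) (P : M × M → Prop)
    [DecidablePred P] : {p ∈ A.offDiag | P p} = {p ∈ A ×ˢ A | p.1 ≠ p.2 ∧ P p} := by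
  ext p
  simp only [Finset.mem_filter, Finset.mem_offDiag, Finset.mem_product, and_assoc]

lemma card_filter_offDiag_sub (A : Finset G) (P : G → Prop) [DecidablePred P] :
    #{p ∈ A.offDiag | P (p.1 - p.2)} =
      ∑ d ∈ (A + -A).erase 0 with P d, A.addConvolution (-A) d := by
  rw [Finset.card_eq_sum_card_fiberwise (f := fun p => p.1 - p.2)
    (t := {d ∈ (A + -A).erase 0 | P d})]
  · refine Finset.sum_congr rfl fun d hd => ?_
    obtain ⟨hd₀, hPd⟩ : d ≠ 0 ∧ P d := by simp_all
    rw [← Finset.card_sub_eq]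
    congr 1
    ext p
    simp only [Finset.mem_filter, Finset.mem_offDiag, Finset.mem_product]
    grind
  · intro p hp
    simp only [Finset.coe_filter, Finset.mem_offDiag, Set.mem_ofPred_eq] at hp
    simp [sub_eq_zero, hp, ← sub_eq_add_neg, Finset.sub_mem_sub]

end AdditiveEnergy

section PairCorrelation

lemma card_mul_mul_measureReal_offDiag_le {G Ω : Type*} [AddCommGroup G] [DecidableEq G]
    [MeasurableSpace Ω] {μ : Measure Ω} [IsFiniteMeasure μ] {T : G → Set Ω}
    (hT : ∀ d ≠ 0, MeasurableSet (T d)) {ε : ℝ} (hε : 0 ≤ ε) (hμT : ∀ d ≠ 0, μ.real (T d) ≤ ε)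
    (A : Finset G) {t : ℝ} (ht : 0 ≤ t) :
    #A * (t * μ.real {ω | t ≤ #{p ∈ A.offDiag | ω ∈ T (p.1 - p.2)}}) ≤
      ε * ((#A + t) * #A ^ 2 - E[A]) := by
  set D := (A + -A).erase 0
  have hne {d : G} (hd : d ∈ D) : d ≠ 0 := Finset.ne_of_mem_erase hd
  have hcount (ω : Ω) : (#{p ∈ A.offDiag | ω ∈ T (p.1 - p.2)} : ℝ) =
      ∑ d ∈ D with ω ∈ T d, (A.addConvolution (-A) d : ℝ) :=
    mod_cast card_filter_offDiag_sub A (ω ∈ T ·)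
  have hmin_nonneg (d : G) : 0 ≤ min t (A.addConvolution (-A) d : ℝ) := le_min ht (by positivity)
  calc #A * (t * μ.real {ω | t ≤ #{p ∈ A.offDiag | ω ∈ T (p.1 - p.2)}})
      ≤ #A * ∑ d ∈ D, min t (A.addConvolution (-A) d) * μ.real (T d) := by
        simp only [hcount]
        gcongr
        exact mul_measureReal_le_sum_min_mul (fun d hd => hT d (hne hd)) (by simp) ht
    _ ≤ #A * ∑ d ∈ A + -A, min t (A.addConvolution (-A) d) * ε := by
        gcongr #A * ?_
        refine (Finset.sum_le_sum fun d hd => ?_).trans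
          (Finset.sum_le_sum_of_subset_of_nonneg (Finset.erase_subset _ _)
            fun d _ _ => mul_nonneg (hmin_nonneg d) hε)
        exact mul_le_mul_of_nonneg_left (hμT d (hne hd)) (hmin_nonneg d)
    _ = ε * (#A * ∑ d ∈ A + -A, min t (A.addConvolution (-A) d)) := by
        rw [← Finset.sum_mul]
        ring
    _ ≤ ε * ((#A + t) * #A ^ 2 - E[A]) := by
        gcongr
        refine (card_mul_sum_min_addConvolution_le A (-A) t).trans_eq ?_
        rw [Finset.card_neg, addEnergy_neg_right, sq]

lemma le_measureReal_card_offDiag_le {G Ω : Type*} [AddCommGroup G] [DecidableEq G]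
    [MeasurableSpace Ω] {μ : Measure Ω} [IsProbabilityMeasure μ] {T : G → Set Ω} {A : Finset G}
    (hA : A.Nonempty) {c s ct : ℝ} (hs : 0 < s) (hct : 0 < ct) (hE : c * #A ^ 3 ≤ E[A])
    (hT : ∀ d ≠ 0, MeasurableSet (T d)) (hμT : ∀ d ≠ 0, μ.real (T d) ≤ 2 * (s / #A)) :
    1 - (1 - c) / ct - 2 * s ≤
      μ.real {ω | (#{p ∈ A.offDiag | ω ∈ T (p.1 - p.2)} : ℝ) / #A ≤ 2 * ct * s} := by
  have hN : (0 : ℝ) < #A := mod_cast hA.card_pos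
  set t : ℝ := 2 * ct * s * #A
  set S : Set Ω := {ω | (#{p ∈ A.offDiag | ω ∈ T (p.1 - p.2)} : ℝ) / #A ≤ 2 * ct * s}
  have hcompl : Sᶜ ⊆ {ω | t ≤ #{p ∈ A.offDiag | ω ∈ T (p.1 - p.2)}} := fun ω hω =>
    ((lt_div_iff₀ hN).mp (not_le.mp hω)).le
  have hmarkov : μ.real Sᶜ ≤ (1 - c) / ct + 2 * s := by
    refine le_of_mul_le_mul_left ?_ (show 0 < #A * t by positivity)
    calc #A * t * μ.real Sᶜ
        ≤ #A * (t * μ.real {ω | t ≤ #{p ∈ A.offDiag | ω ∈ T (p.1 - p.2)}}) := by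
          rw [mul_assoc]
          gcongr
          exact measure_ne_top _ _
      _ ≤ 2 * (s / #A) * ((#A + t) * #A ^ 2 - E[A]) :=
          card_mul_mul_measureReal_offDiag_le hT (by positivity) hμT A (by positivity)
      _ ≤ 2 * (s / #A) * ((#A + t) * #A ^ 2 - c * #A ^ 3) := by gcongr
      _ = #A * t * ((1 - c) / ct + 2 * s) := by
          simp only [t]
          field_simp
          ring
  have hcover : 1 ≤ μ.real S + μ.real Sᶜ := by
    simpa using measureReal_union_le (μ := μ) S Sᶜ
  linarith

end PairCorrelation

section NearInteger

/-- The set of real `α` for which `d * α` lies within `δ` of an integer. The argument `d` comes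
last, so that `nearIntegerSet δ` is a family of events indexed by differences. -/
def nearIntegerSet (δ : ℝ) (d : ℤ) : Set ℝ := {α | dni (d * α) ≤ δ}

lemma nearIntegerSet_eq_preimage (δ : ℝ) (d : ℤ) :
    nearIntegerSet δ d = (fun α : ℝ => d • (α : UnitAddCircle)) ⁻¹' Metric.closedBall 0 δ := by
  ext α
  rw [Set.mem_preimage, mem_closedBall_zero_iff, ← AddCircle.coe_zsmul, UnitAddCircle.norm_eq,
    zsmul_eq_mul]
  rfl

lemma measurableSet_nearIntegerSet (δ : ℝ) (d : ℤ) : MeasurableSet (nearIntegerSet δ d) := by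
  rw [nearIntegerSet_eq_preimage]
  exact ((AddCircle.continuous_mk' 1).zsmul d).measurable measurableSet_closedBall

lemma volume_restrict_nearIntegerSet (δ : ℝ) {d : ℤ} (hd : d ≠ 0) :
    volume.restrict (Set.Icc 0 1) (nearIntegerSet δ d) = ENNReal.ofReal (min 1 (2 * δ)) := by
  have hpres : MeasurePreserving (fun α : ℝ => d • (α : UnitAddCircle))
      (volume.restrict (Set.Ioc 0 (0 + 1))) volume :=
    (Measure.measurePreserving_zsmul volume hd).comp (UnitAddCircle.measurePreserving_mk 0)
  rw [nearIntegerSet_eq_preimage, ← AddCircle.volume_closedBall, ← restrict_Ioc_eq_restrict_Icc,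
    ← hpres.measure_preimage measurableSet_closedBall.nullMeasurableSet, zero_add]

end NearInteger

lemma ofReal_le_volume_card_offDiag_le {A : Finset ℤ} (hA : A.Nonempty) {c s ct : ℝ} (hs : 0 < s)
    (hct : 0 < ct) (hE : c * #A ^ 3 ≤ E[A]) :
    ENNReal.ofReal (1 - (1 - c) / ct - 2 * s) ≤ volume {α : ℝ | α ∈ Set.Icc 0 1 ∧
      (#{p ∈ A.offDiag | dni ((p.1 - p.2) * α) ≤ s / #A} : ℝ) / #A ≤ 2 * ct * s} := by
  have : IsProbabilityMeasure (volume.restrict (Set.Icc (0 : ℝ) 1)) := ⟨by simp⟩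
  have hvol (d : ℤ) (hd : d ≠ 0) :
      (volume.restrict (Set.Icc 0 1)).real (nearIntegerSet (s / #A) d) ≤ 2 * (s / #A) := by
    rw [measureReal_def, volume_restrict_nearIntegerSet _ hd]
    exact ENNReal.toReal_le_of_le_ofReal (by positivity)
      (ENNReal.ofReal_le_ofReal (min_le_right _ _))
  refine (ENNReal.ofReal_le_of_le_toReal <| le_measureReal_card_offDiag_le hA hs hct hE
    (fun d _ => measurableSet_nearIntegerSet _ d) hvol).trans_eq ?_
  rw [Measure.restrict_apply' measurableSet_Icc, Set.inter_comm]
  simp only [nearIntegerSet, Set.mem_ofPred_eq, Int.cast_sub]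
  rfl

lemma addEnergy_eq_finset_addEnergy (A : Finset ℕ) : addEnergy A = E[A] := by
  rw [Finset.addEnergy_eq_card_filter, addEnergy]

theorem exceptional_set_uniform_lower_bound_general {c : ℝ} (hc : 0 < c) :
    ∃ s : ℝ, 0 < s ∧ ∃ ct ∈ Set.Ioo (0 : ℝ) 1, ∃ κ : ℝ, 0 < κ ∧
      ∀ A : Finset ℤ, c * #A ^ 3 < E[A] →
        ENNReal.ofReal κ ≤ volume {α : ℝ | α ∈ Set.Icc 0 1 ∧
          (#{p ∈ A.offDiag | dni ((p.1 - p.2) * α) ≤ s / #A} : ℝ) / #A ≤ 2 * ct * s} := by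
  refine ⟨c / 8, by positivity, 2 / (2 + c), ⟨by positivity, ?_⟩, c / 4, by positivity, ?_⟩
  · rw [div_lt_one (by positivity)]
    linarith
  intro A hE
  have hA : A.Nonempty := by
    rw [Finset.nonempty_iff_ne_empty]
    rintro rfl
    simp at hE
  refine (ENNReal.ofReal_le_ofReal ?_).trans
    (ofReal_le_volume_card_offDiag_le hA (by positivity) (by positivity) hE.le)
  calc c / 4 ≤ c / 4 + c ^ 2 / 2 := le_add_of_nonneg_right (by positivity)
    _ = 1 - (1 - c) / (2 / (2 + c)) - 2 * (c / 8) := by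
      field_simp
      ring

theorem exceptional_set_uniform_lower_bound (c : ℝ) (hc : 0 < c) :
    ∃ s : ℝ, 0 < s ∧ ∃ ct : ℝ, ct ∈ Set.Ioo (0 : ℝ) 1 ∧ ∃ κ : ℝ, 0 < κ ∧ ∃ N₀ : ℕ,
      ∀ N : ℕ, N₀ ≤ N → ∀ A : Finset ℕ, (∀ a ∈ A, 0 < a) → A.card = N →
        c * (N : ℝ) ^ 3 < (addEnergy A : ℝ) →
        ENNReal.ofReal κ ≤
          volume {α : ℝ | α ∈ Set.Icc (0 : ℝ) 1 ∧
            (((A ×ˢ A).filter fun p =>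
                p.1 ≠ p.2 ∧ dni (((p.1 : ℝ) - (p.2 : ℝ)) * α) ≤ s / N).card : ℝ) / N ≤
              2 * ct * s} := by
  obtain ⟨s, hs, ct, hct, κ, hκ, h⟩ := exceptional_set_uniform_lower_bound_general hc
  refine ⟨s, hs, ct, hct, κ, hκ, 0, ?_⟩
  rintro _ - A - rfl hE
  rw [addEnergy_eq_finset_addEnergy,
    ← addEnergy_map (f := Nat.castEmbedding (R := ℤ)) Nat.cast_add] at hE
  simpa [filter_offDiag, ← Finset.prodMap_map_product, Finset.filter_map, Function.comp_def]
    using h (A.map Nat.castEmbedding) (by simpa using hE)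
end
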